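/- Let f : 𝔥 → 𝔨 be a quasi-isomorphism of non-negatively graded dg Lie algebras over ℚ. Then the induced morphism of universal enveloping dg algebras 𝒰f : 𝒰𝔥 → 𝒰𝔨 is a quasi-isomorphism. -/

import Mathlib

open scoped TensorProduct

noncomputable section

/-- A homologically graded differential graded `ℚ`-vector space (chain complex of
`ℚ`-vector spaces presented as a graded module with a degree `-1` square-zero differential). -/
structure DGVect : Type 1 where
  carrier : Type
  [isAddCommGroup : AddCommGroup carrier]
  [isModule : Module ℚ carrier]
  grading : ℤ → Submodule ℚ carrier
  [isDecomp : DirectSum.Decomposition grading]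
  d : carrier →ₗ[ℚ] carrier
  d_mem : ∀ (n : ℤ), ∀ x ∈ grading n, d x ∈ grading (n - 1)
  d_sq : d.comp d = 0

attribute [instance] DGVect.isAddCommGroup DGVect.isModule DGVect.isDecomp

/-- The operator acting on the degree `n` graded component by `(-1)^(k*n)`. -/
def signOpOf {V : Type} [AddCommGroup V] [Module ℚ V] (g : ℤ → Submodule ℚ V)
    [DirectSum.Decomposition g] (k : ℤ) : V →ₗ[ℚ] V :=
  (DirectSum.toModule ℚ ℤ V fun n => ((-1 : ℚ) ^ (k * n)) • (g n).subtype).comp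
    (DirectSum.decomposeLinearEquiv g).toLinearMap

/-- The Koszul parity operator, acting by `(-1)^n` in degree `n`. -/
def parityOf {V : Type} [AddCommGroup V] [Module ℚ V] (g : ℤ → Submodule ℚ V)
    [DirectSum.Decomposition g] : V →ₗ[ℚ] V := signOpOf g 1

def DGVect.parity (V : DGVect) : V.carrier →ₗ[ℚ] V.carrier := parityOf V.grading

/-- A graded object is bounded below if it vanishes in all sufficiently negative degrees. -/
def DGVect.BoundedBelow (V : DGVect) : Prop := ∃ b : ℤ, ∀ n : ℤ, n < b → V.grading n = ⊥

/-- The Koszul signed braiding `v ⊗ w ↦ (-1)^{|v||w|} w ⊗ v` of graded vector spaces. -/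
def kSwapOf {V W : Type} [AddCommGroup V] [Module ℚ V] [AddCommGroup W] [Module ℚ W]
    (gV : ℤ → Submodule ℚ V) (gW : ℤ → Submodule ℚ W)
    [DirectSum.Decomposition gV] [DirectSum.Decomposition gW] :
    V ⊗[ℚ] W →ₗ[ℚ] W ⊗[ℚ] V :=
  TensorProduct.lift
    ((DirectSum.toModule ℚ ℤ (W →ₗ[ℚ] W ⊗[ℚ] V) (fun i =>
        (((DirectSum.toModule ℚ ℤ (V →ₗ[ℚ] W ⊗[ℚ] V) (fun j =>
              ((-1 : ℚ) ^ (i * j)) • ((TensorProduct.mk ℚ W V).comp (gW j).subtype))).comp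
            (DirectSum.decomposeLinearEquiv gW).toLinearMap).flip).comp
          (gV i).subtype)).comp
      (DirectSum.decomposeLinearEquiv gV).toLinearMap)

/-- The degree `n` part of the tensor product grading:
the span of the homogeneous tensors of total degree `n`. -/
def tensorGrading {V W : Type} [AddCommGroup V] [Module ℚ V] [AddCommGroup W] [Module ℚ W]
    (gV : ℤ → Submodule ℚ V) (gW : ℤ → Submodule ℚ W) (n : ℤ) : Submodule ℚ (V ⊗[ℚ] W) :=
  ⨆ p : {p : ℤ × ℤ // p.1 + p.2 = n},
    LinearMap.range (TensorProduct.map (gV p.1.1).subtype (gW p.1.2).subtype)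

/-- `f` is a quasi-isomorphism from the complex `(V, dV)` to the complex `(W, dW)`:
it induces a bijection on homology (`ker d / im d`). -/
def IsQuasiIso {V W : Type} [AddCommGroup V] [Module ℚ V] [AddCommGroup W] [Module ℚ W]
    (dV : V →ₗ[ℚ] V) (dW : W →ₗ[ℚ] W) (f : V →ₗ[ℚ] W) : Prop :=
  (∀ x : V, dV x = 0 → (∃ y, f x = dW y) → ∃ z, x = dV z) ∧
  (∀ w : W, dW w = 0 → ∃ x, dV x = 0 ∧ ∃ y, w - f x = dW y)

/-- A differential graded algebra over `ℚ`. -/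
structure DGAlgebra extends DGVect where
  mul : carrier →ₗ[ℚ] carrier →ₗ[ℚ] carrier
  one : carrier
  one_mem : one ∈ grading 0
  mul_mem : ∀ (i j : ℤ) (x y : carrier), x ∈ grading i → y ∈ grading j →
    mul x y ∈ grading (i + j)
  mul_assoc' : ∀ x y z : carrier, mul (mul x y) z = mul x (mul y z)
  one_mul' : ∀ x : carrier, mul one x = x
  mul_one' : ∀ x : carrier, mul x one = x
  leibniz : ∀ (i : ℤ) (x y : carrier), x ∈ grading i →
    d (mul x y) = mul (d x) y + ((-1 : ℚ) ^ i) • mul x (d y)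

/-- The multiplication of a dg algebra as a map out of the tensor product. -/
def DGAlgebra.mulMap (A : DGAlgebra) : A.carrier ⊗[ℚ] A.carrier →ₗ[ℚ] A.carrier :=
  TensorProduct.lift A.mul

/-- A dg algebra is connective if it is concentrated in non-negative degrees. -/
def DGAlgebra.Connective (A : DGAlgebra) : Prop := ∀ n : ℤ, n < 0 → A.grading n = ⊥

/-- A (coassociative counital) differential graded coalgebra over `ℚ`,
non-negatively graded. -/
structure DGCoalgebra extends DGVect where
  comul : carrier →ₗ[ℚ] carrier ⊗[ℚ] carrier
  counit : carrier →ₗ[ℚ] ℚ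
  nonneg : ∀ n : ℤ, n < 0 → grading n = ⊥
  comul_mem : ∀ (n : ℤ), ∀ x ∈ grading n, comul x ∈ tensorGrading grading grading n
  counit_zero : ∀ (n : ℤ), n ≠ 0 → ∀ x ∈ grading n, counit x = 0
  coassoc : (TensorProduct.assoc ℚ carrier carrier carrier).toLinearMap.comp
      ((TensorProduct.map comul LinearMap.id).comp comul)
      = (TensorProduct.map LinearMap.id comul).comp comul
  counit_comul_left : (TensorProduct.lid ℚ carrier).toLinearMap.comp
      ((TensorProduct.map counit LinearMap.id).comp comul) = LinearMap.id
  counit_comul_right : (TensorProduct.rid ℚ carrier).toLinearMap.comp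
      ((TensorProduct.map LinearMap.id counit).comp comul) = LinearMap.id
  comul_chain : comul.comp d
      = (TensorProduct.map d LinearMap.id + TensorProduct.map (parityOf grading) d).comp comul
  counit_chain : counit.comp d = 0

/-- Cocommutativity: the comultiplication is invariant under the Koszul signed twist. -/
def DGCoalgebra.Cocomm (C : DGCoalgebra) : Prop :=
  (kSwapOf C.grading C.grading).comp C.comul = C.comul

/-- A coaugmented dg coalgebra: a dg coalgebra with a coaugmentation `η : ℚ → C`,
recorded by the grouplike element `one = η 1` in degree `0`. -/
structure CoaugDGCoalgebra extends DGCoalgebra where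
  one : carrier
  one_mem : one ∈ grading 0
  counit_one : counit one = 1
  comul_one : comul one = one ⊗ₜ[ℚ] one

/-- A coaugmented dg coalgebra is 2-reduced if `C₀ = ℚ` (spanned by the coaugmentation)
and `C₁ = 0`. -/
def CoaugDGCoalgebra.TwoReduced (C : CoaugDGCoalgebra) : Prop :=
  C.grading 0 = Submodule.span ℚ {C.one} ∧ C.grading 1 = ⊥

/-- A twisting chain `τ : C ⇝ A`: a degree `-1` linear map satisfying
`d(τc) = -τ(dc) - (-1)^{|c₍₀₎|} τ(c₍₀₎)·τ(c₍₁₎)`. -/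
structure TwistingChain (C : DGCoalgebra) (A : DGAlgebra) where
  toFun : C.carrier →ₗ[ℚ] A.carrier
  mem : ∀ (n : ℤ), ∀ x ∈ C.grading n, toFun x ∈ A.grading (n - 1)
  twist : A.d.comp toFun + toFun.comp C.d
      + A.mulMap.comp ((TensorProduct.map (toFun.comp (parityOf C.grading)) toFun).comp C.comul)
      = 0

/-- A left dg module over a dg algebra. -/
structure DGModule (A : DGAlgebra) extends DGVect where
  smul : A.carrier →ₗ[ℚ] carrier →ₗ[ℚ] carrier
  smul_mem : ∀ (i j : ℤ) (a : A.carrier) (x : carrier), a ∈ A.grading i → x ∈ grading j →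
    smul a x ∈ grading (i + j)
  one_smul' : ∀ x : carrier, smul A.one x = x
  mul_smul' : ∀ (a b : A.carrier) (x : carrier), smul (A.mul a b) x = smul a (smul b x)
  leibniz : ∀ (i : ℤ) (a : A.carrier) (x : carrier), a ∈ A.grading i →
    d (smul a x) = smul (A.d a) x + ((-1 : ℚ) ^ i) • smul a (d x)

/-- The action of a dg module as a map out of the tensor product. -/
def DGModule.actionMap {A : DGAlgebra} (M : DGModule A) :
    A.carrier ⊗[ℚ] M.carrier →ₗ[ℚ] M.carrier := TensorProduct.lift M.smul

/-- A left dg comodule over a dg coalgebra. -/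
structure DGComodule (C : DGCoalgebra) extends DGVect where
  coact : carrier →ₗ[ℚ] C.carrier ⊗[ℚ] carrier
  coact_mem : ∀ (n : ℤ), ∀ x ∈ grading n, coact x ∈ tensorGrading C.grading grading n
  coassoc : (TensorProduct.assoc ℚ C.carrier C.carrier carrier).toLinearMap.comp
      ((TensorProduct.map C.comul LinearMap.id).comp coact)
      = (TensorProduct.map LinearMap.id coact).comp coact
  counit_coact : (TensorProduct.lid ℚ carrier).toLinearMap.comp
      ((TensorProduct.map C.counit LinearMap.id).comp coact) = LinearMap.id
  coact_chain : coact.comp d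
      = (TensorProduct.map C.d LinearMap.id + TensorProduct.map (parityOf C.grading) d).comp coact

/-- Morphisms of dg modules: degree `0` graded chain maps commuting with the action. -/
def IsModuleHom (A : DGAlgebra) (M M' : DGModule A)
    (g : M.carrier →ₗ[ℚ] M'.carrier) : Prop :=
  (∀ (n : ℤ), ∀ x ∈ M.grading n, g x ∈ M'.grading n) ∧
  g.comp M.d = M'.d.comp g ∧
  g.comp M.actionMap = M'.actionMap.comp (TensorProduct.map LinearMap.id g)

/-- Morphisms of dg comodules: degree `0` graded chain maps commuting with the coaction. -/
def IsComoduleHom (C : DGCoalgebra) (N N' : DGComodule C)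
    (f : N.carrier →ₗ[ℚ] N'.carrier) : Prop :=
  (∀ (n : ℤ), ∀ x ∈ N.grading n, f x ∈ N'.grading n) ∧
  f.comp N.d = N'.d.comp f ∧
  (TensorProduct.map LinearMap.id f).comp N.coact = N'.coact.comp f

/-- The `A`-action on a twisted extension `A ⊗_τ N`: multiplication on the first factor. -/
def extAction (A : DGAlgebra) (N : Type) [AddCommGroup N] [Module ℚ N] :
    A.carrier ⊗[ℚ] (A.carrier ⊗[ℚ] N) →ₗ[ℚ] A.carrier ⊗[ℚ] N :=
  (TensorProduct.map A.mulMap LinearMap.id).comp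
    (TensorProduct.assoc ℚ A.carrier A.carrier N).symm.toLinearMap

/-- The differential of the twisted extension `A ⊗_τ N`:
`d(a ⊗ n) = da ⊗ n + (-1)^{|a|} a ⊗ dn - (-1)^{|a|} a·τ(n₍₀₎) ⊗ n₍₁₎`
for a `C`-comodule `(N, dN, ρ)`. -/
def extDiff (C : DGCoalgebra) (A : DGAlgebra) (τ : TwistingChain C A)
    (N : Type) [AddCommGroup N] [Module ℚ N]
    (dN : N →ₗ[ℚ] N) (ρ : N →ₗ[ℚ] C.carrier ⊗[ℚ] N) :
    A.carrier ⊗[ℚ] N →ₗ[ℚ] A.carrier ⊗[ℚ] N :=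
  TensorProduct.map A.d LinearMap.id + TensorProduct.map (parityOf A.grading) dN
    - (TensorProduct.map
        (A.mulMap.comp (TensorProduct.map (parityOf A.grading) τ.toFun)) LinearMap.id).comp
        ((TensorProduct.assoc ℚ A.carrier C.carrier N).symm.toLinearMap.comp
          (TensorProduct.map LinearMap.id ρ))

/-- The `C`-coaction on a twisted coextension `C ⊗^τ M`, namely `Δ ⊗ id`. -/
def coextCoact (C : DGCoalgebra) (M : Type) [AddCommGroup M] [Module ℚ M] :
    C.carrier ⊗[ℚ] M →ₗ[ℚ] C.carrier ⊗[ℚ] (C.carrier ⊗[ℚ] M) :=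
  (TensorProduct.assoc ℚ C.carrier C.carrier M).toLinearMap.comp
    (TensorProduct.map C.comul LinearMap.id)

/-- The differential of the twisted coextension `C ⊗^τ M`, expressed in terms of the map
`tact : C ⊗ M → M`, `c ⊗ m ↦ τ(c)·m`:
`d(c ⊗ m) = dc ⊗ m + (-1)^{|c|} c ⊗ dm + (-1)^{|c₍₀₎|} c₍₀₎ ⊗ τ(c₍₁₎)·m`. -/
def coextDiffFrom (C : DGCoalgebra) (M : Type) [AddCommGroup M] [Module ℚ M]
    (dM : M →ₗ[ℚ] M) (tact : C.carrier ⊗[ℚ] M →ₗ[ℚ] M) :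
    C.carrier ⊗[ℚ] M →ₗ[ℚ] C.carrier ⊗[ℚ] M :=
  TensorProduct.map C.d LinearMap.id + TensorProduct.map (parityOf C.grading) dM
    + (TensorProduct.map (parityOf C.grading) tact).comp (coextCoact C M)

/-- The differential of the twisted coextension `C ⊗^τ M` of an `A`-module `(M, dM, act)`. -/
def coextDiff (C : DGCoalgebra) (A : DGAlgebra) (τ : TwistingChain C A)
    (M : Type) [AddCommGroup M] [Module ℚ M]
    (dM : M →ₗ[ℚ] M) (act : A.carrier ⊗[ℚ] M →ₗ[ℚ] M) :
    C.carrier ⊗[ℚ] M →ₗ[ℚ] C.carrier ⊗[ℚ] M :=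
  coextDiffFrom C M dM (act.comp (TensorProduct.map τ.toFun LinearMap.id))

/-- Morphisms of dg algebras. -/
structure DGAlgebraHom (A B : DGAlgebra) where
  toLinearMap : A.carrier →ₗ[ℚ] B.carrier
  mem : ∀ (n : ℤ), ∀ x ∈ A.grading n, toLinearMap x ∈ B.grading n
  chain : toLinearMap.comp A.d = B.d.comp toLinearMap
  map_one : toLinearMap A.one = B.one
  map_mul : ∀ x y : A.carrier, toLinearMap (A.mul x y) = B.mul (toLinearMap x) (toLinearMap y)

/-- Data exhibiting a dg algebra as the cobar construction `ΩC` of a coaugmented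
dg coalgebra `C`, via the universal twisting chain `t : C ⇝ ΩC`:
dg algebra maps `ΩC → A` correspond bijectively to twisting chains `C ⇝ A`
vanishing on the coaugmentation. -/
structure CobarData (C : CoaugDGCoalgebra) where
  alg : DGAlgebra
  t : TwistingChain C.toDGCoalgebra alg
  t_one : t.toFun C.one = 0
  univ : ∀ (A : DGAlgebra) (τ : TwistingChain C.toDGCoalgebra A), τ.toFun C.one = 0 →
    ∃! F : DGAlgebraHom alg A, F.toLinearMap.comp t.toFun = τ.toFun

/-- A morphism of `C`-comodules is a `t`-equivalence if the induced morphism of twisted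
extensions `ΩC ⊗_t N → ΩC ⊗_t M` is a quasi-isomorphism. -/
def IsTEquiv (C : CoaugDGCoalgebra) (Ω : CobarData C) (N M : DGComodule C.toDGCoalgebra)
    (f : N.carrier →ₗ[ℚ] M.carrier) : Prop :=
  IsQuasiIso (extDiff C.toDGCoalgebra Ω.alg Ω.t N.carrier N.d N.coact)
    (extDiff C.toDGCoalgebra Ω.alg Ω.t M.carrier M.d M.coact)
    (TensorProduct.map LinearMap.id f)

/-! ## Statement 17: universal enveloping algebras preserve quasi-isomorphisms -/

/-- A non-negatively graded differential graded Lie algebra over `ℚ`. -/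
structure DGLie extends DGVect where
  bracket : carrier →ₗ[ℚ] carrier →ₗ[ℚ] carrier
  bracket_mem : ∀ (i j : ℤ) (x y : carrier), x ∈ grading i → y ∈ grading j →
    bracket x y ∈ grading (i + j)
  antisymm : ∀ (i j : ℤ) (x y : carrier), x ∈ grading i → y ∈ grading j →
    bracket x y = (-((-1 : ℚ) ^ (i * j))) • bracket y x
  jacobi : ∀ (i j : ℤ) (x y z : carrier), x ∈ grading i → y ∈ grading j →
    bracket x (bracket y z)
      = bracket (bracket x y) z + ((-1 : ℚ) ^ (i * j)) • bracket y (bracket x z)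
  leibniz : ∀ (i : ℤ) (x y : carrier), x ∈ grading i →
    d (bracket x y) = bracket (d x) y + ((-1 : ℚ) ^ i) • bracket x (d y)
  nonneg : ∀ n : ℤ, n < 0 → grading n = ⊥

/-- A morphism of dg Lie algebras. -/
def IsDGLieHom (g h : DGLie) (f : g.carrier →ₗ[ℚ] h.carrier) : Prop :=
  (∀ (n : ℤ), ∀ x ∈ g.grading n, f x ∈ h.grading n) ∧
  f.comp g.d = h.d.comp f ∧
  ∀ x y : g.carrier, f (g.bracket x y) = h.bracket (f x) (f y)

/-- A dg Lie algebra map from `g` into a dg algebra `A` equipped with the graded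
commutator bracket. -/
def IsLieToAlgHom (g : DGLie) (A : DGAlgebra) (φ : g.carrier →ₗ[ℚ] A.carrier) : Prop :=
  (∀ (n : ℤ), ∀ x ∈ g.grading n, φ x ∈ A.grading n) ∧
  φ.comp g.d = A.d.comp φ ∧
  ∀ (i j : ℤ) (x y : g.carrier), x ∈ g.grading i → y ∈ g.grading j →
    φ (g.bracket x y)
      = A.mul (φ x) (φ y) - ((-1 : ℚ) ^ (i * j)) • A.mul (φ y) (φ x)

/-- Data exhibiting a dg algebra as the universal enveloping algebra `𝒰g` of a dg Lie
algebra `g` (the quotient of the tensor algebra `Tg` by the two-sided dg ideal generated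
by `x ⊗ y - (-1)^{|x||y|} y ⊗ x - [x,y]`), characterised by its universal property:
dg Lie algebra maps `g → A` into the graded commutator of a dg algebra `A` factor
uniquely through a dg algebra map `𝒰g → A`. -/
structure UEnvData (g : DGLie) where
  alg : DGAlgebra
  ι : g.carrier →ₗ[ℚ] alg.carrier
  ι_lie : IsLieToAlgHom g alg ι
  univ : ∀ (A : DGAlgebra) (φ : g.carrier →ₗ[ℚ] A.carrier), IsLieToAlgHom g A φ →
    ∃! F : DGAlgebraHom alg A, F.toLinearMap.comp ι = φ

namespace UQ

/-- A super vector space: a rational vector space with an involution. -/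
structure SV where
  carrier : Type
  [g : AddCommGroup carrier]
  [m : Module ℚ carrier]
  P : carrier →ₗ[ℚ] carrier
  PP : ∀ x, P (P x) = x

attribute [instance] SV.g SV.m

/-- The tensor algebra. -/
abbrev T (V : SV) : Type := TensorAlgebra ℚ V.carrier

/-- The canonical inclusion of letters. -/
abbrev io {V : SV} : V.carrier →ₗ[ℚ] T V := TensorAlgebra.ι ℚ

theorem SV.split (V : SV) (x : V.carrier) :
    ∃ a b : V.carrier, V.P a = a ∧ V.P b = -b ∧ x = a + b := by
  refine ⟨(1/2 : ℚ) • (x + V.P x), (1/2 : ℚ) • (x - V.P x), ?_, ?_, ?_⟩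
  · simp [V.PP, add_comm]
  · simp only [map_smul, map_sub, V.PP]; module
  · module

theorem SV.ind (V : SV) {C : V.carrier → Prop} (h0 : ∀ x, V.P x = x → C x)
    (h1 : ∀ x, V.P x = -x → C x) (ha : ∀ x y, C x → C y → C (x + y)) (x) : C x := by
  obtain ⟨a, b, h, h', rfl⟩ := V.split x
  exact ha _ _ (h0 _ h) (h1 _ h')

section rec
variable {V : SV} {M : Type} [AddCommGroup M] [Module ℚ M]

/-- Recursion on words: the linear map out of the tensor algebra determined by an action. -/
def trec (a : V.carrier →ₗ[ℚ] Module.End ℚ M) (m0 : M) : T V →ₗ[ℚ] M :=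
  (LinearMap.applyₗ m0) ∘ₗ (TensorAlgebra.lift ℚ a).toLinearMap

@[simp] theorem trec_one (a : V.carrier →ₗ[ℚ] Module.End ℚ M) (m0 : M) :
    trec a m0 1 = m0 := by simp [trec]

@[simp] theorem trec_mul (a : V.carrier →ₗ[ℚ] Module.End ℚ M) (m0 : M) (x) (u : T V) :
    trec a m0 (io x * u) = a x (trec a m0 u) := by simp [trec]

theorem T_span (S : Submodule ℚ (T V)) (h1 : (1 : T V) ∈ S)
    (hx : ∀ x (u : T V), u ∈ S → io x * u ∈ S) (u : T V) : u ∈ S := by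
  have key : ∀ u w : T V, w ∈ S → u * w ∈ S := by
    intro u
    induction u using TensorAlgebra.induction with
    | algebraMap r => intro w hw; rw [← Algebra.smul_def]; exact S.smul_mem _ hw
    | ι x => intro w hw; exact hx x w hw
    | mul a b ha hb => intro w hw; rw [mul_assoc]; exact ha _ (hb _ hw)
    | add a b ha hb => intro w hw; rw [add_mul]; exact S.add_mem (ha _ hw) (hb _ hw)
  simpa using key u 1 h1

theorem T_ext {f h : T V →ₗ[ℚ] M} (h1 : f 1 = h 1)
    (hx : ∀ x (u : T V), f u = h u → f (io x * u) = h (io x * u)) : f = h := by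
  ext u
  exact T_span (LinearMap.eqLocus f h) h1 hx u

theorem T_ext_hom {f h : T V →ₗ[ℚ] M} (h1 : f 1 = h 1)
    (h0 : ∀ x (u : T V), V.P x = x → f u = h u → f (io x * u) = h (io x * u))
    (h1 : ∀ x (u : T V), V.P x = -x → f u = h u → f (io x * u) = h (io x * u)) : f = h := by
  refine T_ext ‹_› fun x u => ?_
  refine V.ind (C := fun x => f u = h u → f (io x * u) = h (io x * u)) (fun x hx hu => h0 x u hx hu)
    (fun x hx hu => h1 x u hx hu) (fun x y hx hy hu => ?_) x
  rw [map_add, add_mul, map_add, map_add, hx hu, hy hu]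
end rec

variable {V : SV}

/-- The parity involution of the tensor algebra. -/
def PT (V : SV) : T V →ₐ[ℚ] T V := TensorAlgebra.lift ℚ (io ∘ₗ V.P)

@[simp] theorem PT_io (x : V.carrier) : PT V (io x) = io (V.P x) := by simp [PT]

@[simp] theorem PT_PT (u : T V) : PT V (PT V u) = u := by
  have : ((PT V).comp (PT V)) = AlgHom.id ℚ _ := by
    apply TensorAlgebra.hom_ext; ext x; simp [V.PP]
  exact DFunLike.congr_fun this u

/-- The parity involution as a linear map. -/
abbrev PL (V : SV) : T V →ₗ[ℚ] T V := (PT V).toLinearMap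

/-- The counit. -/
abbrev eps (V : SV) : T V →ₐ[ℚ] ℚ := TensorAlgebra.algebraMapInv

@[simp] theorem eps_io (x : V.carrier) : eps V (io x) = 0 := by
  simp [eps, TensorAlgebra.algebraMapInv]

@[simp] theorem eps_PT (u : T V) : eps V (PT V u) = eps V u := by
  have : ((eps V).comp (PT V)) = eps V := by
    apply TensorAlgebra.hom_ext; ext x; simp
  exact DFunLike.congr_fun this u

/-- Left multiplication by a letter. -/
def lm : V.carrier →ₗ[ℚ] Module.End ℚ (T V) := LinearMap.mul ℚ (T V) ∘ₗ io

@[simp] theorem lm_apply (x : V.carrier) (u : T V) : lm x u = io x * u := rfl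

/-- The action of a letter on the second tensor factor, with Koszul sign. -/
def rho2 (V : SV) : V.carrier →ₗ[ℚ] Module.End ℚ (T V ⊗[ℚ] T V) :=
  (1/2 : ℚ) • ((TensorProduct.mapBilinear (RingHom.id ℚ) (T V) (T V) (T V) (T V) LinearMap.id) ∘ₗ
    (lm + lm ∘ₗ V.P) +
    (TensorProduct.mapBilinear (RingHom.id ℚ) (T V) (T V) (T V) (T V) (PL V)) ∘ₗ
    (lm - lm ∘ₗ V.P))

/-- The action of a letter on the first tensor factor. -/
def rho1 (V : SV) : V.carrier →ₗ[ℚ] Module.End ℚ (T V ⊗[ℚ] T V) :=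
  (TensorProduct.mapBilinear (RingHom.id ℚ) (T V) (T V) (T V) (T V)).flip LinearMap.id ∘ₗ lm

/-- The coproduct. -/
def De (V : SV) : T V →ₗ[ℚ] T V ⊗[ℚ] T V := trec (rho1 V + rho2 V) (1 ⊗ₜ 1)

@[simp] theorem De_one : De V 1 = 1 ⊗ₜ 1 := by simp [De]

theorem De_mul (x : V.carrier) (u : T V) :
    De V (io x * u) = rho1 V x (De V u) + rho2 V x (De V u) := by simp [De]

@[simp] theorem rho1_tmul (x : V.carrier) (u w : T V) :
    rho1 V x (u ⊗ₜ w) = (io x * u) ⊗ₜ w := by simp [rho1]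

theorem rho2_tmul (x : V.carrier) (u w : T V) :
    rho2 V x (u ⊗ₜ w) = (1/2 : ℚ) • (u ⊗ₜ (io x * w + io (V.P x) * w)
      + PT V u ⊗ₜ (io x * w - io (V.P x) * w)) := by simp [rho2]

theorem rho2_even (x : V.carrier) (hx : V.P x = x) (u w : T V) :
    rho2 V x (u ⊗ₜ w) = u ⊗ₜ (io x * w) := by
  rw [rho2_tmul, hx, sub_self, TensorProduct.tmul_zero, TensorProduct.tmul_add]; module

theorem rho2_odd (x : V.carrier) (hx : V.P x = -x) (u w : T V) :
    rho2 V x (u ⊗ₜ w) = PT V u ⊗ₜ (io x * w) := by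
  rw [rho2_tmul, hx]
  simp only [map_neg, neg_mul, sub_neg_eq_add, TensorProduct.tmul_add, TensorProduct.tmul_neg]
  module

theorem De_PT : De V ∘ₗ PL V = TensorProduct.map (PL V) (PL V) ∘ₗ De V := by
  apply T_ext_hom
  · simp
  all_goals
    intro x u hx h
    simp only [LinearMap.comp_apply, AlgHom.toLinearMap_apply, map_mul, PT_io] at h ⊢
    rw [De_mul, De_mul, h]
    generalize De V u = z
    induction z with
    | zero => simp
    | add a b ha hb => simp only [map_add] at *; rw [← sub_eq_zero] at *; rw [← add_zero (0 : T V ⊗[ℚ] T V)]; nth_rw 1 [← ha, ← hb]; abel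
    | tmul a b => 
      first
      | simp [rho2_even x hx, hx]
      | simp [rho2_odd x hx, hx, TensorProduct.neg_tmul, TensorProduct.tmul_neg]

end UQ

namespace UQ
variable {V : SV}

/-- Composition of tensor products of maps, applied. -/
theorem mm {A B C A' B' C' : Type} [AddCommGroup A] [Module ℚ A] [AddCommGroup B] [Module ℚ B]
    [AddCommGroup C] [Module ℚ C] [AddCommGroup A'] [Module ℚ A'] [AddCommGroup B'] [Module ℚ B']
    [AddCommGroup C'] [Module ℚ C'] (f : B →ₗ[ℚ] C) (f' : A →ₗ[ℚ] B) (h : B' →ₗ[ℚ] C')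
    (h' : A' →ₗ[ℚ] B') (z : A ⊗[ℚ] A') :
    TensorProduct.map f h (TensorProduct.map f' h' z) = TensorProduct.map (f ∘ₗ f') (h ∘ₗ h') z := by
  rw [TensorProduct.map_comp, LinearMap.comp_apply]

/-- Two linear maps agree after the coproduct step if they are intertwined. -/
theorem rho_hom (x : V.carrier) (hx : V.P x = x ∨ V.P x = -x) :
    ∃ Q : T V →ₐ[ℚ] T V, rho2 V x = TensorProduct.map Q.toLinearMap (lm x) ∧
      De V ∘ₗ Q.toLinearMap = TensorProduct.map Q.toLinearMap Q.toLinearMap ∘ₗ De V ∧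
      (∀ u, eps V (Q u) = eps V u) ∧
      ((Q = AlgHom.id ℚ _ ∧ V.P x = x) ∨ (Q = PT V ∧ V.P x = -x)) := by
  rcases hx with hx | hx
  · refine ⟨AlgHom.id ℚ _, ?_, ?_, ?_, Or.inl ⟨rfl, hx⟩⟩
    · apply TensorProduct.ext'; intro u w; rw [rho2_even x hx]; simp
    · ext; simp
    · simp
  · refine ⟨PT V, ?_, De_PT, ?_, Or.inr ⟨rfl, hx⟩⟩
    · apply TensorProduct.ext'; intro u w; rw [rho2_odd x hx]; simp
    · simp

theorem rho1_eq (x : V.carrier) : rho1 V x = TensorProduct.map (lm x) LinearMap.id := by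
  apply TensorProduct.ext'; intro u w; simp

theorem T_ext_hom' {M : Type} [AddCommGroup M] [Module ℚ M] {f h : T V →ₗ[ℚ] M} (h1 : f 1 = h 1)
    (hh : ∀ x (u : T V), (V.P x = x ∨ V.P x = -x) → f u = h u → f (io x * u) = h (io x * u)) :
    f = h :=
  T_ext_hom h1 (fun x u hx => hh x u (Or.inl hx)) (fun x u hx => hh x u (Or.inr hx))

theorem De_lm (x : V.carrier) : De V ∘ₗ lm x = (rho1 V x + rho2 V x) ∘ₗ De V := by
  ext u; simp [De_mul]

theorem counit_l : TensorProduct.map (eps V).toLinearMap LinearMap.id ∘ₗ De V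
    = TensorProduct.mk ℚ ℚ (T V) 1 := by
  apply T_ext_hom'
  · simp
  · intro x u hx h
    obtain ⟨Q, h2, -, h3, -⟩ := rho_hom x hx
    simp only [LinearMap.comp_apply] at h ⊢
    rw [De_mul, h2, rho1_eq, map_add, mm, mm]
    have e1 : (eps V).toLinearMap ∘ₗ lm x = 0 := by ext; simp
    have e2 : (eps V).toLinearMap ∘ₗ Q.toLinearMap = (eps V).toLinearMap := by ext; simp [h3]
    rw [e1, e2, TensorProduct.map_zero_left, LinearMap.zero_apply, zero_add]
    have := congrArg (TensorProduct.map LinearMap.id (lm x)) h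
    rw [mm] at this
    simpa using this

theorem counit_r : TensorProduct.map LinearMap.id (eps V).toLinearMap ∘ₗ De V
    = (TensorProduct.mk ℚ (T V) ℚ).flip 1 := by
  apply T_ext_hom'
  · simp
  · intro x u hx h
    obtain ⟨Q, h2, -, h3, -⟩ := rho_hom x hx
    simp only [LinearMap.comp_apply] at h ⊢
    rw [De_mul, h2, rho1_eq, map_add, mm, mm]
    have e1 : (eps V).toLinearMap ∘ₗ lm x = 0 := by ext; simp
    rw [e1, TensorProduct.map_zero_right, LinearMap.zero_apply, add_zero]
    have := congrArg (TensorProduct.map (lm x) LinearMap.id) h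
    rw [mm] at this
    simpa using this

theorem coassoc : (TensorProduct.assoc ℚ (T V) (T V) (T V)).toLinearMap ∘ₗ
      TensorProduct.map (De V) LinearMap.id ∘ₗ De V
      = TensorProduct.map LinearMap.id (De V) ∘ₗ De V := by
  apply T_ext_hom'
  · simp
  · intro x u hx h
    obtain ⟨Q, h2, hQ, h3, -⟩ := rho_hom x hx
    simp only [LinearMap.comp_apply] at h ⊢
    rw [De_mul]
    let q := Q.toLinearMap
    let R : T V ⊗[ℚ] (T V ⊗[ℚ] T V) →ₗ[ℚ] T V ⊗[ℚ] (T V ⊗[ℚ] T V) :=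
      TensorProduct.map (lm x) LinearMap.id
      + TensorProduct.map q (TensorProduct.map (lm x) LinearMap.id)
      + TensorProduct.map q (TensorProduct.map q (lm x))
    have a1 : (TensorProduct.assoc ℚ (T V) (T V) (T V)).toLinearMap ∘ₗ
      TensorProduct.map (De V) LinearMap.id ∘ₗ (rho1 V x + rho2 V x) = R ∘ₗ
      (TensorProduct.assoc ℚ (T V) (T V) (T V)).toLinearMap ∘ₗ
      TensorProduct.map (De V) LinearMap.id := by
      apply TensorProduct.ext'; intro a b
      have hQa := LinearMap.congr_fun hQ a
      simp only [LinearMap.comp_apply] at hQa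
      simp only [LinearMap.comp_apply, LinearMap.add_apply, h2, rho1_eq, TensorProduct.map_tmul,
        map_add, hQa, LinearMap.id_apply]
      simp only [lm_apply, De_mul, h2, rho1_eq]
      generalize De V a = z
      induction z with
      | zero => simp
      | add a b ha hb =>
        simp only [map_add, TensorProduct.add_tmul] at *
        rw [← sub_eq_zero] at *; rw [← add_zero (0 : T V ⊗[ℚ] (T V ⊗[ℚ] T V))]
        nth_rw 1 [← ha, ← hb]; abel
      | tmul a b => simp [R, q, TensorProduct.add_tmul]
    have a2 : TensorProduct.map LinearMap.id (De V) ∘ₗ (rho1 V x + rho2 V x) = R ∘ₗ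
      TensorProduct.map LinearMap.id (De V) := by
      apply TensorProduct.ext'; intro a b
      simp only [LinearMap.comp_apply, LinearMap.add_apply, h2, rho1_eq, TensorProduct.map_tmul,
        map_add, LinearMap.id_apply]
      simp only [lm_apply, De_mul, h2, rho1_eq]
      simp [R, q, TensorProduct.tmul_add, add_assoc]
    have b1 := LinearMap.congr_fun a1 (De V u)
    have b2 := LinearMap.congr_fun a2 (De V u)
    simp only [LinearMap.comp_apply, LinearMap.add_apply] at b1 b2
    rw [b1, b2]
    simp only [LinearEquiv.coe_coe] at h ⊢
    rw [h]

instance : Coalgebra ℚ (T V) where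
  comul := De V
  counit := (eps V).toLinearMap
  coassoc := coassoc
  rTensor_counit_comp_comul := counit_l
  lTensor_counit_comp_comul := counit_r

theorem comul_eq : (Coalgebra.comul : T V →ₗ[ℚ] _) = De V := rfl
theorem counit_eq : (Coalgebra.counit : T V →ₗ[ℚ] _) = (eps V).toLinearMap := rfl

end UQ

namespace UQ
variable {V : SV}

theorem linadd {A B : Type} [AddCommGroup A] [Module ℚ A] [AddCommGroup B] [Module ℚ B]
    (f h : A →ₗ[ℚ] B) {a b : A} (ha : f a = h a) (hb : f b = h b) : f (a + b) = h (a + b) := by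
  rw [map_add, map_add, ha, hb]

/-- The Koszul sign operator on a tensor square. -/
def kap (V : SV) : T V ⊗[ℚ] T V →ₗ[ℚ] T V ⊗[ℚ] T V :=
  (1/2 : ℚ) • (LinearMap.id + TensorProduct.map (PL V) LinearMap.id
    + TensorProduct.map LinearMap.id (PL V) - TensorProduct.map (PL V) (PL V))

/-- Super swap. -/
def sw (V : SV) : T V ⊗[ℚ] T V →ₗ[ℚ] T V ⊗[ℚ] T V :=
  (TensorProduct.comm ℚ (T V) (T V)).toLinearMap ∘ₗ kap V

theorem sw_tmul (a b : T V) : sw V (a ⊗ₜ b) = (1/2 : ℚ) • (b ⊗ₜ a + b ⊗ₜ PT V a + PT V b ⊗ₜ a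
    - PT V b ⊗ₜ PT V a) := by
  simp [sw, kap]

theorem sw_De : sw V ∘ₗ De V = De V := by
  apply T_ext_hom'
  · simp only [LinearMap.comp_apply, De_one, sw_tmul, map_one]; module
  · intro x u hx h
    obtain ⟨Q, h2, -, h3, h4⟩ := rho_hom x hx
    simp only [LinearMap.comp_apply] at h ⊢
    rw [De_mul]
    have a1 : sw V ∘ₗ rho1 V x = rho2 V x ∘ₗ sw V := by
      apply TensorProduct.ext'; intro a b
      rcases h4 with ⟨rfl, hx⟩ | ⟨rfl, hx⟩
      · simp [sw_tmul, h2, hx]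
      · simp only [LinearMap.comp_apply, rho1_tmul, sw_tmul, h2, hx, map_mul, PT_io, map_smul,
          map_add, map_sub, TensorProduct.map_tmul, lm_apply, AlgHom.toLinearMap_apply, PT_PT,
          map_neg, neg_mul, TensorProduct.tmul_neg]
        module
    have a2 : sw V ∘ₗ rho2 V x = rho1 V x ∘ₗ sw V := by
      apply TensorProduct.ext'; intro a b
      rcases h4 with ⟨rfl, hx⟩ | ⟨rfl, hx⟩
      · simp [sw_tmul, h2, hx]
      · simp only [LinearMap.comp_apply, rho1_tmul, sw_tmul, h2, hx, map_mul, PT_io, map_smul,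
          map_add, map_sub, TensorProduct.map_tmul, lm_apply, AlgHom.toLinearMap_apply, PT_PT,
          map_neg, neg_mul, TensorProduct.neg_tmul]
        module
    rw [map_add, ← LinearMap.comp_apply, a1, ← LinearMap.comp_apply (sw V), a2,
      LinearMap.comp_apply, LinearMap.comp_apply, h, add_comm]

/-- Word length grading. -/
abbrev gr (V : SV) (n : ℕ) : Submodule ℚ (T V) := (LinearMap.range (io : V.carrier →ₗ[ℚ] T V)) ^ n

theorem one_gr : (1 : T V) ∈ gr V 0 := by rw [gr, pow_zero]; exact Submodule.one_le.mp le_rfl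

theorem mul_gr {n : ℕ} (x : V.carrier) {u : T V} (hu : u ∈ gr V n) : io x * u ∈ gr V (n+1) := by
  rw [gr, pow_succ']; exact Submodule.mul_mem_mul ⟨x, rfl⟩ hu

theorem io_gr (x : V.carrier) : io x ∈ gr V 1 := by rw [gr, pow_one]; exact ⟨x, rfl⟩

theorem mul_gr' {n m : ℕ} {u w : T V} (hu : u ∈ gr V n) (hw : w ∈ gr V m) :
    u * w ∈ gr V (n+m) := by
  rw [gr, pow_add]; exact Submodule.mul_mem_mul hu hw

theorem gr_ind {C : ℕ → T V → Prop} (h1 : C 0 1)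
    (ha : ∀ n u w, C n u → C n w → C n (u + w)) (hs : ∀ n (r : ℚ) u, C n u → C n (r • u))
    (hx : ∀ n x u, u ∈ gr V n → C n u → C (n+1) (io x * u)) {n : ℕ} {u : T V} (hu : u ∈ gr V n) :
    C n u := by
  induction hu using Submodule.pow_induction_on_left' with
  | algebraMap r => rw [Algebra.algebraMap_eq_smul_one]; exact hs _ _ _ h1
  | add x y i hx hy ihx ihy => exact ha _ _ _ ihx ihy
  | mem_mul m hm i x hx' ih => obtain ⟨y, rfl⟩ := hm; exact hx _ _ _ hx' ih

theorem gr_le (S : ℕ → Submodule ℚ (T V)) (h1 : 1 ∈ S 0)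
    (hx : ∀ n x u, u ∈ gr V n → u ∈ S n → io x * u ∈ S (n+1)) (n : ℕ) : gr V n ≤ S n := by
  intro u hu
  exact gr_ind (C := fun n u => u ∈ S n) h1 (fun n u w h h' => (S n).add_mem h h')
    (fun n r u h => (S n).smul_mem r h) hx hu

theorem gr_ext {M : Type} [AddCommGroup M] [Module ℚ M] {f h : T V →ₗ[ℚ] M}
    (hh : ∀ n, ∀ u ∈ gr V n, f u = h u) : f = h := by
  ext u
  induction u using DirectSum.Decomposition.inductionOn (gr V) with
  | zero => simp
  | homogeneous m => exact hh _ _ m.2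
  | add a b ha hb => exact linadd f h ha hb

theorem PT_gr {n : ℕ} {u : T V} (hu : u ∈ gr V n) : PT V u ∈ gr V n := by
  refine gr_le (fun n => (gr V n).comap (PL V)) ?_ ?_ n hu
  · simp
  · intro n x u _ h
    simp only [Submodule.mem_comap, AlgHom.toLinearMap_apply, map_mul, PT_io] at h ⊢
    exact mul_gr _ h

theorem eps_gr {n : ℕ} (hn : n ≠ 0) {u : T V} (hu : u ∈ gr V n) : eps V u = 0 := by
  obtain ⟨n, rfl⟩ := Nat.exists_eq_succ_of_ne_zero hn
  have := gr_le (fun n => if n = 0 then ⊤ else LinearMap.ker (eps V).toLinearMap) (by simp)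
    (by intro n x u _ _; simp) _ hu
  simpa using this

/-- Tensors of total word length `n`. -/
def DS (V : SV) (n : ℕ) : Submodule ℚ (T V ⊗[ℚ] T V) :=
  Submodule.span ℚ {z | ∃ i j u w, i + j = n ∧ u ∈ gr V i ∧ w ∈ gr V j ∧ z = u ⊗ₜ w}

theorem De_gr {n : ℕ} {u : T V} (hu : u ∈ gr V n) : De V u ∈ DS V n := by
  refine gr_le (fun n => (DS V n).comap (De V)) ?_ ?_ n hu
  · exact Submodule.subset_span ⟨0, 0, 1, 1, rfl, one_gr, one_gr, by simp⟩
  · intro n x u _ h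
    simp only [Submodule.mem_comap] at h ⊢
    rw [De_mul]
    have : DS V n ≤ (DS V (n+1)).comap (rho1 V x + rho2 V x) := by
      refine Submodule.span_le.mpr ?_
      rintro _ ⟨i, j, u, w, rfl, hu, hw, rfl⟩
      simp only [SetLike.mem_coe, Submodule.mem_comap, LinearMap.add_apply, rho1_tmul, rho2_tmul]
      refine Submodule.add_mem _ (Submodule.subset_span ⟨i+1, j, _, _, by omega, mul_gr _ hu, hw, rfl⟩)
        (Submodule.smul_mem _ _ (Submodule.add_mem _ ?_ ?_))
      · exact Submodule.subset_span ⟨i, j+1, _, _, by omega, hu,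
          Submodule.add_mem _ (mul_gr _ hw) (mul_gr _ hw), rfl⟩
      · exact Submodule.subset_span ⟨i, j+1, _, _, by omega, PT_gr hu,
          Submodule.sub_mem _ (mul_gr _ hw) (mul_gr _ hw), rfl⟩
    exact this h

theorem De_gr_mem {M : Type} [AddCommGroup M] [Module ℚ M] (B : T V ⊗[ℚ] T V →ₗ[ℚ] M)
    (S : Submodule ℚ M) {n : ℕ}
    (h : ∀ i j u w, i + j = n → u ∈ gr V i → w ∈ gr V j → B (u ⊗ₜ w) ∈ S)
    {v : T V} (hv : v ∈ gr V n) : B (De V v) ∈ S := by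
  have : DS V n ≤ S.comap B := by
    refine Submodule.span_le.mpr ?_
    rintro _ ⟨i, j, u, w, hij, hu, hw, rfl⟩
    exact h i j u w hij hu hw
  exact this (De_gr hv)

section conv
variable {A : Type} [Ring A] [Algebra ℚ A]

/-- Convolution algebra. -/
abbrev Cv (V : SV) (A : Type) [Ring A] [Algebra ℚ A] := WithConv (T V →ₗ[ℚ] A)

theorem cv_mul (f h : Cv V A) (w : T V) :
    (f * h).ofConv w = LinearMap.mul' ℚ A (TensorProduct.map f.ofConv h.ofConv (De V w)) := rfl

theorem cv_one (w : T V) : (1 : Cv V A).ofConv w = eps V w • 1 := by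
  show algebraMap ℚ A _ = _; rw [Algebra.algebraMap_eq_smul_one]; rfl

theorem cv_mul_one (f h : Cv V A) : (f * h).ofConv 1 = f.ofConv 1 * h.ofConv 1 := by
  rw [cv_mul, De_one]; simp

/-- Maps vanishing in word length less than `k`. -/
def Fil (V : SV) (A : Type) [Ring A] [Algebra ℚ A] (k : ℕ) : Submodule ℚ (Cv V A) where
  carrier := {f | ∀ n, n < k → ∀ w ∈ gr V n, f.ofConv w = 0}
  add_mem' := by
    intro f h hf hh n hn w hw
    simp [hf n hn w hw, hh n hn w hw]
  zero_mem' := by intro n hn w hw; simp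
  smul_mem' := by
    intro c f hf n hn w hw
    simp [hf n hn w hw]

theorem Fil_mul {k l : ℕ} {f h : Cv V A} (hf : f ∈ Fil V A k) (hh : h ∈ Fil V A l) :
    f * h ∈ Fil V A (k + l) := by
  intro n hn w hw
  rw [cv_mul, ← LinearMap.comp_apply]
  rw [← Submodule.mem_bot ℚ]
  refine De_gr_mem _ _ ?_ hw
  rintro i j u w hij hu hw
  simp only [LinearMap.comp_apply, TensorProduct.map_tmul, LinearMap.mul'_apply, Submodule.mem_bot]
  rcases lt_or_ge i k with h | h
  · rw [hf i h u hu, zero_mul]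
  · rw [hh j (by omega) w hw, mul_zero]

theorem Fil_top (f : Cv V A) : f ∈ Fil V A 0 := by intro n hn; omega

theorem Fil_anti {k l : ℕ} (h : k ≤ l) : Fil V A l ≤ Fil V A k :=
  fun _ hf n hn w hw => hf n (by omega) w hw

theorem Fil_mul_l {k : ℕ} (f : Cv V A) {h : Cv V A} (hh : h ∈ Fil V A k) : f * h ∈ Fil V A k := by
  simpa using Fil_mul (Fil_top f) hh

theorem Fil_mul_r {k : ℕ} {f : Cv V A} (h : Cv V A) (hf : f ∈ Fil V A k) : f * h ∈ Fil V A k := by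
  simpa using Fil_mul hf (Fil_top h)

theorem Fil_pow {f : Cv V A} (hf : f ∈ Fil V A 1) (k : ℕ) : f ^ k ∈ Fil V A k := by
  induction k with
  | zero => exact Fil_top _
  | succ k ih => rw [pow_succ]; exact Fil_mul ih hf

theorem gr_zero {w : T V} (hw : w ∈ gr V 0) : w = eps V w • 1 := by
  rw [gr, pow_zero] at hw
  obtain ⟨r, rfl⟩ := Submodule.mem_one.mp hw
  simp [Algebra.algebraMap_eq_smul_one]

theorem Fil_one {f : Cv V A} : f ∈ Fil V A 1 ↔ f.ofConv 1 = 0 := by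
  constructor
  · intro h; exact h 0 (by omega) 1 one_gr
  · intro h n hn w hw
    obtain rfl : n = 0 := by omega
    rw [gr_zero hw, map_smul, h, smul_zero]

theorem Fil_eq {f h : Cv V A} (hh : ∀ k, f - h ∈ Fil V A k) : f = h := by
  apply WithConv.ext
  apply gr_ext
  intro n u hu
  have := hh (n+1) n (by omega) u hu
  simpa [sub_eq_zero] using this

/-- Glue a sequence of maps along word length. -/
def glue (c : ℕ → Cv V A) : Cv V A := WithConv.toConv
  ((DirectSum.toModule ℚ ℕ A fun n => (c n).ofConv ∘ₗ (gr V n).subtype) ∘ₗ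
    (DirectSum.decomposeLinearEquiv (gr V)).toLinearMap)

theorem glue_apply (c : ℕ → Cv V A) {n : ℕ} {w : T V} (hw : w ∈ gr V n) :
    (glue c).ofConv w = (c n).ofConv w := by
  simp only [glue, LinearMap.comp_apply, LinearEquiv.coe_coe, DirectSum.decomposeLinearEquiv_apply]
  rw [DirectSum.decompose_of_mem _ hw]
  erw [DirectSum.toModule_lof]
  rfl

open Polynomial in
/-- Truncated polynomial. -/
def tr (p : ℕ → ℚ) (K : ℕ) : ℚ[X] := ∑ k ∈ Finset.range K, C (p k) * X ^ k

/-- Power series evaluated at an element of positive filtration. -/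
def ser (p : ℕ → ℚ) (a : Cv V A) : Cv V A := glue fun n => Polynomial.aeval a (tr p (n+1))

theorem aeval_tr (p : ℕ → ℚ) (a : Cv V A) (K : ℕ) :
    Polynomial.aeval a (tr p K) = ∑ k ∈ Finset.range K, p k • a ^ k := by
  simp [tr, Algebra.smul_def]

theorem tr_diff (p : ℕ → ℚ) {a : Cv V A} (ha : a ∈ Fil V A 1) {K L : ℕ} (h : K ≤ L) :
    Polynomial.aeval a (tr p L) - Polynomial.aeval a (tr p K) ∈ Fil V A K := by
  rw [aeval_tr, aeval_tr, ← Finset.sum_range_add_sum_Ico _ h, add_sub_cancel_left]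
  refine Submodule.sum_mem _ fun k hk => Submodule.smul_mem _ _ ?_
  exact Fil_anti (Finset.mem_Ico.mp hk).1 (Fil_pow ha k)

theorem ser_sub (p : ℕ → ℚ) {a : Cv V A} (ha : a ∈ Fil V A 1) (K : ℕ) :
    ser p a - Polynomial.aeval a (tr p K) ∈ Fil V A K := by
  intro n hn w hw
  have := tr_diff p ha (show n + 1 ≤ K by omega) n (by omega) w hw
  simp only [WithConv.ofConv_sub, LinearMap.sub_apply, ser] at this ⊢
  rw [glue_apply _ hw, ← neg_eq_zero, ← this]; abel

theorem ser_sub' (p : ℕ → ℚ) {a : Cv V A} (ha : a ∈ Fil V A 1) (K : ℕ) :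
    ser p a - ∑ k ∈ Finset.range K, p k • a ^ k ∈ Fil V A K := by
  rw [← aeval_tr]; exact ser_sub p ha K

theorem aeval_congr (q : Polynomial ℚ) {a b : Cv V A} {K : ℕ} (h : a - b ∈ Fil V A K) :
    Polynomial.aeval a q - Polynomial.aeval b q ∈ Fil V A K := by
  have hp : ∀ k, a ^ k - b ^ k ∈ Fil V A K := by
    intro k
    induction k with
    | zero => simp
    | succ k ih =>
      have : a ^ (k+1) - b ^ (k+1) = (a ^ k - b ^ k) * a + b ^ k * (a - b) := by noncomm_ring
      rw [this]
      exact Submodule.add_mem _ (Fil_mul_r _ ih) (Fil_mul_l _ h)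
  rw [Polynomial.aeval_eq_sum_range, Polynomial.aeval_eq_sum_range, ← Finset.sum_sub_distrib]
  refine Submodule.sum_mem _ fun k _ => ?_
  rw [← smul_sub]; exact Submodule.smul_mem _ _ (hp k)

theorem ser_fil (p : ℕ → ℚ) (hp : p 0 = 0) {a : Cv V A} (ha : a ∈ Fil V A 1) :
    ser p a ∈ Fil V A 1 := by
  have := ser_sub' p ha 1
  simpa [hp] using this

end conv
end UQ

namespace UQ
variable {V : SV}

/-- Coefficients of the logarithm series. -/
def lg (k : ℕ) : ℚ := (-1)^(k+1) / k

/-- Coefficients of the exponential series. -/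
def ex (k : ℕ) : ℚ := 1 / k.factorial

section poly
open Polynomial

theorem tr_succ (p : ℕ → ℚ) (K : ℕ) : tr p (K+1) = tr p K + C (p K) * X ^ K := by
  simp [tr, Finset.sum_range_succ]

theorem der_ex (m : ℕ) : derivative (tr ex (m+1)) = tr ex m := by
  induction m with
  | zero => simp [tr]
  | succ m ih =>
    rw [tr_succ, derivative_add, ih, tr_succ ex m, derivative_C_mul_X_pow]
    congr 3
    rw [ex, ex, Nat.factorial_succ]
    push_cast
    have : (m.factorial : ℚ) ≠ 0 := by positivity
    field_simp

theorem der_lg (m : ℕ) : (1 + X) * derivative (tr lg (m+1)) = 1 - (-X)^m := by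
  induction m with
  | zero => simp [tr, lg]
  | succ m ih =>
    rw [tr_succ, derivative_add, mul_add, ih, derivative_C_mul_X_pow]
    have : lg (m+1) * ((m+1 : ℕ) : ℚ) = (-1)^m := by
      rw [lg]; push_cast
      have : (m : ℚ) + 1 ≠ 0 := by positivity
      field_simp; ring
    rw [this]
    simp only [Nat.add_sub_cancel, map_pow, map_neg, map_one]
    rw [pow_succ (-X), neg_pow (X : ℚ[X]) m]
    ring

theorem X_dvd_lg (m : ℕ) : (X : ℚ[X]) ∣ tr lg m := by
  apply Finset.dvd_sum
  intro k _
  rcases k with _ | k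
  · simp [lg]
  · exact Dvd.intro_left (C (lg (k+1)) * X^k) (by rw [pow_succ]; ring)

theorem ex_lg (m : ℕ) : (X : ℚ[X])^(m+1) ∣ (tr ex (m+1)).comp (tr lg (m+1)) - (1 + X) := by
  set p := (tr ex (m+1)).comp (tr lg (m+1)) with hp
  have h1 : (1 + X) * derivative p = (p - C (ex m) * (tr lg (m+1))^m) * (1 - (-X)^m) := by
    rw [hp, derivative_comp, der_ex, ← der_lg, tr_succ ex m]
    simp; ring
  have h2 : (X : ℚ[X])^m ∣ (1 + X) * derivative p - p := by
    rw [h1]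
    have a1 : (X : ℚ[X])^m ∣ (tr lg (m+1))^m := pow_dvd_pow_of_dvd (X_dvd_lg _) _
    have a2 : (X : ℚ[X])^m ∣ (-X)^m := by rw [neg_pow]; exact Dvd.intro_left _ rfl
    have : (p - C (ex m) * (tr lg (m+1))^m) * (1 - (-X)^m) - p =
      (-C (ex m) * (1 - (-X)^m)) * (tr lg (m+1))^m - p * (-X)^m := by ring
    rw [this]
    exact dvd_sub (Dvd.dvd.mul_left a1 _) (Dvd.dvd.mul_left a2 _)
  have h0 : p.coeff 0 = 1 := by
    rw [coeff_zero_eq_eval_zero, hp, eval_comp]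
    obtain ⟨q, hq⟩ := X_dvd_lg (m+1)
    rw [hq]
    simp only [eval_mul, eval_X, zero_mul]
    simp [tr, eval_finsetSum, ex, Finset.sum_range_succ']
  rw [X_pow_dvd_iff] at h2 ⊢
  intro d
  induction d with
  | zero => intro _; simp [h0]
  | succ d ih =>
    intro hd
    have h3 := h2 d (by omega)
    have h4 := ih (by omega)
    rw [add_mul, one_mul, coeff_sub, coeff_add, coeff_derivative] at h3
    have h5 : (X * derivative p).coeff d = p.coeff d * d := by
      rcases d with _ | d
      · simp
      · rw [coeff_X_mul, coeff_derivative]; push_cast; rfl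
    rw [h5] at h3
    have h6 : p.coeff d = (1 + X : ℚ[X]).coeff d := by
      rw [coeff_sub] at h4; linarith
    rw [h6] at h3
    rw [coeff_sub]
    rcases d with _ | _ | d
    · simp [coeff_one, coeff_X] at h3 ⊢; linarith
    · simp [coeff_one, coeff_X] at h3 ⊢; exact h3
    · simp [coeff_one, coeff_X] at h3 ⊢
      rcases h3 with h3 | h3
      · exact h3
      · have : (d : ℚ) + 1 + 1 + 1 ≠ 0 := by positivity
        exact absurd h3 this
end poly

section conv
variable {A : Type} [Ring A] [Algebra ℚ A]

theorem lg_zero : lg 0 = 0 := by simp [lg]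

theorem exp_log {a : Cv V A} (ha : a ∈ Fil V A 1) : ser ex (ser lg a) = 1 + a := by
  apply Fil_eq
  intro K
  rcases K with _ | m
  · exact Fil_top _
  have hE := ser_fil lg lg_zero ha
  have h1 := ser_sub ex hE (m+1)
  have h2 := aeval_congr (tr ex (m+1)) (ser_sub lg ha (m+1))
  obtain ⟨q, hq⟩ := ex_lg m
  have h3 := congrArg (Polynomial.aeval a) hq
  simp only [map_sub, map_add, map_one, Polynomial.aeval_X, map_mul, map_pow,
    Polynomial.aeval_comp] at h3
  have h4 : a^(m+1) * Polynomial.aeval a q ∈ Fil V A (m+1) := Fil_mul_r _ (Fil_pow ha _)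
  rw [← h3] at h4
  have := Submodule.add_mem _ (Submodule.add_mem _ h1 h2) h4
  simpa using this

/-- Post-composition with an algebra morphism. -/
def post {B : Type} [Ring B] [Algebra ℚ B] (φ : A →ₐ[ℚ] B) : Cv V A →ₐ[ℚ] Cv V B :=
  AlgHom.ofLinearMap
    { toFun := fun f => WithConv.toConv (φ.toLinearMap ∘ₗ f.ofConv)
      map_add' := by intro f h; apply WithConv.ext; ext; simp
      map_smul' := by intro f h; apply WithConv.ext; ext; simp }
    (by apply WithConv.ext; ext w; simp)
    (by
      intro f h
      have := LinearMap.algHom_comp_convMul_distrib φ f h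
      simp only [LinearMap.coe_mk, AddHom.coe_mk]
      rw [this])

@[simp] theorem post_apply {B : Type} [Ring B] [Algebra ℚ B] (φ : A →ₐ[ℚ] B) (f : Cv V A) (w) :
    (post φ f).ofConv w = φ (f.ofConv w) := rfl

/-- Pre-composition with a coalgebra morphism. -/
def pre {W : SV} (ψ : T W →ₗ[ℚ] T V) (h1 : De V ∘ₗ ψ = TensorProduct.map ψ ψ ∘ₗ De W)
    (h2 : ∀ w, eps V (ψ w) = eps W w) : Cv V A →ₐ[ℚ] Cv W A :=
  AlgHom.ofLinearMap
    { toFun := fun f => WithConv.toConv (f.ofConv ∘ₗ ψ)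
      map_add' := by intro f h; apply WithConv.ext; ext; simp
      map_smul' := by intro f h; apply WithConv.ext; ext; simp }
    (by
      apply WithConv.ext; ext w
      simp only [LinearMap.coe_mk, AddHom.coe_mk, LinearMap.comp_apply, cv_one, h2])
    (by
      intro f h
      apply WithConv.ext; ext w
      have := LinearMap.congr_fun h1 w
      simp only [LinearMap.comp_apply] at this
      simp only [LinearMap.coe_mk, AddHom.coe_mk, LinearMap.comp_apply, cv_mul, this, mm])

@[simp] theorem pre_apply {W : SV} (ψ : T W →ₗ[ℚ] T V) (h1) (h2) (f : Cv V A) (w) :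
    (pre ψ h1 h2 f).ofConv w = f.ofConv (ψ w) := rfl

theorem post_Fil {B : Type} [Ring B] [Algebra ℚ B] (φ : A →ₐ[ℚ] B) {f : Cv V A} {k : ℕ}
    (hf : f ∈ Fil V A k) : post φ f ∈ Fil V B k := by
  intro n hn w hw
  rw [post_apply, hf n hn w hw, map_zero]

theorem post_ser {B : Type} [Ring B] [Algebra ℚ B] (φ : A →ₐ[ℚ] B) (p : ℕ → ℚ) {f : Cv V A}
    (hf : f ∈ Fil V A 1) : post φ (ser p f) = ser p (post φ f) := by
  apply Fil_eq
  intro K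
  have h1 := post_Fil φ (ser_sub' p hf K)
  have h2 := ser_sub' p (post_Fil φ hf) K
  have := Submodule.sub_mem _ h1 h2
  simpa using this

theorem ser_ev (p : ℕ → ℚ) {a : Cv V A} (ha : a ∈ Fil V A 1) (w : T V) :
    ∃ K0, ∀ K, K0 ≤ K → (ser p a).ofConv w = (∑ k ∈ Finset.range K, p k • a ^ k).ofConv w := by
  induction w using DirectSum.Decomposition.inductionOn (gr V) with
  | zero => exact ⟨0, by simp⟩
  | @homogeneous i m =>
    refine ⟨i + 1, fun K hK => ?_⟩
    have := ser_sub' p ha K i (by omega) m m.2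
    rw [WithConv.ofConv_sub, LinearMap.sub_apply] at this
    exact sub_eq_zero.mp this
  | add x y hx hy =>
    obtain ⟨k1, h1⟩ := hx
    obtain ⟨k2, h2⟩ := hy
    exact ⟨max k1 k2, fun K hK => linadd _ _ (h1 K (le_trans (le_max_left _ _) hK))
      (h2 K (le_trans (le_max_right _ _) hK))⟩

theorem pre_Fil {W : SV} (ψ : T W →ₗ[ℚ] T V) (h1 : De V ∘ₗ ψ = TensorProduct.map ψ ψ ∘ₗ De W)
    (h2 : ∀ w, eps V (ψ w) = eps W w) (h3 : ψ 1 = 1) {f : Cv V A} (hf : f ∈ Fil V A 1) :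
    pre ψ h1 h2 f ∈ Fil W A 1 := by
  rw [Fil_one] at *
  rw [pre_apply, h3, hf]

theorem pre_ser {W : SV} (ψ : T W →ₗ[ℚ] T V) (h1 : De V ∘ₗ ψ = TensorProduct.map ψ ψ ∘ₗ De W)
    (h2 : ∀ w, eps V (ψ w) = eps W w) (h3 : ψ 1 = 1) (p : ℕ → ℚ) {f : Cv V A}
    (hf : f ∈ Fil V A 1) : pre ψ h1 h2 (ser p f) = ser p (pre ψ h1 h2 f) := by
  apply WithConv.ext; ext w
  obtain ⟨K1, e1⟩ := ser_ev p hf (ψ w)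
  obtain ⟨K2, e2⟩ := ser_ev p (pre_Fil ψ h1 h2 h3 hf) w
  rw [pre_apply, e1 (max K1 K2) (le_max_left _ _), e2 (max K1 K2) (le_max_right _ _)]
  simp only [← map_pow, ← map_smul, ← map_sum, pre_apply]

end conv
end UQ

namespace UQ
variable {V : SV}

/-- Word length operator. -/
def NN (V : SV) : T V →ₗ[ℚ] T V :=
  (glue (A := T V) fun n => WithConv.toConv ((n : ℚ) • LinearMap.id)).ofConv

theorem NN_gr {n : ℕ} {w : T V} (hw : w ∈ gr V n) : NN V w = (n : ℚ) • w := by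
  rw [NN, glue_apply _ hw]; rfl

theorem NN_coder : De V ∘ₗ NN V =
    (TensorProduct.map (NN V) LinearMap.id + TensorProduct.map LinearMap.id (NN V)) ∘ₗ De V := by
  apply gr_ext
  intro n u hu
  rw [LinearMap.comp_apply, NN_gr hu, map_smul, LinearMap.comp_apply]
  have := De_gr_mem ((n : ℚ) • LinearMap.id -
    (TensorProduct.map (NN V) LinearMap.id + TensorProduct.map LinearMap.id (NN V))) ⊥ (n := n)
    (by
      intro i j u w hij hu hw
      rw [Submodule.mem_bot]
      simp only [LinearMap.sub_apply, LinearMap.smul_apply, LinearMap.id_apply, LinearMap.add_apply,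
        TensorProduct.map_tmul, NN_gr hu, NN_gr hw, ← hij]
      rw [TensorProduct.tmul_smul, ← TensorProduct.smul_tmul']
      push_cast; module) hu
  rw [Submodule.mem_bot, LinearMap.sub_apply, sub_eq_zero] at this
  exact this

section conv
variable {A : Type} [Ring A] [Algebra ℚ A]

/-- Derivation of the convolution algebra. -/
def del : Cv V A →ₗ[ℚ] Cv V A where
  toFun f := WithConv.toConv (f.ofConv ∘ₗ NN V)
  map_add' := by intro f h; apply WithConv.ext; ext; simp
  map_smul' := by intro f h; apply WithConv.ext; ext; simp

theorem del_apply (f : Cv V A) (w : T V) : (del f).ofConv w = f.ofConv (NN V w) := rfl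

theorem del_gr (f : Cv V A) {n : ℕ} {w : T V} (hw : w ∈ gr V n) :
    (del f).ofConv w = (n : ℚ) • f.ofConv w := by rw [del_apply, NN_gr hw, map_smul]

theorem del_mul (f h : Cv V A) : del (f * h) = del f * h + f * del h := by
  apply WithConv.ext; ext w
  have := LinearMap.congr_fun (NN_coder (V := V)) w
  simp only [LinearMap.comp_apply, LinearMap.add_apply] at this
  rw [del_apply, cv_mul, this, WithConv.ofConv_add, LinearMap.add_apply, cv_mul, cv_mul, map_add,
    map_add, mm, mm]
  rfl

theorem del_one : del (1 : Cv V A) = 0 := by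
  have := del_mul (1 : Cv V A) 1
  simpa using this

theorem del_Fil {f : Cv V A} {k : ℕ} (hf : f ∈ Fil V A k) : del f ∈ Fil V A k := by
  intro n hn w hw
  rw [del_gr _ hw, hf n hn w hw, smul_zero]

/-- Iterated commutators. -/
def cc (a : Cv V A) : ℕ → Cv V A
  | 0 => del a
  | i+1 => a * cc a i - cc a i * a

theorem cc_Fil {a : Cv V A} (ha : a ∈ Fil V A 1) (i : ℕ) : cc a i ∈ Fil V A (i+1) := by
  induction i with
  | zero => exact del_Fil ha
  | succ i ih =>
    have h1 := Fil_mul ha ih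
    have h2 := Fil_mul ih ha
    rw [add_comm] at h1
    exact Submodule.sub_mem _ h1 h2

/-- Normalised iterated commutators. -/
def dc (a : Cv V A) (i : ℕ) : Cv V A := ex (i+1) • cc a i

/-- Divided powers. -/
def dp (a : Cv V A) (n : ℕ) : Cv V A := ex n • a ^ n

theorem ex_succ (n : ℕ) : (n+1 : ℚ) * ex (n+1) = ex n := by
  rw [ex, ex, Nat.factorial_succ]; push_cast
  have : (n.factorial : ℚ) ≠ 0 := by positivity
  field_simp

theorem a_dp (a : Cv V A) (n : ℕ) : a * dp a n = (n+1 : ℚ) • dp a (n+1) := by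
  rw [dp, dp, smul_smul, ex_succ, mul_smul_comm, pow_succ']

theorem a_dc (a : Cv V A) (i : ℕ) : a * dc a i = dc a i * a + (i+2 : ℚ) • dc a (i+1) := by
  rw [dc, dc, smul_smul, show (i + 2 : ℚ) = ((i+1 : ℕ) + 1 : ℚ) by push_cast; ring, ex_succ,
    mul_smul_comm, smul_mul_assoc, cc]
  module

theorem dp_a (a : Cv V A) (n : ℕ) : dp a n * a = a * dp a n := by
  rw [dp, mul_smul_comm, smul_mul_assoc, pow_mul_comm']

theorem del_dp (a : Cv V A) (n : ℕ) :
    del (dp a (n+1)) = ∑ p ∈ Finset.HasAntidiagonal.antidiagonal n, dc a p.1 * dp a p.2 := by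
  induction n with
  | zero => simp [dp, dc, ex, cc]
  | succ n ih =>
    have h : (n + 2 : ℚ) • del (dp a (n+2)) =
        (n + 2 : ℚ) • ∑ p ∈ Finset.HasAntidiagonal.antidiagonal (n+1), dc a p.1 * dp a p.2 := by
      have e := a_dp a (n+1)
      rw [← map_smul, show (n + 2 : ℚ) = ((n+1 : ℕ) + 1 : ℚ) by push_cast; ring, ← e, del_mul, ih,
        Finset.mul_sum]
      have e2 : ∀ p ∈ Finset.HasAntidiagonal.antidiagonal n, a * (dc a p.1 * dp a p.2) =
          (p.2 + 1 : ℚ) • (dc a p.1 * dp a (p.2+1)) + (p.1+2 : ℚ) • (dc a (p.1+1) * dp a p.2) := by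
        intro p _
        rw [← mul_assoc, a_dc, add_mul, mul_assoc, a_dp, mul_smul_comm, smul_mul_assoc]
      rw [Finset.sum_congr rfl e2, Finset.sum_add_distrib]
      have e3 : ∀ p ∈ Finset.HasAntidiagonal.antidiagonal (n+1), (((n+1 : ℕ) : ℚ)+1) • (dc a p.1 * dp a p.2) =
          (p.2 : ℚ) • (dc a p.1 * dp a p.2) + (p.1 + 1 : ℚ) • (dc a p.1 * dp a p.2) := by
        intro p hp
        rw [← add_smul, ← Finset.HasAntidiagonal.mem_antidiagonal.mp hp]; push_cast; congr 1; ring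
      rw [Finset.smul_sum, Finset.sum_congr rfl e3, Finset.sum_add_distrib,
        Finset.Nat.sum_antidiagonal_succ', Finset.Nat.sum_antidiagonal_succ (n := n)
          (f := fun p => (p.1 + 1 : ℚ) • (dc a p.1 * dp a p.2))]
      have e4 : dc a 0 = del a := by simp [dc, ex, cc]
      simp only [Nat.cast_zero, zero_smul, zero_add, add_zero, one_smul, e4]
      push_cast
      simp only [add_assoc, one_add_one_eq_two]
      abel
    have h2 : (n + 2 : ℚ) ≠ 0 := by positivity
    exact smul_right_injective _ h2 h

theorem dp_Fil {a : Cv V A} (ha : a ∈ Fil V A 1) (n : ℕ) : dp a n ∈ Fil V A n :=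
  Submodule.smul_mem _ _ (Fil_pow ha n)

theorem dc_Fil {a : Cv V A} (ha : a ∈ Fil V A 1) (n : ℕ) : dc a n ∈ Fil V A (n+1) :=
  Submodule.smul_mem _ _ (cc_Fil ha n)

theorem del_exp {a : Cv V A} (ha : a ∈ Fil V A 1) (K : ℕ) :
    del (ser ex a) - (∑ i ∈ Finset.range K, dc a i) * ser ex a ∈ Fil V A K := by
  have h1 := del_Fil (ser_sub' ex ha K)
  have h2 : (∑ i ∈ Finset.range K, dc a i) * (ser ex a - ∑ k ∈ Finset.range K, dp a k) ∈ Fil V A K :=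
    Fil_mul_l _ (ser_sub' ex ha K)
  have h3 : del (∑ k ∈ Finset.range K, dp a k) -
      (∑ i ∈ Finset.range K, dc a i) * ∑ k ∈ Finset.range K, dp a k ∈ Fil V A K := by
    rcases K with _ | K
    · exact Fil_top _
    have e1 : del (∑ k ∈ Finset.range (K+1), dp a k) =
        ∑ n ∈ Finset.range K, ∑ p ∈ Finset.HasAntidiagonal.antidiagonal n, dc a p.1 * dp a p.2 := by
      rw [map_sum, Finset.sum_range_succ']
      have : del (dp a 0) = 0 := by simp [dp, del_one]
      rw [this, add_zero]
      exact Finset.sum_congr rfl fun n _ => del_dp a n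
    rw [e1, Finset.sum_mul_sum, ← Finset.sum_product', Finset.sum_sigma']
    have e2 : ∑ x ∈ (Finset.range K).sigma fun a => Finset.HasAntidiagonal.antidiagonal a,
        dc a x.snd.1 * dp a x.snd.2 = ∑ x ∈ (Finset.range (K+1) ×ˢ Finset.range (K+1)).filter
          (fun x => x.1 + x.2 < K), dc a x.1 * dp a x.2 := by
      refine Finset.sum_bij' (fun x _ => x.2) (fun x _ => ⟨x.1 + x.2, x⟩) ?_ ?_ ?_ ?_ ?_
      · rintro ⟨n, i, j⟩ h
        simp at h ⊢; omega
      · rintro ⟨i, j⟩ h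
        simp at h ⊢; omega
      · rintro ⟨n, i, j⟩ h
        simp at h
        obtain ⟨h, rfl⟩ := h
        rfl
      · rintro ⟨i, j⟩ h; rfl
      · rintro ⟨n, i, j⟩ h; rfl
    rw [e2, ← Finset.sum_filter_add_sum_filter_not (Finset.range (K+1) ×ˢ Finset.range (K+1))
      (fun x => x.1 + x.2 < K) (fun x => dc a x.1 * dp a x.2), ← sub_sub, sub_self, zero_sub]
    refine Submodule.neg_mem _ (Submodule.sum_mem _ ?_)
    rintro ⟨i, j⟩ h
    simp only [Finset.mem_filter] at h
    exact Fil_anti (by omega) (Fil_mul (dc_Fil ha i) (dp_Fil ha j))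
  have h4 := Submodule.sub_mem _ (Submodule.add_mem _ h1 h3) h2
  convert h4 using 1
  rw [mul_sub, map_sub]
  simp only [dp]
  abel

end conv

end UQ

namespace UQ
variable {V : SV}

section dyn
variable {M : Type} [AddCommGroup M] [Module ℚ M]

/-- Auxiliary action for the Dynkin operator. -/
def dynAct (a : V.carrier →ₗ[ℚ] Module.End ℚ M) (j : V.carrier →ₗ[ℚ] M) :
    V.carrier →ₗ[ℚ] Module.End ℚ (ℚ × M) where
  toFun x := LinearMap.prod 0 (LinearMap.coprod (LinearMap.toSpanSingleton ℚ M (j x)) (a x))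
  map_add' x y := by
    apply LinearMap.ext; intro p
    apply Prod.ext
    · simp
    · show (p.1 • j (x + y) + a (x + y) p.2 : M)
        = (p.1 • j x + a x p.2) + (p.1 • j y + a y p.2)
      simp only [map_add, LinearMap.add_apply]; module
  map_smul' c x := by
    apply LinearMap.ext; intro p
    apply Prod.ext
    · simp
    · show (p.1 • j (c • x) + a (c • x) p.2 : M) = c • (p.1 • j x + a x p.2)
      simp only [map_smul, LinearMap.smul_apply]; module

/-- Dynkin type operator. -/
def dyn (a : V.carrier →ₗ[ℚ] Module.End ℚ M) (j : V.carrier →ₗ[ℚ] M) : T V →ₗ[ℚ] M :=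
  LinearMap.snd ℚ ℚ M ∘ₗ trec (dynAct a j) (1, 0)

theorem dyn_fst (a : V.carrier →ₗ[ℚ] Module.End ℚ M) (j : V.carrier →ₗ[ℚ] M) (u : T V) :
    (trec (dynAct a j) (1, 0) u).1 = eps V u := by
  have : LinearMap.fst ℚ ℚ M ∘ₗ trec (dynAct a j) (1, 0) = (eps V).toLinearMap := by
    apply T_ext
    · simp
    · intro x u _; simp [dynAct]
  exact LinearMap.congr_fun this u

@[simp] theorem dyn_one (a : V.carrier →ₗ[ℚ] Module.End ℚ M) (j : V.carrier →ₗ[ℚ] M) :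
    dyn a j 1 = 0 := by simp [dyn]

theorem dyn_mul (a : V.carrier →ₗ[ℚ] Module.End ℚ M) (j : V.carrier →ₗ[ℚ] M) (x) (u : T V) :
    dyn a j (io x * u) = a x (dyn a j u) + eps V u • j x := by
  rw [← dyn_fst a j, dyn, LinearMap.comp_apply, trec_mul, LinearMap.comp_apply]
  show ((trec (dynAct a j) (1, 0) u).1 • j x + a x (trec (dynAct a j) (1, 0) u).2 : M) = _
  rw [add_comm]; rfl

end dyn

/-- Super commutator. -/
def sbr : T V →ₗ[ℚ] T V →ₗ[ℚ] T V :=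
  LinearMap.mul ℚ (T V) - (1/2 : ℚ) • ((LinearMap.mul ℚ (T V)).flip
    + (LinearMap.mul ℚ (T V)).flip.compl₂ (PL V) + (LinearMap.mul ℚ (T V)).flip ∘ₗ PL V
    - (LinearMap.mul ℚ (T V)).flip.compl₂ (PL V) ∘ₗ PL V)

theorem sbr_apply (u w : T V) : sbr u w = u * w - (1/2 : ℚ) • (w * u + PT V w * u + w * PT V u
    - PT V w * PT V u) := by
  simp [sbr]

theorem PT_sbr (u w : T V) : PT V (sbr u w) = sbr (PT V u) (PT V w) := by
  simp [sbr_apply]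

theorem sbr_io (x : V.carrier) (w : T V) (Q : T V →ₐ[ℚ] T V)
    (h : ((Q = AlgHom.id ℚ _ ∧ V.P x = x) ∨ (Q = PT V ∧ V.P x = -x))) :
    sbr (io x) w = io x * w - Q w * io x := by
  rw [sbr_apply]
  rcases h with ⟨rfl, h⟩ | ⟨rfl, h⟩
  · simp only [PT_io, h, AlgHom.id_apply]; module
  · simp only [PT_io, h, map_neg, mul_neg]; module

/-- The Dynkin operator. -/
def DD (V : SV) : T V →ₗ[ℚ] T V := dyn (sbr ∘ₗ io) io

theorem DD_mul (x : V.carrier) (u : T V) : DD V (io x * u) = sbr (io x) (DD V u) + eps V u • io x :=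
  dyn_mul _ _ _ _

theorem DD_PT : DD V ∘ₗ PL V = PL V ∘ₗ DD V := by
  apply T_ext
  · simp [DD]
  · intro x u h
    simp only [LinearMap.comp_apply, AlgHom.toLinearMap_apply, map_mul, PT_io] at h ⊢
    rw [DD_mul, DD_mul, h, map_add, PT_sbr, map_smul, PT_io, eps_PT]

/-- The identity in the convolution algebra. -/
def idc (V : SV) : Cv V (T V) := WithConv.toConv LinearMap.id

/-- The Dynkin operator in the convolution algebra. -/
def ddc (V : SV) : Cv V (T V) := WithConv.toConv (DD V)

theorem ddc_idc : ddc V * idc V = del (idc V) := by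
  apply WithConv.ext
  apply gr_ext
  intro n u hu
  rw [del_gr _ hu]
  show _ = (n : ℚ) • u
  refine gr_ind (C := fun n u => (ddc V * idc V).ofConv u = (n : ℚ) • u) ?_ ?_ ?_ ?_ hu
  · rw [cv_mul_one]; simp [ddc, DD]
  · intro n u w h h'
    rw [map_add, smul_add, h, h']
  · intro n r u h
    rw [map_smul, h, smul_comm]
  · intro n x u hu ih
    have key : ∀ x : V.carrier, (V.P x = x ∨ V.P x = -x) →
        (ddc V * idc V).ofConv (io x * u) = ((n + 1 : ℕ) : ℚ) • (io x * u) := by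
      intro x hx
      obtain ⟨Q, h2, -, h3, h4⟩ := rho_hom x hx
      have hQ : DD V ∘ₗ Q.toLinearMap = Q.toLinearMap ∘ₗ DD V := by
        rcases h4 with ⟨rfl, hx⟩ | ⟨rfl, hx⟩
        · ext; simp
        · exact DD_PT
      have a1 : (LinearMap.mul' ℚ (T V) ∘ₗ TensorProduct.map (DD V) LinearMap.id) ∘ₗ
          (rho1 V x + rho2 V x) = lm x ∘ₗ LinearMap.mul' ℚ (T V) ∘ₗ
          TensorProduct.map (DD V) LinearMap.id +
          lm x ∘ₗ (TensorProduct.lid ℚ (T V)).toLinearMap ∘ₗ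
          TensorProduct.map (eps V).toLinearMap LinearMap.id := by
        apply TensorProduct.ext'; intro a b
        have hQa := LinearMap.congr_fun hQ a
        simp only [LinearMap.comp_apply, AlgHom.toLinearMap_apply] at hQa
        simp only [LinearMap.comp_apply, LinearMap.add_apply, h2, rho1_tmul, map_add,
          TensorProduct.map_tmul, LinearMap.mul'_apply, DD_mul, AlgHom.toLinearMap_apply, hQa,
          LinearMap.id_apply, lm_apply, sbr_io x _ Q h4]
        simp [sub_mul, add_mul, mul_assoc]
        abel
      have a2 := LinearMap.congr_fun a1 (De V u)
      have a3 := LinearMap.congr_fun (counit_l (V := V)) u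
      simp only [LinearMap.comp_apply, LinearMap.add_apply] at a2 a3
      rw [cv_mul, De_mul]
      refine a2.trans ?_
      rw [a3]
      rw [cv_mul] at ih
      refine (congrArg₂ (· + ·) (congrArg (lm x) ih) rfl).trans ?_
      simp only [map_smul, lm_apply, LinearEquiv.coe_coe, TensorProduct.mk_apply,
        TensorProduct.lid_tmul, one_smul]
      push_cast; module
    refine V.ind (C := fun x => (ddc V * idc V).ofConv (io x * u) =
      ((n + 1 : ℕ) : ℚ) • (io x * u)) (fun x h => key x (Or.inl h)) (fun x h => key x (Or.inr h))
      ?_ x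
    intro x y hx hy
    rw [map_add, add_mul, map_add, smul_add, hx, hy]

/-- Lie elements of given word length. -/
inductive IsLie : ℕ → T V → Prop
  | io (x : V.carrier) : IsLie 1 (io x)
  | br {n m : ℕ} {u w : T V} : IsLie n u → IsLie m w → IsLie (n+m) (sbr u w)
  | add {n : ℕ} {u w : T V} : IsLie n u → IsLie n w → IsLie n (u + w)
  | smul {n : ℕ} (c : ℚ) {u : T V} : IsLie n u → IsLie n (c • u)
  | zero (n : ℕ) : IsLie n 0

/-- Submodule of Lie elements. -/
def LL (V : SV) (n : ℕ) : Submodule ℚ (T V) where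
  carrier := {u | IsLie n u}
  add_mem' := IsLie.add
  zero_mem' := IsLie.zero n
  smul_mem' c _ h := IsLie.smul c h

theorem DD_LL {n : ℕ} {u : T V} (hu : u ∈ gr V n) : DD V u ∈ LL V n := by
  refine gr_ind (C := fun n u => DD V u ∈ LL V n) ?_ ?_ ?_ ?_ hu
  · rw [show DD V 1 = 0 by simp [DD]]; exact Submodule.zero_mem _
  · intro n u w h h'
    rw [map_add]; exact Submodule.add_mem _ h h'
  · intro n r u h
    rw [map_smul]; exact Submodule.smul_mem _ _ h
  · intro n x u hu ih
    rw [DD_mul]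
    refine Submodule.add_mem _ ?_ ?_
    · have := IsLie.br (IsLie.io x) ih
      rw [add_comm] at this; exact this
    · rcases Nat.eq_zero_or_pos n with rfl | h
      · exact Submodule.smul_mem _ _ (IsLie.io x)
      · rw [eps_gr (by omega) hu, zero_smul]; exact Submodule.zero_mem _

/-- The augmentation ideal projection. -/
def JJ (V : SV) : Cv V (T V) := idc V - 1

theorem JJ_Fil : JJ V ∈ Fil V (T V) 1 := by
  rw [Fil_one, JJ, WithConv.ofConv_sub, LinearMap.sub_apply, cv_one]; simp [idc]

/-- The Eulerian projection. -/
def EE (V : SV) : Cv V (T V) := ser lg (JJ V)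

theorem EE_Fil : EE V ∈ Fil V (T V) 1 := ser_fil lg lg_zero JJ_Fil

theorem exp_EE : ser ex (EE V) = idc V := by
  rw [EE, exp_log JJ_Fil, JJ]; abel

theorem cancel_idc {f : Cv V (T V)} {K : ℕ} (h : f * idc V ∈ Fil V (T V) K) : f ∈ Fil V (T V) K := by
  have : ∀ m, m ≤ K → f ∈ Fil V (T V) m := by
    intro m
    induction m with
    | zero => intro _; exact Fil_top _
    | succ m ih =>
      intro hm
      have h1 := Fil_mul (ih (by omega)) (JJ_Fil (V := V))
      have h2 : f = f * idc V - f * JJ V := by rw [JJ, mul_sub, mul_one]; abel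
      rw [h2]
      exact Submodule.sub_mem _ (Fil_anti hm h) h1
  exact this K le_rfl

theorem ddc_sum (K : ℕ) : ddc V - ∑ i ∈ Finset.range K, dc (EE V) i ∈ Fil V (T V) K := by
  apply cancel_idc
  rw [sub_mul, ddc_idc, ← exp_EE]
  exact del_exp EE_Fil K

/-- Pre-composition with parity. -/
def preP {A : Type} [Ring A] [Algebra ℚ A] : Cv V A →ₐ[ℚ] Cv V A :=
  pre (PL V) De_PT (fun w => eps_PT w)

@[simp] theorem preP_apply {A : Type} [Ring A] [Algebra ℚ A] (f : Cv V A) (w : T V) :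
    (preP f).ofConv w = f.ofConv (PT V w) := rfl

theorem preP_ser {A : Type} [Ring A] [Algebra ℚ A] (p : ℕ → ℚ) {f : Cv V A} (hf : f ∈ Fil V A 1) :
    preP (ser p f) = ser p (preP f) := pre_ser _ _ _ (by simp) _ hf

theorem NN_PT (u : T V) : NN V (PT V u) = PT V (NN V u) := by
  have : NN V ∘ₗ PL V = PL V ∘ₗ NN V := by
    apply gr_ext
    intro n u hu
    simp only [LinearMap.comp_apply, AlgHom.toLinearMap_apply]
    rw [NN_gr hu, NN_gr (PT_gr hu), map_smul]
  exact LinearMap.congr_fun this u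

theorem EE_P : post (PT V) (EE V) = preP (EE V) := by
  have h0 : post (PT V) (JJ V) = preP (JJ V) := by
    rw [JJ, map_sub, map_sub, map_one, map_one]; rfl
  rw [EE, post_ser _ _ JJ_Fil, preP_ser _ JJ_Fil, h0]

theorem cc_P (i : ℕ) : post (PT V) (cc (EE V) i) = preP (cc (EE V) i) := by
  induction i with
  | zero =>
    apply WithConv.ext; ext u
    have := LinearMap.congr_fun (congrArg WithConv.ofConv (EE_P (V := V))) (NN V u)
    simp only [post_apply, preP_apply, cc, del_apply, NN_PT] at this ⊢
    exact this
  | succ i ih => rw [cc, map_sub, map_sub, map_mul, map_mul, map_mul, map_mul, ih, EE_P]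

theorem cv_comm {f h : Cv V (T V)} (hf : post (PT V) f = preP f) (hh : post (PT V) h = preP h)
    (w : T V) : (f * h - h * f).ofConv w =
      TensorProduct.lift sbr (TensorProduct.map f.ofConv h.ofConv (De V w)) := by
  have hf' : ∀ u, f.ofConv (PT V u) = PT V (f.ofConv u) := fun u =>
    (LinearMap.congr_fun (congrArg WithConv.ofConv hf) u).symm
  have hh' : ∀ u, h.ofConv (PT V u) = PT V (h.ofConv u) := fun u =>
    (LinearMap.congr_fun (congrArg WithConv.ofConv hh) u).symm
  rw [WithConv.ofConv_sub, LinearMap.sub_apply, cv_mul, cv_mul]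
  have e := LinearMap.congr_fun (sw_De (V := V)) w
  rw [LinearMap.comp_apply] at e
  nth_rw 2 [← e]
  generalize De V w = z
  induction z with
  | zero => simp
  | add a b ha hb => simp only [map_add] at *; rw [← ha, ← hb]; abel
  | tmul a b =>
    rw [sw_tmul]
    simp only [TensorProduct.map_tmul, LinearMap.mul'_apply, map_smul, map_add, map_sub,
      TensorProduct.lift.tmul, sbr_apply, hf', hh']
    module

theorem EE_LL (n : ℕ) : ∀ u ∈ gr V n, (EE V).ofConv u ∈ LL V n := by
  induction n using Nat.strong_induction_on with
  | _ n ih =>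
  rcases Nat.eq_zero_or_pos n with rfl | hn
  · intro u hu
    rw [EE_Fil 0 (by omega) u hu]; exact Submodule.zero_mem _
  have hbr : ∀ i m, (∀ k, k < n → k ≤ m → ∀ u ∈ gr V k, (cc (EE V) i).ofConv u ∈ LL V k) → m ≤ n →
      ∀ u ∈ gr V m, (cc (EE V) (i+1)).ofConv u ∈ LL V m := by
    intro i m hi hm u hu
    rw [cc, cv_comm EE_P (cc_P i), ← LinearMap.comp_apply]
    refine De_gr_mem _ _ ?_ hu
    intro p q a b hpq ha hb
    simp only [LinearMap.comp_apply, TensorProduct.map_tmul, TensorProduct.lift.tmul]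
    rcases Nat.eq_zero_or_pos p with rfl | hp
    · rw [EE_Fil 0 (by omega) a ha]; simp
    rcases Nat.eq_zero_or_pos q with rfl | hq
    · rw [cc_Fil EE_Fil i 0 (by omega) b hb]; simp
    rw [← hpq]
    exact IsLie.br (ih p (by omega) a ha) (hi q (by omega) (by omega) b hb)
  have hc : ∀ i m, m < n → ∀ u ∈ gr V m, (cc (EE V) i).ofConv u ∈ LL V m := by
    intro i
    induction i with
    | zero =>
      intro m hm u hu
      rw [cc, del_gr _ hu]; exact Submodule.smul_mem _ _ (ih m hm u hu)
    | succ i ih' =>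
      intro m hm u hu
      exact hbr i m (fun k hk _ => ih' k hk) hm.le u hu
  intro u hu
  have h1 := ddc_sum (V := V) (n+1) n (by omega) u hu
  rw [WithConv.ofConv_sub, LinearMap.sub_apply, sub_eq_zero, Finset.sum_range_succ'] at h1
  have e : dc (EE V) 0 = del (EE V) := by simp [dc, ex, cc]
  rw [e, WithConv.ofConv_add, LinearMap.add_apply, del_gr _ hu, WithConv.ofConv_sum,
    LinearMap.sum_apply] at h1
  have h2 : (n : ℚ) • (EE V).ofConv u ∈ LL V n := by
    rw [← sub_eq_iff_eq_add'] at h1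
    rw [← h1]
    refine Submodule.sub_mem _ (DD_LL hu) (Submodule.sum_mem _ fun i _ => ?_)
    rw [dc, WithConv.ofConv_smul, LinearMap.smul_apply]
    exact Submodule.smul_mem _ _ (hbr i n (fun k hk _ => hc i k hk) le_rfl u hu)
  have hn' : (n : ℚ) ≠ 0 := by positivity
  have := Submodule.smul_mem _ (n : ℚ)⁻¹ h2
  rwa [smul_smul, inv_mul_cancel₀ hn', one_smul] at this

end UQ

namespace UQ
variable {V : SV}

/-- A super Lie algebra. -/
structure SL extends SV where
  br : carrier →ₗ[ℚ] carrier →ₗ[ℚ] carrier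
  P_br : ∀ x y, P (br x y) = br (P x) (P y)
  anti : ∀ x y, br x y = -((1/2 : ℚ) • (br y x + br (P y) x + br y (P x) - br (P y) (P x)))
  jac : ∀ x y z, br x (br y z) = br (br x y) z +
    (1/2 : ℚ) • (br y (br x z) + br (P y) (br x z) + br y (br (P x) z) - br (P y) (br (P x) z))

/-- Division by word length. -/
def MI (V : SV) : T V →ₗ[ℚ] T V :=
  (glue (A := T V) fun n => WithConv.toConv ((n : ℚ)⁻¹ • LinearMap.id)).ofConv

theorem MI_gr {n : ℕ} {w : T V} (hw : w ∈ gr V n) : MI V w = (n : ℚ)⁻¹ • w := by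
  rw [MI, glue_apply _ hw]; rfl

theorem MI_PT (u : T V) : MI V (PT V u) = PT V (MI V u) := by
  have : MI V ∘ₗ PL V = PL V ∘ₗ MI V := by
    apply gr_ext
    intro n u hu
    simp only [LinearMap.comp_apply, AlgHom.toLinearMap_apply]
    rw [MI_gr hu, MI_gr (PT_gr hu), map_smul]
  exact LinearMap.congr_fun this u

/-- The adjoint action of the tensor algebra. -/
def adT (g : SL) : T g.toSV →ₐ[ℚ] Module.End ℚ g.carrier := TensorAlgebra.lift ℚ g.br

@[simp] theorem adT_io (g : SL) (x : g.carrier) : adT g (io x) = g.br x := by simp [adT]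

theorem adT_PT (g : SL) (u : T g.toSV) (y : g.carrier) :
    adT g (PT g.toSV u) (g.P y) = g.P (adT g u y) := by
  revert y
  induction u using TensorAlgebra.induction with
  | algebraMap r => intro y; simp [Algebra.algebraMap_eq_smul_one]
  | ι x => intro y; simp [g.P_br]
  | mul a b ha hb => intro y; simp [ha, hb]
  | add a b ha hb => intro y; simp [ha, hb]

/-- Dynkin evaluation. -/
def Dg (g : SL) : T g.toSV →ₗ[ℚ] g.carrier := dyn g.br LinearMap.id

@[simp] theorem Dg_one (g : SL) : Dg g 1 = 0 := dyn_one _ _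

theorem Dg_mul (g : SL) (x : g.carrier) (u : T g.toSV) :
    Dg g (io x * u) = g.br x (Dg g u) + eps g.toSV u • x := dyn_mul _ _ _ _

theorem Dg_mul' (g : SL) (u w : T g.toSV) (hw : eps g.toSV w = 0) :
    Dg g (u * w) = adT g u (Dg g w) := by
  have : Dg g ∘ₗ LinearMap.mulRight ℚ w = (LinearMap.applyₗ (Dg g w)) ∘ₗ (adT g).toLinearMap := by
    apply T_ext
    · simp
    · intro x u h
      simp only [LinearMap.comp_apply, LinearMap.mulRight_apply, LinearMap.applyₗ_apply_apply,
        AlgHom.toLinearMap_apply] at h ⊢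
      rw [mul_assoc, Dg_mul, h, map_mul, map_mul, hw]
      simp
  exact LinearMap.congr_fun this u

theorem Dg_PT (g : SL) (u : T g.toSV) : Dg g (PT g.toSV u) = g.P (Dg g u) := by
  have : Dg g ∘ₗ PL g.toSV = g.P ∘ₗ Dg g := by
    apply T_ext
    · simp
    · intro x u h
      simp only [LinearMap.comp_apply, AlgHom.toLinearMap_apply, map_mul, PT_io] at h ⊢
      rw [Dg_mul, Dg_mul, h, map_add, g.P_br, map_smul, eps_PT]
  exact LinearMap.congr_fun this u

/-- Evaluation of Lie elements. -/
def ev (g : SL) : T g.toSV →ₗ[ℚ] g.carrier := Dg g ∘ₗ MI g.toSV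

theorem ev_PT (g : SL) (u : T g.toSV) : ev g (PT g.toSV u) = g.P (ev g u) := by
  simp only [ev, LinearMap.comp_apply, MI_PT, Dg_PT]

theorem ev_gr (g : SL) {n : ℕ} {u : T g.toSV} (hu : u ∈ gr g.toSV n) :
    Dg g u = (n : ℚ) • ev g u := by
  rw [ev, LinearMap.comp_apply, MI_gr hu, map_smul, smul_smul]
  rcases Nat.eq_zero_or_pos n with rfl | h
  · rw [gr_zero hu]; simp
  · rw [mul_inv_cancel₀ (by positivity), one_smul]

@[simp] theorem ev_io (g : SL) (x : g.carrier) : ev g (io x) = x := by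
  have := ev_gr g (io_gr (V := g.toSV) x)
  rw [← mul_one (io x), Dg_mul] at this
  simpa using this.symm

theorem lie_gr {n : ℕ} {u : T V} (h : IsLie n u) : u ∈ gr V n := by
  induction h with
  | io x => exact io_gr x
  | @br n m u w _ _ hu hw =>
    rw [sbr_apply]
    have a : ∀ u w, u ∈ gr V n → w ∈ gr V m → w * u ∈ gr V (n+m) := by
      intro u w hu hw
      rw [add_comm]; exact mul_gr' hw hu
    refine Submodule.sub_mem _ (mul_gr' hu hw) (Submodule.smul_mem _ _ ?_)
    exact Submodule.sub_mem _ (Submodule.add_mem _ (Submodule.add_mem _ (a _ _ hu hw)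
      (a _ _ hu (PT_gr hw))) (a _ _ (PT_gr hu) hw)) (a _ _ (PT_gr hu) (PT_gr hw))
  | add _ _ h h' => exact Submodule.add_mem _ h h'
  | smul c _ h => exact Submodule.smul_mem _ _ h
  | zero n => exact Submodule.zero_mem _

theorem lie_PT {n : ℕ} {u : T V} (h : IsLie n u) : IsLie n (PT V u) := by
  induction h with
  | io x => rw [PT_io]; exact IsLie.io _
  | br _ _ hu hw => rw [PT_sbr]; exact IsLie.br hu hw
  | add _ _ h h' => rw [map_add]; exact IsLie.add h h'
  | smul c _ h => rw [map_smul]; exact IsLie.smul _ h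
  | zero n => rw [map_zero]; exact IsLie.zero n

theorem lie_eps {n : ℕ} {u : T V} (h : IsLie n u) : eps V u = 0 := by
  induction h with
  | io x => simp
  | br _ _ hu hw => simp [sbr_apply, hu, hw]
  | add _ _ h h' => simp [h, h']
  | smul c _ h => simp [h]
  | zero n => simp

theorem adT_sbr (g : SL) (u w : T g.toSV) (a b : g.carrier) (hu : adT g u = g.br a)
    (hw : adT g w = g.br b) : adT g (sbr u w) = g.br (g.br a b) := by
  have hu' : adT g (PT g.toSV u) = g.br (g.P a) := by
    ext y
    have := adT_PT g u (g.P y)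
    rw [g.PP, hu, g.P_br, g.PP] at this
    exact this
  have hw' : adT g (PT g.toSV w) = g.br (g.P b) := by
    ext y
    have := adT_PT g w (g.P y)
    rw [g.PP, hw, g.P_br, g.PP] at this
    exact this
  ext y
  rw [sbr_apply]
  simp only [map_sub, map_mul, map_smul, map_add, hu, hw, hu', hw', LinearMap.sub_apply,
    LinearMap.add_apply, LinearMap.smul_apply, Module.End.mul_apply]
  rw [g.jac]; abel

theorem ev_sbr_aux (g : SL) {n m : ℕ} {u w : T g.toSV} (hu : IsLie n u) (hw : IsLie m w)
    (hu' : adT g u = g.br (ev g u)) (hw' : adT g w = g.br (ev g w)) :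
    ev g (sbr u w) = g.br (ev g u) (ev g w) := by
  have hPu : ∀ y, adT g (PT g.toSV u) y = g.br (g.P (ev g u)) y := by
    intro y
    have := adT_PT g u (g.P y)
    rw [g.PP, hu', g.P_br, g.PP] at this
    exact this
  have hPw : ∀ y, adT g (PT g.toSV w) y = g.br (g.P (ev g w)) y := by
    intro y
    have := adT_PT g w (g.P y)
    rw [g.PP, hw', g.P_br, g.PP] at this
    exact this
  have e1 := ev_gr g (lie_gr hu)
  have e2 := ev_gr g (lie_gr hw)
  have e3 := ev_gr g (lie_gr (IsLie.br hu hw))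
  have f1 := lie_eps hu
  have f2 := lie_eps hw
  have key : Dg g (sbr u w) = ((n + m : ℕ) : ℚ) • g.br (ev g u) (ev g w) := by
    rw [sbr_apply]
    simp only [map_sub, map_smul, map_add]
    rw [Dg_mul' g u w f2, Dg_mul' g w u f1, Dg_mul' g _ u f1, Dg_mul' g w _ (by simpa using f1),
      Dg_mul' g _ _ (by simpa using f1)]
    simp only [Dg_PT, e1, e2, hu', hw', hPw, map_smul]
    have := g.anti (ev g u) (ev g w)
    push_cast
    rw [add_smul]
    nth_rw 2 [this]
    module
  rw [key] at e3
  rcases Nat.eq_zero_or_pos (n + m) with h | h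
  · have hn : n = 0 := by omega
    subst hn
    have z : ∀ u' : T g.toSV, u' ∈ gr g.toSV 0 → ev g u' = 0 := by
      intro u' hu'
      rw [ev, LinearMap.comp_apply, MI_gr hu']; simp
    have hm := lie_gr (IsLie.br hu hw)
    rw [h] at hm
    rw [z _ hm, z u (lie_gr hu)]; simp
  · have : ((n + m : ℕ) : ℚ) ≠ 0 := by positivity
    exact (smul_right_injective _ this e3).symm

theorem lie_ad (g : SL) {n : ℕ} {u : T g.toSV} (h : IsLie n u) : adT g u = g.br (ev g u) := by
  induction h with
  | io x => simp
  | br h h' hu hw => rw [ev_sbr_aux g h h' hu hw]; exact adT_sbr g _ _ _ _ hu hw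
  | add _ _ h h' => rw [map_add, map_add, map_add, h, h']
  | smul c _ h => rw [map_smul, map_smul, map_smul, h]
  | zero n => simp

theorem ev_sbr (g : SL) {n m : ℕ} {u w : T g.toSV} (hu : IsLie n u) (hw : IsLie m w) :
    ev g (sbr u w) = g.br (ev g u) (ev g w) :=
  ev_sbr_aux g hu hw (lie_ad g hu) (lie_ad g hw)

theorem lie_mod (g : SL) {B : Type} [Ring B] [Algebra ℚ B] (π : T g.toSV →ₐ[ℚ] B)
    (hπ : ∀ x y, π (sbr (io x) (io y)) = π (io (g.br x y))) {n : ℕ} {u : T g.toSV}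
    (h : IsLie n u) : π u = π (io (ev g u)) ∧ π (PT g.toSV u) = π (io (g.P (ev g u))) := by
  induction h with
  | io x => simp
  | @br n m u w h h' hu hw =>
    have key : ∀ u w : T g.toSV, ∀ a b : g.carrier, π u = π (io a) → π w = π (io b) →
        π (PT g.toSV u) = π (io (g.P a)) → π (PT g.toSV w) = π (io (g.P b)) →
        π (sbr u w) = π (io (g.br a b)) := by
      intro u w a b h1 h2 h3 h4
      rw [← hπ, sbr_apply, sbr_apply]
      simp only [map_sub, map_mul, map_smul, map_add, h1, h2, h3, h4, PT_io]
    constructor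
    · rw [ev_sbr g h h']; exact key _ _ _ _ hu.1 hw.1 hu.2 hw.2
    · rw [ev_sbr g h h', PT_sbr, g.P_br]
      refine key _ _ _ _ hu.2 hw.2 ?_ ?_
      · rw [PT_PT, g.PP]; exact hu.1
      · rw [PT_PT, g.PP]; exact hw.1
  | add _ _ h h' => simp only [map_add, h.1, h'.1, h.2, h'.2, and_self]
  | smul c _ h => simp only [map_smul, h.1, h.2, and_self]
  | zero n => simp

/-- All Lie elements. -/
def LV (V : SV) : Submodule ℚ (T V) := ⨆ n, LL V n

theorem LV_ind {C : T V → Prop} (h1 : ∀ n u, IsLie n u → C u)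
    (h2 : ∀ u w, C u → C w → C (u + w)) {u : T V} (hu : u ∈ LV V) : C u :=
  Submodule.iSup_induction (LL V) (motive := C) hu (fun n u h => h1 n u h)
    (h1 0 0 (IsLie.zero 0)) h2

theorem LV_lie {n : ℕ} {u : T V} (h : IsLie n u) : u ∈ LV V := Submodule.mem_iSup_of_mem n h

theorem LV_PT {u : T V} (hu : u ∈ LV V) : PT V u ∈ LV V :=
  LV_ind (C := fun u => PT V u ∈ LV V) (fun _ _ h => LV_lie (lie_PT h))
    (fun _ _ h h' => by rw [map_add]; exact Submodule.add_mem _ h h') hu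

theorem LV_sbr {u w : T V} (hu : u ∈ LV V) (hw : w ∈ LV V) : sbr u w ∈ LV V := by
  refine LV_ind (C := fun u => sbr u w ∈ LV V) (fun n u h => ?_)
    (fun _ _ h h' => by rw [map_add]; exact Submodule.add_mem _ h h') hu
  refine LV_ind (C := fun w => sbr u w ∈ LV V) (fun m w h' => LV_lie (IsLie.br h h'))
    (fun _ _ h h' => by rw [map_add]; exact Submodule.add_mem _ h h') hw

theorem LV_ev (g : SL) {u w : T g.toSV} (hu : u ∈ LV g.toSV) (hw : w ∈ LV g.toSV) :
    ev g (sbr u w) = g.br (ev g u) (ev g w) := by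
  refine LV_ind (C := fun u => ev g (sbr u w) = g.br (ev g u) (ev g w)) (fun n u h => ?_)
    (fun _ _ h h' => by simp only [map_add, LinearMap.add_apply, h, h']) hu
  refine LV_ind (C := fun w => ev g (sbr u w) = g.br (ev g u) (ev g w))
    (fun m w h' => ev_sbr g h h') (fun _ _ h h' => by simp only [map_add, h, h']) hw

theorem EE_LV (u : T V) : (EE V).ofConv u ∈ LV V := by
  induction u using DirectSum.Decomposition.inductionOn (gr V) with
  | zero => simp
  | homogeneous m => exact LV_lie (EE_LL _ _ m.2)
  | add a b ha hb => rw [map_add]; exact Submodule.add_mem _ ha hb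

theorem EE_mod (g : SL) {B : Type} [Ring B] [Algebra ℚ B] (π : T g.toSV →ₐ[ℚ] B)
    (hπ : ∀ x y, π (sbr (io x) (io y)) = π (io (g.br x y))) {u : T g.toSV}
    (hu : u ∈ LV g.toSV) : π u = π (io (ev g u)) :=
  LV_ind (C := fun u => π u = π (io (ev g u))) (fun _ _ h => (lie_mod g π hπ h).1)
    (fun _ _ h hb => by simp only [map_add, h, hb]) hu

/-- The primitive action. -/
def RR (p : T V) : Module.End ℚ (T V ⊗[ℚ] T V) :=
  TensorProduct.map (LinearMap.mulLeft ℚ p) LinearMap.id +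
  (1/2 : ℚ) • (TensorProduct.map LinearMap.id (LinearMap.mulLeft ℚ p) +
    TensorProduct.map LinearMap.id (LinearMap.mulLeft ℚ (PT V p)) +
    TensorProduct.map (PL V) (LinearMap.mulLeft ℚ p) -
    TensorProduct.map (PL V) (LinearMap.mulLeft ℚ (PT V p)))

theorem RR_tmul (p a b : T V) : RR p (a ⊗ₜ b) = (p * a) ⊗ₜ b + (1/2 : ℚ) • (a ⊗ₜ (p * b) +
    a ⊗ₜ (PT V p * b) + PT V a ⊗ₜ (p * b) - PT V a ⊗ₜ (PT V p * b)) := by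
  simp [RR]

theorem RR_add (p q : T V) : RR (p + q) = RR p + RR q := by
  apply TensorProduct.ext'; intro a b
  simp only [LinearMap.add_apply, RR_tmul, map_add, add_mul, TensorProduct.add_tmul,
    TensorProduct.tmul_add]
  module

theorem RR_smul (c : ℚ) (p : T V) : RR (c • p) = c • RR p := by
  apply TensorProduct.ext'; intro a b
  simp only [LinearMap.smul_apply, RR_tmul, map_smul, smul_mul_assoc, ← TensorProduct.smul_tmul',
    TensorProduct.tmul_smul]
  module

theorem RR_sbr (p q : T V) : RR (sbr p q) = RR p * RR q - (1/2 : ℚ) • (RR q * RR p +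
    RR (PT V q) * RR p + RR q * RR (PT V p) - RR (PT V q) * RR (PT V p)) := by
  apply TensorProduct.ext'; intro a b
  simp only [LinearMap.sub_apply, LinearMap.add_apply, LinearMap.smul_apply, Module.End.mul_apply,
    RR_tmul, map_add, map_sub, map_smul, sbr_apply, PT_PT, map_mul, mul_assoc, sub_mul,
    add_mul, smul_mul_assoc, TensorProduct.tmul_add, TensorProduct.tmul_sub, TensorProduct.tmul_smul,
    TensorProduct.add_tmul, TensorProduct.sub_tmul, ← TensorProduct.smul_tmul']
  module

theorem lie_prim {n : ℕ} {p : T V} (h : IsLie n p) :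
    (∀ u, De V (p * u) = RR p (De V u)) ∧ (∀ u, De V (PT V p * u) = RR (PT V p) (De V u)) := by
  have hio : ∀ x : V.carrier, ∀ u, De V (io x * u) = RR (io x) (De V u) := by
    intro x u
    rw [De_mul]
    generalize De V u = z
    induction z with
    | zero => simp
    | add a b ha hb => rw [map_add, map_add, map_add, ← ha, ← hb]; abel
    | tmul a b =>
      rw [RR_tmul, rho1_tmul, rho2_tmul]
      simp only [TensorProduct.tmul_add, TensorProduct.tmul_sub, PT_io]
      module
  induction h with
  | io x => exact ⟨hio x, by simpa using hio (V.P x)⟩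
  | @br n m p q _ _ hp hq =>
    have key : ∀ p q : T V, (∀ u, De V (p * u) = RR p (De V u)) →
        (∀ u, De V (PT V p * u) = RR (PT V p) (De V u)) → (∀ u, De V (q * u) = RR q (De V u)) →
        (∀ u, De V (PT V q * u) = RR (PT V q) (De V u)) →
        ∀ u, De V (sbr p q * u) = RR (sbr p q) (De V u) := by
      intro p q h1 h2 h3 h4 u
      rw [RR_sbr, sbr_apply]
      simp only [sub_mul, add_mul, smul_mul_assoc, mul_assoc, map_sub, map_add, map_smul, h1, h2,
        h3, h4, LinearMap.sub_apply, LinearMap.add_apply, LinearMap.smul_apply,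
        Module.End.mul_apply]
    refine ⟨key p q hp.1 hp.2 hq.1 hq.2, ?_⟩
    rw [PT_sbr]
    exact key _ _ hp.2 (by simpa using hp.1) hq.2 (by simpa using hq.1)
  | add _ _ h h' =>
    refine ⟨fun u => ?_, fun u => ?_⟩
    · rw [add_mul, map_add, h.1, h'.1, RR_add]; rfl
    · rw [map_add, add_mul, map_add, h.2, h'.2, RR_add]; rfl
  | smul c _ h =>
    refine ⟨fun u => ?_, fun u => ?_⟩
    · rw [smul_mul_assoc, map_smul, h.1, RR_smul]; rfl
    · rw [map_smul, smul_mul_assoc, map_smul, h.2, RR_smul]; rfl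
  | zero n =>
    have : RR (0 : T V) = 0 := by simpa using RR_smul (0 : ℚ) (0 : T V)
    simp [this]

theorem LV_prim {p : T V} (h : p ∈ LV V) (u : T V) : De V (p * u) = RR p (De V u) :=
  LV_ind (C := fun p => De V (p * u) = RR p (De V u)) (fun _ _ h => (lie_prim h).1 u)
    (fun p q h h' => by rw [add_mul, map_add, h, h', RR_add]; rfl) h

end UQ

namespace UQ
variable {V : SV}

section hom
variable {M : SV}

/-- Parity preserving algebra maps sending letters to Lie elements. -/
def HH (φ : T M →ₐ[ℚ] T V) : Prop :=
  ∀ m : M.carrier, φ (io m) ∈ LV V ∧ PT V (φ (io m)) = φ (io (M.P m))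

variable {φ : T M →ₐ[ℚ] T V}

theorem HH_PT (h : HH φ) (u : T M) : φ (PT M u) = PT V (φ u) := by
  have : φ.comp (PT M) = (PT V).comp φ := by
    apply TensorAlgebra.hom_ext; ext x; simp [(h x).2]
  exact DFunLike.congr_fun this u

theorem LV_eps {u : T V} (hu : u ∈ LV V) : eps V u = 0 :=
  LV_ind (C := fun u => eps V u = 0) (fun _ _ h => lie_eps h)
    (fun _ _ h h' => by rw [map_add, h, h', add_zero]) hu

theorem HH_eps (h : HH φ) (u : T M) : eps V (φ u) = eps M u := by
  have : (eps V).comp φ = eps M := by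
    apply TensorAlgebra.hom_ext; ext x
    have := LV_eps (h x).1
    simpa using this
  exact DFunLike.congr_fun this u

theorem HH_epsL (h : HH φ) (u : T M) : eps V (φ.toLinearMap u) = eps M u := HH_eps h u

theorem HH_oneL (φ : T M →ₐ[ℚ] T V) : φ.toLinearMap 1 = 1 := map_one φ

theorem HH_De (h : HH φ) : De V ∘ₗ φ.toLinearMap =
    TensorProduct.map φ.toLinearMap φ.toLinearMap ∘ₗ De M := by
  apply T_ext
  · simp
  · intro x u hu
    simp only [LinearMap.comp_apply, AlgHom.toLinearMap_apply] at hu ⊢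
    rw [map_mul, LV_prim (h x).1, hu, LV_prim (LV_lie (IsLie.io x))]
    generalize De M u = z
    induction z with
    | zero => simp
    | add a b ha hb => rw [map_add, map_add, map_add, map_add, ha, hb]
    | tmul a b =>
      simp only [TensorProduct.map_tmul, AlgHom.toLinearMap_apply, RR_tmul, map_add, map_sub,
        map_smul, map_mul, HH_PT h]

theorem HH_sbr (h : HH φ) (u w : T M) : φ (sbr u w) = sbr (φ u) (φ w) := by
  simp only [sbr_apply, map_sub, map_mul, map_add, map_smul, HH_PT h]

theorem HH_LV (h : HH φ) {n : ℕ} {u : T M} (hu : IsLie n u) : φ u ∈ LV V := by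
  induction hu with
  | io x => exact (h x).1
  | br _ _ hu hw => rw [HH_sbr h]; exact LV_sbr hu hw
  | add _ _ h h' => rw [map_add]; exact Submodule.add_mem _ h h'
  | smul c _ h => rw [map_smul]; exact Submodule.smul_mem _ _ h
  | zero n => rw [map_zero]; exact Submodule.zero_mem _

theorem HH_EE (h : HH φ) (u : T M) : (EE V).ofConv (φ u) = φ ((EE M).ofConv u) := by
  have e : pre φ.toLinearMap (HH_De h) (HH_epsL h) (EE V) = post φ (EE M) := by
    rw [EE, EE, pre_ser _ _ _ (HH_oneL _) _ JJ_Fil, post_ser _ _ JJ_Fil]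
    congr 1
    rw [JJ, JJ, map_sub, map_sub, map_one, map_one]; rfl
  exact LinearMap.congr_fun (congrArg WithConv.ofConv e) u
end hom

/-- The retraction onto the Lie algebra. -/
def rr (g : SL) : T g.toSV →ₗ[ℚ] g.carrier := ev g ∘ₗ (EE g.toSV).ofConv

/-- The retraction composed with the inclusion. -/
def ir (g : SL) : Cv g.toSV (T g.toSV) := WithConv.toConv (io ∘ₗ rr g)

/-- The Poincaré–Birkhoff–Witt section, on the tensor algebra. -/
def st (g : SL) : Cv g.toSV (T g.toSV) := ser ex (ir g)

theorem ir_Fil (g : SL) : ir g ∈ Fil g.toSV (T g.toSV) 1 := by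
  rw [Fil_one]
  have := Fil_one.mp (EE_Fil (V := g.toSV))
  simp [ir, rr, this]

theorem st_mod (g : SL) {B : Type} [Ring B] [Algebra ℚ B] (π : T g.toSV →ₐ[ℚ] B)
    (hπ : ∀ x y, π (sbr (io x) (io y)) = π (io (g.br x y))) (u : T g.toSV) :
    π ((st g).ofConv u) = π u := by
  have e : post π (st g) = post π (idc g.toSV) := by
    rw [st, post_ser _ _ (ir_Fil g), ← exp_EE, post_ser _ _ EE_Fil]
    congr 1
    apply WithConv.ext; ext u
    exact (EE_mod g π hπ (EE_LV u)).symm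
  exact LinearMap.congr_fun (congrArg WithConv.ofConv e) u

/-- The super space of Lie elements. -/
def LS (V : SV) : SV where
  carrier := LV V
  P := (PL V).restrict (fun _ h => LV_PT h)
  PP x := Subtype.ext (PT_PT x.1)

/-- Expand Lie elements. -/
def phi (V : SV) : T (LS V) →ₐ[ℚ] T V := TensorAlgebra.lift ℚ (LV V).subtype

@[simp] theorem phi_io (m : LV V) : phi V (TensorAlgebra.ι ℚ (M := LS V |>.carrier) m) = m.1 :=
  TensorAlgebra.lift_ι_apply _ _

/-- Evaluate Lie elements. -/
def psi (g : SL) : T (LS g.toSV) →ₐ[ℚ] T g.toSV :=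
  TensorAlgebra.lift ℚ (io ∘ₗ ev g ∘ₗ (LV g.toSV).subtype)

@[simp] theorem psi_io (g : SL) (m : LV g.toSV) :
    psi g (TensorAlgebra.ι ℚ (M := LS g.toSV |>.carrier) m) = io (ev g m.1) :=
  TensorAlgebra.lift_ι_apply _ _

theorem HH_phi : HH (phi V) := by
  intro m
  refine ⟨?_, ?_⟩
  · erw [phi_io]; exact m.2
  · erw [phi_io, phi_io]; rfl

theorem HH_psi (g : SL) : HH (psi g) := by
  intro m
  refine ⟨?_, ?_⟩
  · erw [psi_io]; exact LV_lie (IsLie.io _)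
  · erw [psi_io, psi_io, PT_io, ← ev_PT]; rfl

theorem ev_phi_psi (g : SL) {n : ℕ} {u : T (LS g.toSV)} (hu : IsLie n u) :
    ev g (phi g.toSV u) = ev g (psi g u) := by
  induction hu with
  | io x => erw [phi_io, psi_io, ev_io]
  | br h h' hu hw =>
    rw [HH_sbr HH_phi, HH_sbr (HH_psi g), LV_ev g (HH_LV HH_phi h) (HH_LV HH_phi h'),
      LV_ev g (HH_LV (HH_psi g) h) (HH_LV (HH_psi g) h'), hu, hw]
  | add _ _ h h' => simp only [map_add, h, h']
  | smul c _ h => simp only [map_smul, h]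
  | zero n => simp

theorem rr_phi_psi (g : SL) (u : T (LS g.toSV)) : rr g (phi g.toSV u) = rr g (psi g u) := by
  simp only [rr, LinearMap.comp_apply, HH_EE HH_phi, HH_EE (HH_psi g)]
  exact LV_ind (C := fun z => ev g (phi g.toSV z) = ev g (psi g z))
    (fun _ _ h => ev_phi_psi g h) (fun _ _ h h' => by simp only [map_add, h, h']) (EE_LV u)

theorem st_phi_psi (g : SL) (u : T (LS g.toSV)) :
    (st g).ofConv (phi g.toSV u) = (st g).ofConv (psi g u) := by
  have e : pre (phi g.toSV).toLinearMap (HH_De HH_phi) (HH_epsL HH_phi) (st g) =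
      pre (psi g).toLinearMap (HH_De (HH_psi g)) (HH_epsL (HH_psi g)) (st g) := by
    rw [st, pre_ser _ _ _ (HH_oneL _) _ (ir_Fil g), pre_ser _ _ _ (HH_oneL _) _ (ir_Fil g)]
    congr 1
    apply WithConv.ext
    apply LinearMap.ext; intro u
    simp only [pre_apply, ir, LinearMap.comp_apply, AlgHom.toLinearMap_apply, rr_phi_psi g u]
  exact LinearMap.congr_fun (congrArg WithConv.ofConv e) u

theorem lift_phi_psi (g : SL) (a : T g.toSV) : ∃ a', phi g.toSV a' = a ∧ psi g a' = a := by
  induction a using TensorAlgebra.induction with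
  | algebraMap r => exact ⟨algebraMap ℚ _ r, by simp, by simp⟩
  | ι x =>
    refine ⟨TensorAlgebra.ι ℚ (M := LS g.toSV |>.carrier) ⟨io x, LV_lie (IsLie.io x)⟩, ?_, ?_⟩
    · erw [phi_io]
    · erw [psi_io, ev_io]
  | mul a b ha hb =>
    obtain ⟨a', h1, h2⟩ := ha
    obtain ⟨b', h3, h4⟩ := hb
    exact ⟨a' * b', by rw [map_mul, h1, h3], by rw [map_mul, h2, h4]⟩
  | add a b ha hb =>
    obtain ⟨a', h1, h2⟩ := ha
    obtain ⟨b', h3, h4⟩ := hb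
    exact ⟨a' + b', by rw [map_add, h1, h3], by rw [map_add, h2, h4]⟩

theorem st_rel (g : SL) (a b : T g.toSV) (x y : g.carrier) :
    (st g).ofConv (a * sbr (io x) (io y) * b) = (st g).ofConv (a * io (g.br x y) * b) := by
  obtain ⟨a', h1, h2⟩ := lift_phi_psi g a
  obtain ⟨b', h3, h4⟩ := lift_phi_psi g b
  have hs : sbr (io x) (io y) ∈ LV g.toSV := LV_lie (IsLie.br (IsLie.io x) (IsLie.io y))
  have := st_phi_psi g (a' * TensorAlgebra.ι ℚ (M := LS g.toSV |>.carrier)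
    ⟨sbr (io x) (io y), hs⟩ * b')
  simp only [map_mul, h1, h2, h3, h4] at this
  erw [phi_io, psi_io] at this
  rw [LV_ev g (LV_lie (IsLie.io x)) (LV_lie (IsLie.io y)), ev_io, ev_io] at this
  exact this

/-- Functoriality of the tensor algebra. -/
def TM {W : SV} (θ : V.carrier →ₗ[ℚ] W.carrier) : T V →ₐ[ℚ] T W :=
  TensorAlgebra.lift ℚ (io ∘ₗ θ)

@[simp] theorem TM_io {W : SV} (θ : V.carrier →ₗ[ℚ] W.carrier) (x) : TM θ (io x) = io (θ x) := by
  simp [TM]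

theorem HH_TM {W : SV} (θ : V.carrier →ₗ[ℚ] W.carrier) (h : ∀ x, θ (V.P x) = W.P (θ x)) :
    HH (TM θ) := by
  intro m
  rw [TM_io, TM_io, PT_io, h]
  exact ⟨LV_lie (IsLie.io _), rfl⟩

theorem TM_gr {W : SV} (θ : V.carrier →ₗ[ℚ] W.carrier) {n : ℕ} {u : T V} (hu : u ∈ gr V n) :
    TM θ u ∈ gr W n := by
  refine gr_le (fun n => (gr W n).comap (TM θ).toLinearMap) ?_ ?_ n hu
  · simp
  · intro n x u _ h
    simp only [Submodule.mem_comap, AlgHom.toLinearMap_apply, map_mul, TM_io] at h ⊢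
    exact mul_gr _ h

theorem ev_TM {g h : SL} (θ : g.carrier →ₗ[ℚ] h.carrier)
    (hb : ∀ x y, θ (g.br x y) = h.br (θ x) (θ y)) (u : T g.toSV) :
    ev h (TM (V := g.toSV) (W := h.toSV) θ u) = θ (ev g u) := by
  have e1 : Dg h ∘ₗ (TM (V := g.toSV) (W := h.toSV) θ).toLinearMap = θ ∘ₗ Dg g := by
    apply T_ext
    · simp
    · intro x u hu
      simp only [LinearMap.comp_apply, AlgHom.toLinearMap_apply] at hu ⊢
      have e : eps h.toSV (TM (V := g.toSV) (W := h.toSV) θ u) = eps g.toSV u := by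
        have : (eps h.toSV).comp (TM (V := g.toSV) (W := h.toSV) θ) = eps g.toSV := by
          apply TensorAlgebra.hom_ext; ext x; simp
        exact DFunLike.congr_fun this u
      rw [map_mul, TM_io, Dg_mul, Dg_mul, hu, map_add, hb, map_smul, e]
  have e2 : MI h.toSV ∘ₗ (TM (V := g.toSV) (W := h.toSV) θ).toLinearMap =
      (TM (V := g.toSV) (W := h.toSV) θ).toLinearMap ∘ₗ MI g.toSV := by
    apply gr_ext
    intro n u hu
    simp only [LinearMap.comp_apply, AlgHom.toLinearMap_apply]
    rw [MI_gr hu, MI_gr (TM_gr θ hu), map_smul]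
  have a1 := LinearMap.congr_fun e1 (MI g.toSV u)
  have a2 := LinearMap.congr_fun e2 u
  simp only [LinearMap.comp_apply, AlgHom.toLinearMap_apply] at a1 a2
  rw [ev, ev, LinearMap.comp_apply, LinearMap.comp_apply, a2, a1]

theorem st_TM {g h : SL} (θ : g.carrier →ₗ[ℚ] h.carrier) (hP : ∀ x, θ (g.P x) = h.P (θ x))
    (hb : ∀ x y, θ (g.br x y) = h.br (θ x) (θ y)) (u : T g.toSV) :
    (st h).ofConv (TM (V := g.toSV) (W := h.toSV) θ u) =
      TM (V := g.toSV) (W := h.toSV) θ ((st g).ofConv u) := by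
  have hH := HH_TM (V := g.toSV) (W := h.toSV) θ hP
  have e : pre (TM (V := g.toSV) (W := h.toSV) θ).toLinearMap (HH_De hH) (HH_epsL hH) (st h) =
      post (TM (V := g.toSV) (W := h.toSV) θ) (st g) := by
    rw [st, st, pre_ser _ _ _ (HH_oneL _) _ (ir_Fil h), post_ser _ _ (ir_Fil g)]
    congr 1
    apply WithConv.ext; ext u
    simp only [pre_apply, post_apply, ir, rr, LinearMap.comp_apply, AlgHom.toLinearMap_apply,
      HH_EE hH, ev_TM θ hb, TM_io]
  exact LinearMap.congr_fun (congrArg WithConv.ofConv e) u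

end UQ

namespace UQ
variable {V : SV}

/-- Auxiliary action for twisted derivations. -/
def tdAct (θ k : V.carrier →ₗ[ℚ] V.carrier) : V.carrier →ₗ[ℚ] Module.End ℚ (T V × T V) where
  toFun x := LinearMap.prod (lm x ∘ₗ LinearMap.fst ℚ _ _) (LinearMap.coprod (lm (k x)) (lm (θ x)))
  map_add' x y := by
    apply LinearMap.ext; intro p
    apply Prod.ext
    · show (io (x + y) * p.1 : T V) = io x * p.1 + io y * p.1
      rw [map_add, add_mul]
    · show (io (k (x + y)) * p.1 + io (θ (x + y)) * p.2 : T V)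
        = (io (k x) * p.1 + io (θ x) * p.2) + (io (k y) * p.1 + io (θ y) * p.2)
      simp only [map_add, add_mul]; abel
  map_smul' c x := by
    apply LinearMap.ext; intro p
    apply Prod.ext
    · show (io (c • x) * p.1 : T V) = c • (io x * p.1)
      rw [map_smul, smul_mul_assoc]
    · show (io (k (c • x)) * p.1 + io (θ (c • x)) * p.2 : T V)
        = c • (io (k x) * p.1 + io (θ x) * p.2)
      simp only [map_smul, smul_mul_assoc, smul_add]

/-- Twisted derivations of the tensor algebra. -/
def tder (θ k : V.carrier →ₗ[ℚ] V.carrier) : T V →ₗ[ℚ] T V :=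
  LinearMap.snd ℚ (T V) (T V) ∘ₗ trec (tdAct θ k) (1, 0)

theorem tder_fst (θ k : V.carrier →ₗ[ℚ] V.carrier) (u : T V) :
    (trec (tdAct θ k) (1, 0) u).1 = u := by
  have : LinearMap.fst ℚ (T V) (T V) ∘ₗ trec (tdAct θ k) (1, 0) = LinearMap.id := by
    apply T_ext
    · simp
    · intro x u h
      simp only [LinearMap.comp_apply] at h ⊢
      rw [trec_mul]
      show (io x * (trec (tdAct θ k) (1, 0) u).1 : T V) = _
      exact congrArg (io x * ·) h
  exact LinearMap.congr_fun this u

@[simp] theorem tder_one (θ k : V.carrier →ₗ[ℚ] V.carrier) : tder θ k 1 = 0 := by simp [tder]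

theorem tder_mul (θ k : V.carrier →ₗ[ℚ] V.carrier) (x) (u : T V) :
    tder θ k (io x * u) = io (k x) * u + io (θ x) * tder θ k u := by
  rw [tder, LinearMap.comp_apply, trec_mul]
  show (io (k x) * (trec (tdAct θ k) (1, 0) u).1 + io (θ x) * (trec (tdAct θ k) (1, 0) u).2 : T V)
    = _
  rw [tder_fst]; rfl

@[simp] theorem tder_io (θ k : V.carrier →ₗ[ℚ] V.carrier) (x) : tder θ k (io x) = io (k x) := by
  have := tder_mul θ k x 1
  simpa using this

theorem tder_mul' (θ k : V.carrier →ₗ[ℚ] V.carrier) (u w : T V) :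
    tder θ k (u * w) = tder θ k u * w + TM θ u * tder θ k w := by
  have : tder θ k ∘ₗ LinearMap.mulRight ℚ w = LinearMap.mulRight ℚ w ∘ₗ tder θ k +
      LinearMap.mulRight ℚ (tder θ k w) ∘ₗ (TM θ).toLinearMap := by
    apply T_ext
    · simp
    · intro x u h
      simp only [LinearMap.comp_apply, LinearMap.mulRight_apply, LinearMap.add_apply,
        AlgHom.toLinearMap_apply] at h ⊢
      rw [mul_assoc, tder_mul, h, tder_mul, map_mul, TM_io]
      noncomm_ring
  exact LinearMap.congr_fun this u

theorem tder_gr (θ k : V.carrier →ₗ[ℚ] V.carrier) {n : ℕ} {u : T V} (hu : u ∈ gr V n) :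
    tder θ k u ∈ gr V n := by
  refine gr_le (fun n => (gr V n).comap (tder θ k)) ?_ ?_ n hu
  · simp
  · intro n x u hu h
    simp only [Submodule.mem_comap, tder_mul] at h ⊢
    exact Submodule.add_mem _ (mul_gr _ hu) (mul_gr _ h)

/-- Super vector space with odd differential. -/
structure DSL extends SL where
  d : carrier →ₗ[ℚ] carrier
  dd : ∀ x, d (d x) = 0
  dP : ∀ x, d (P x) = - P (d x)
  d_br : ∀ x y, d (br x y) = br (d x) y + br (P x) (d y)

/-- A compatible odd map on a super space. -/
def OddM (V : SV) (d : V.carrier →ₗ[ℚ] V.carrier) : Prop := ∀ x, d (V.P x) = - V.P (d x)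

/-- The differential of the tensor algebra. -/
abbrev dT (V : SV) (d : V.carrier →ₗ[ℚ] V.carrier) : T V →ₗ[ℚ] T V := tder V.P d

variable {d : V.carrier →ₗ[ℚ] V.carrier}

theorem TM_P (u : T V) : TM V.P u = PT V u := rfl

theorem dT_PT (hd : OddM V d) (u : T V) : dT V d (PT V u) = - PT V (dT V d u) := by
  have : dT V d ∘ₗ PL V = - (PL V ∘ₗ dT V d) := by
    apply T_ext
    · simp
    · intro x u h
      simp only [LinearMap.comp_apply, LinearMap.neg_apply, AlgHom.toLinearMap_apply] at h ⊢
      rw [map_mul, PT_io, tder_mul, tder_mul, h, hd, map_add, map_mul, map_mul, PT_io, PT_io]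
      simp [add_comm]
  exact LinearMap.congr_fun this u

theorem dT_dT (hd : OddM V d) (h2 : ∀ x, d (d x) = 0) (u : T V) : dT V d (dT V d u) = 0 := by
  have : dT V d ∘ₗ dT V d = 0 := by
    apply T_ext
    · simp
    · intro x u h
      simp only [LinearMap.comp_apply, LinearMap.zero_apply] at h ⊢
      rw [tder_mul, map_add, tder_mul, tder_mul, h2, hd, h]
      simp
  exact LinearMap.congr_fun this u

theorem eps_dT (u : T V) : eps V (dT V d u) = 0 := by
  have : (eps V).toLinearMap ∘ₗ dT V d = 0 := by
    apply T_ext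
    · simp
    · intro x u h
      simp [tder_mul]
  exact LinearMap.congr_fun this u

theorem De_dT (hd : OddM V d) : De V ∘ₗ dT V d =
    (TensorProduct.map (dT V d) LinearMap.id + TensorProduct.map (PL V) (dT V d)) ∘ₗ De V := by
  apply T_ext
  · simp
  · intro x u h
    simp only [LinearMap.comp_apply] at h ⊢
    have hio : ∀ (x : V.carrier) u, De V (io x * u) = RR (io x) (De V u) := fun x u =>
      LV_prim (LV_lie (IsLie.io x)) u
    rw [tder_mul, map_add, hio, hio, h, hio]
    generalize De V u = z
    induction z with
    | zero => simp
    | add a b ha hb => simp only [map_add] at *; rw [← ha, ← hb]; abel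
    | tmul a b =>
      simp only [LinearMap.add_apply, TensorProduct.map_tmul, LinearMap.id_apply,
        AlgHom.toLinearMap_apply, RR_tmul, map_add, map_sub, map_smul, PT_io, tder_mul, map_mul,
        PT_PT, V.PP, hd x, dT_PT hd, TensorProduct.tmul_add,
        TensorProduct.add_tmul, TensorProduct.neg_tmul,
        TensorProduct.tmul_neg, map_neg, neg_mul]
      module

/-- Convolution elements commuting with parity and the differential. -/
def DC (d : V.carrier →ₗ[ℚ] V.carrier) (f : Cv V (T V)) : Prop :=
  (∀ u, f.ofConv (PT V u) = PT V (f.ofConv u)) ∧ ∀ u, f.ofConv (dT V d u) = dT V d (f.ofConv u)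

theorem DC_one : DC d (1 : Cv V (T V)) := by
  constructor
  · intro u; rw [cv_one, cv_one, eps_PT, map_smul, map_one]
  · intro u
    rw [cv_one, cv_one, eps_dT, map_smul, tder_one, smul_zero, zero_smul]

theorem DC_add {f h : Cv V (T V)} (hf : DC d f) (hh : DC d h) : DC d (f + h) := by
  constructor
  · intro u; simp [hf.1, hh.1]
  · intro u; simp [hf.2, hh.2]

theorem DC_smul (c : ℚ) {f : Cv V (T V)} (hf : DC d f) : DC d (c • f) := by
  constructor
  · intro u; simp [hf.1]
  · intro u; simp [hf.2]

theorem DC_mul (hd : OddM V d) {f h : Cv V (T V)} (hf : DC d f) (hh : DC d h) : DC d (f * h) := by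
  constructor
  · intro u
    rw [cv_mul, cv_mul]
    have := LinearMap.congr_fun (De_PT (V := V)) u
    simp only [LinearMap.comp_apply, AlgHom.toLinearMap_apply] at this
    rw [this]
    generalize De V u = z
    induction z with
    | zero => simp
    | add a b ha hb => simp only [map_add] at *; rw [← ha, ← hb]
    | tmul a b =>
      simp [hf.1, hh.1]
  · intro u
    rw [cv_mul, cv_mul]
    have := LinearMap.congr_fun (De_dT hd) u
    simp only [LinearMap.comp_apply] at this
    rw [this]
    generalize De V u = z
    induction z with
    | zero => simp
    | add a b ha hb => simp only [map_add] at *; rw [← ha, ← hb]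
    | tmul a b =>
      simp only [LinearMap.add_apply, TensorProduct.map_tmul, LinearMap.id_apply, map_add,
        AlgHom.toLinearMap_apply, LinearMap.mul'_apply, hf.1, hf.2, hh.2, tder_mul', TM_P]

theorem DC_pow (hd : OddM V d) {f : Cv V (T V)} (hf : DC d f) (n : ℕ) : DC d (f ^ n) := by
  induction n with
  | zero => rw [pow_zero]; exact DC_one
  | succ n ih => rw [pow_succ]; exact DC_mul hd ih hf

theorem DC_sum {f : ℕ → Cv V (T V)} (hf : ∀ n, DC d (f n)) (K : ℕ) :
    DC d (∑ k ∈ Finset.range K, f k) := by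
  induction K with
  | zero =>
    have := DC_smul 0 (DC_one (V := V) (d := d))
    simpa using this
  | succ n ih => rw [Finset.sum_range_succ]; exact DC_add ih (hf n)

theorem DC_ser (hd : OddM V d) (p : ℕ → ℚ) {f : Cv V (T V)} (hF : f ∈ Fil V (T V) 1)
    (hf : DC d f) : DC d (ser p f) := by
  have hs := DC_sum (fun k => DC_smul (p k) (DC_pow hd hf k))
  constructor
  · intro u
    obtain ⟨K1, e1⟩ := ser_ev p hF u
    obtain ⟨K2, e2⟩ := ser_ev p hF (PT V u)
    rw [e1 _ (le_max_left K1 K2), e2 _ (le_max_right K1 K2)]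
    exact (hs _).1 u
  · intro u
    obtain ⟨K1, e1⟩ := ser_ev p hF u
    obtain ⟨K2, e2⟩ := ser_ev p hF (dT V d u)
    rw [e1 _ (le_max_left K1 K2), e2 _ (le_max_right K1 K2)]
    exact (hs _).2 u

theorem DC_EE (hd : OddM V d) : DC d (EE V) := by
  apply DC_ser hd _ JJ_Fil
  have h1 : DC d (idc V) := ⟨fun u => rfl, fun u => rfl⟩
  have := DC_add h1 (DC_smul (-1) DC_one)
  rw [JJ, sub_eq_add_neg, ← neg_one_smul ℚ]
  exact this

theorem ev_dT (g : DSL) (u : T g.toSV) : ev g.toSL (dT g.toSV g.d u) = g.d (ev g.toSL u) := by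
  have e1 : Dg g.toSL ∘ₗ dT g.toSV g.d = g.d ∘ₗ Dg g.toSL := by
    apply T_ext
    · simp
    · intro x u hu
      simp only [LinearMap.comp_apply] at hu ⊢
      rw [tder_mul, map_add, Dg_mul, Dg_mul, Dg_mul, hu, eps_dT, map_add, g.d_br, map_smul]
      module
  have e2 : MI g.toSV ∘ₗ dT g.toSV g.d = dT g.toSV g.d ∘ₗ MI g.toSV := by
    apply gr_ext
    intro n u hu
    simp only [LinearMap.comp_apply]
    rw [MI_gr hu, MI_gr (tder_gr _ _ hu), map_smul]
  have a1 := LinearMap.congr_fun e1 (MI g.toSV u)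
  have a2 := LinearMap.congr_fun e2 u
  simp only [LinearMap.comp_apply] at a1 a2
  rw [ev, LinearMap.comp_apply, LinearMap.comp_apply, a2, a1]

theorem DC_st (g : DSL) : DC g.d (st g.toSL) := by
  apply DC_ser g.dP _ (ir_Fil _)
  have h := DC_EE (V := g.toSV) (d := g.d) g.dP
  constructor
  · intro u
    simp only [ir, rr, LinearMap.comp_apply, h.1, ev_PT, PT_io]
  · intro u
    simp only [ir, rr, LinearMap.comp_apply, h.2, ev_dT, tder_io]

end UQ

namespace UQ
variable {V : SV}

section en
variable {X : Type} [AddCommGroup X] [Module ℚ X]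

/-- Simultaneous eigenspaces. -/
def EN (τ P : X →ₗ[ℚ] X) (n : ℤ) : Submodule ℚ X where
  carrier := {x | τ x = (2 : ℚ) ^ n • x ∧ P x = (-1 : ℚ) ^ n • x}
  add_mem' := by
    rintro x y ⟨h1, h2⟩ ⟨h3, h4⟩
    exact ⟨by rw [map_add, h1, h3, smul_add], by rw [map_add, h2, h4, smul_add]⟩
  zero_mem' := by simp
  smul_mem' := by
    rintro c x ⟨h1, h2⟩
    exact ⟨by rw [map_smul, h1, smul_comm], by rw [map_smul, h2, smul_comm]⟩

theorem EN_indep (τ P : X →ₗ[ℚ] X) : iSupIndep (EN τ P) := by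
  have h1 := (Module.End.eigenspaces_iSupIndep τ).comp
    (f := fun n : ℤ => (2 : ℚ) ^ n) (zpow_right_injective₀ (by norm_num) (by norm_num))
  refine h1.mono ?_
  intro n x hx
  exact Module.End.mem_eigenspace_iff.mpr hx.1

theorem EN_int (τ P : X →ₗ[ℚ] X) (h : ⨆ n, EN τ P n = ⊤) : DirectSum.IsInternal (EN τ P) :=
  DirectSum.isInternal_submodule_of_iSupIndep_of_iSup_eq_top (EN_indep τ P) h
end en

/-- A super Lie algebra with differential and scaling automorphism coming from a grading. -/
structure GSL extends DSL where
  tau : carrier →ₗ[ℚ] carrier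
  tau' : carrier →ₗ[ℚ] carrier
  tau_tau' : ∀ x, tau (tau' x) = x
  tau_P : ∀ x, tau (P x) = P (tau x)
  tau_br : ∀ x y, tau (br x y) = br (tau x) (tau y)
  tau_d : ∀ x, d (tau x) = (2 : ℚ) • tau (d x)
  hsp : ⨆ n, EN tau P n = ⊤

variable (G : GSL)

/-- The kernel ideal. -/
def KK : Submodule ℚ (T G.toSV) where
  carrier := {u | ∀ a b, (st G.toSL).ofConv (a * u * b) = 0}
  add_mem' := by
    intro u w hu hw a b
    rw [mul_add, add_mul, map_add, hu, hw, add_zero]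
  zero_mem' := by intro a b; simp
  smul_mem' := by
    intro c u hu a b
    rw [mul_smul_comm, smul_mul_assoc, map_smul, hu, smul_zero]

variable {G}

theorem KK_st {u : T G.toSV} (hu : u ∈ KK G) : (st G.toSL).ofConv u = 0 := by
  simpa using hu 1 1

theorem KK_l {u : T G.toSV} (hu : u ∈ KK G) (a : T G.toSV) : a * u ∈ KK G := by
  intro b c
  rw [← mul_assoc]; exact hu _ _

theorem KK_r {u : T G.toSV} (hu : u ∈ KK G) (a : T G.toSV) : u * a ∈ KK G := by
  intro b c
  rw [← mul_assoc, mul_assoc]; exact hu _ _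

theorem KK_TM (θ θ' : G.carrier →ₗ[ℚ] G.carrier) (hP : ∀ x, θ (G.P x) = G.P (θ x))
    (hb : ∀ x y, θ (G.br x y) = G.br (θ x) (θ y)) (h : ∀ x, θ (θ' x) = x)
    {u : T G.toSV} (hu : u ∈ KK G) : TM (V := G.toSV) (W := G.toSV) θ u ∈ KK G := by
  intro a b
  have e : ∀ a, TM (V := G.toSV) (W := G.toSV) θ (TM (V := G.toSV) (W := G.toSV) θ' a) = a := by
    have : (TM (V := G.toSV) (W := G.toSV) θ).comp (TM (V := G.toSV) (W := G.toSV) θ')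
        = AlgHom.id ℚ _ := by
      apply TensorAlgebra.hom_ext; ext x; simp [h]
    exact fun a => DFunLike.congr_fun this a
  rw [← e a, ← e b, ← map_mul, ← map_mul, st_TM (g := G.toSL) (h := G.toSL) θ hP hb, hu, map_zero]

theorem KK_tau {u : T G.toSV} (hu : u ∈ KK G) : TM (V := G.toSV) (W := G.toSV) G.tau u ∈ KK G :=
  KK_TM G.tau G.tau' G.tau_P G.tau_br G.tau_tau' hu

theorem KK_P {u : T G.toSV} (hu : u ∈ KK G) : PT G.toSV u ∈ KK G :=
  KK_TM G.P G.P (fun _ => rfl) G.P_br G.PP hu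

theorem KK_d {u : T G.toSV} (hu : u ∈ KK G) : dT G.toSV G.d u ∈ KK G := by
  intro a b
  have e : a * dT G.toSV G.d u * b = dT G.toSV G.d (PT G.toSV a * u * b)
      - dT G.toSV G.d (PT G.toSV a) * u * b - a * PT G.toSV u * dT G.toSV G.d b := by
    rw [tder_mul', tder_mul', TM_P, TM_P, map_mul, PT_PT]
    noncomm_ring
  rw [e, map_sub, map_sub, (DC_st G.toDSL).2, hu, hu, KK_P hu]
  simp

theorem KK_rel (x y : G.carrier) :
    sbr (V := G.toSV) (io (V := G.toSV) x) (io (V := G.toSV) y) - io (V := G.toSV) (G.br x y)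
      ∈ KK G := by
  intro a b
  rw [mul_sub, sub_mul, map_sub, st_rel G.toSL, sub_self]

variable (G)

/-- The quotient algebra. -/
abbrev QA : Type := T G.toSV ⧸ KK G

/-- The quotient map. -/
abbrev qm : T G.toSV →ₗ[ℚ] QA G := (KK G).mkQ

/-- multiplication on the quotient. -/
def qmul : QA G →ₗ[ℚ] QA G →ₗ[ℚ] QA G :=
  (KK G).liftQ (((KK G).liftQ (((LinearMap.mul ℚ (T G.toSV)).compr₂ (qm G)).flip) (by
    intro u hu
    rw [LinearMap.mem_ker]
    ext a
    exact (Submodule.Quotient.mk_eq_zero _).mpr (KK_l hu a))).flip) (by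
    intro u hu
    rw [LinearMap.mem_ker]
    apply LinearMap.ext
    intro a
    obtain ⟨a, rfl⟩ := Submodule.mkQ_surjective _ a
    exact (Submodule.Quotient.mk_eq_zero _).mpr (KK_r hu a))

theorem qmul_mk (u w : T G.toSV) : qmul G (qm G u) (qm G w) = qm G (u * w) := rfl

/-- scaling on the quotient. -/
def qtau : QA G →ₗ[ℚ] QA G :=
  (KK G).mapQ (KK G) (TM (V := G.toSV) (W := G.toSV) G.tau).toLinearMap (fun _ h => KK_tau h)

/-- parity on the quotient. -/
def qP : QA G →ₗ[ℚ] QA G := (KK G).mapQ (KK G) (PL G.toSV) (fun _ h => KK_P h)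

/-- differential on the quotient. -/
def qd : QA G →ₗ[ℚ] QA G := (KK G).mapQ (KK G) (dT G.toSV G.d) (fun _ h => KK_d h)

theorem qtau_mk (u : T G.toSV) : qtau G (qm G u) = qm G (TM (V := G.toSV) (W := G.toSV) G.tau u) := rfl
theorem qP_mk (u : T G.toSV) : qP G (qm G u) = qm G (PT G.toSV u) := rfl
theorem qd_mk (u : T G.toSV) : qd G (qm G u) = qm G (dT G.toSV G.d u) := rfl

variable {G}

theorem qmul_mem {i j : ℤ} {x y : QA G} (hx : x ∈ EN (qtau G) (qP G) i)
    (hy : y ∈ EN (qtau G) (qP G) j) : qmul G x y ∈ EN (qtau G) (qP G) (i + j) := by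
  have h1 : ∀ x y, qtau G (qmul G x y) = qmul G (qtau G x) (qtau G y) := by
    intro x y
    obtain ⟨x, rfl⟩ := Submodule.mkQ_surjective _ x
    obtain ⟨y, rfl⟩ := Submodule.mkQ_surjective _ y
    rw [qmul_mk, qtau_mk, qtau_mk, qtau_mk, qmul_mk, map_mul]
  have h2 : ∀ x y, qP G (qmul G x y) = qmul G (qP G x) (qP G y) := by
    intro x y
    obtain ⟨x, rfl⟩ := Submodule.mkQ_surjective _ x
    obtain ⟨y, rfl⟩ := Submodule.mkQ_surjective _ y
    rw [qmul_mk, qP_mk, qP_mk, qP_mk, qmul_mk, map_mul]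
  constructor
  · rw [h1, hx.1, hy.1, map_smul, map_smul, LinearMap.smul_apply, smul_smul,
      zpow_add₀ (by norm_num), mul_comm]
  · rw [h2, hx.2, hy.2, map_smul, map_smul, LinearMap.smul_apply, smul_smul,
      zpow_add₀ (by norm_num), mul_comm]

theorem qone_mem : qm G 1 ∈ EN (qtau G) (qP G) 0 := by
  constructor
  · rw [qtau_mk, map_one]; simp
  · rw [qP_mk, map_one]; simp

theorem qio_mem {n : ℤ} {x : G.carrier} (hx : x ∈ EN G.tau G.P n) :
    qm G (io (V := G.toSV) x) ∈ EN (qtau G) (qP G) n := by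
  constructor
  · rw [qtau_mk, TM_io, hx.1, map_smul, map_smul]
  · rw [qP_mk, PT_io, hx.2, map_smul, map_smul]

theorem q_sup : ⨆ n, EN (qtau G) (qP G) n = ⊤ := by
  rw [eq_top_iff]
  rintro a -
  obtain ⟨u, rfl⟩ := Submodule.mkQ_surjective _ a
  refine T_span ((⨆ n, EN (qtau G) (qP G) n).comap (qm G)) ?_ ?_ u
  · exact Submodule.mem_iSup_of_mem 0 qone_mem
  · intro x u hu
    rw [Submodule.mem_comap] at hu ⊢
    have hx : x ∈ ⨆ n, EN G.tau G.P n := by rw [G.hsp]; trivial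
    rw [← qmul_mk]
    refine Submodule.iSup_induction _ (motive := fun x => qmul G (qm G (io (V := G.toSV) x)) (qm G u)
      ∈ ⨆ n, EN (qtau G) (qP G) n) hx ?_ ?_ ?_
    · intro i x hx
      refine Submodule.iSup_induction _ (motive := fun z => qmul G (qm G (io (V := G.toSV) x)) z
        ∈ ⨆ n, EN (qtau G) (qP G) n) hu ?_ ?_ ?_
      · intro j z hz
        exact Submodule.mem_iSup_of_mem (i + j) (qmul_mem (qio_mem hx) hz)
      · simp
      · intro z w hz hw
        rw [map_add]; exact Submodule.add_mem _ hz hw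
    · simp
    · intro z w hz hw
      rw [map_add, map_add, map_add, LinearMap.add_apply]; exact Submodule.add_mem _ hz hw

theorem tau_dT (u : T G.toSV) : dT G.toSV G.d (TM (V := G.toSV) (W := G.toSV) G.tau u) =
    (2 : ℚ) • TM (V := G.toSV) (W := G.toSV) G.tau (dT G.toSV G.d u) := by
  have : dT G.toSV G.d ∘ₗ (TM (V := G.toSV) (W := G.toSV) G.tau).toLinearMap =
      (2 : ℚ) • (TM (V := G.toSV) (W := G.toSV) G.tau).toLinearMap ∘ₗ dT G.toSV G.d := by
    apply T_ext
    · simp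
    · intro x u h
      simp only [LinearMap.comp_apply, LinearMap.smul_apply, AlgHom.toLinearMap_apply] at h ⊢
      rw [map_mul, TM_io, tder_mul, tder_mul, h, G.tau_d, map_add, map_mul, map_mul, TM_io, TM_io,
        G.tau_P, map_smul, mul_smul_comm, smul_mul_assoc, smul_add]
  exact LinearMap.congr_fun this u

theorem qd_mem {n : ℤ} {x : QA G} (hx : x ∈ EN (qtau G) (qP G) n) :
    qd G x ∈ EN (qtau G) (qP G) (n - 1) := by
  have h1 : ∀ x, qd G (qtau G x) = (2 : ℚ) • qtau G (qd G x) := by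
    intro x
    obtain ⟨x, rfl⟩ := Submodule.mkQ_surjective _ x
    rw [qd_mk, qtau_mk, qtau_mk, qd_mk, tau_dT, map_smul]
  have h2 : ∀ x, qd G (qP G x) = - qP G (qd G x) := by
    intro x
    obtain ⟨x, rfl⟩ := Submodule.mkQ_surjective _ x
    rw [qd_mk, qP_mk, qP_mk, qd_mk, dT_PT G.dP, map_neg]
  constructor
  · have := h1 x
    rw [hx.1, map_smul] at this
    rw [zpow_sub_one₀ (by norm_num), mul_comm, mul_smul, this, smul_smul]; norm_num
  · have := h2 x
    rw [hx.2, map_smul] at this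
    rw [zpow_sub_one₀ (by norm_num), mul_comm, mul_smul, this]; norm_num

variable (G)

/-- The quotient dg algebra. -/
def AA : DGAlgebra where
  carrier := QA G
  grading := EN (qtau G) (qP G)
  isDecomp := (EN_int _ _ q_sup).chooseDecomposition
  d := qd G
  d_mem n x hx := qd_mem hx
  d_sq := by
    apply LinearMap.ext; intro x
    obtain ⟨x, rfl⟩ := Submodule.mkQ_surjective _ x
    rw [LinearMap.comp_apply, qd_mk, qd_mk, dT_dT G.dP G.dd]; simp
  mul := qmul G
  one := qm G 1
  one_mem := qone_mem
  mul_mem i j x y hx hy := qmul_mem hx hy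
  mul_assoc' x y z := by
    obtain ⟨x, rfl⟩ := Submodule.mkQ_surjective _ x
    obtain ⟨y, rfl⟩ := Submodule.mkQ_surjective _ y
    obtain ⟨z, rfl⟩ := Submodule.mkQ_surjective _ z
    rw [qmul_mk, qmul_mk, qmul_mk, qmul_mk, mul_assoc]
  one_mul' x := by
    obtain ⟨x, rfl⟩ := Submodule.mkQ_surjective _ x
    rw [qmul_mk, one_mul]
  mul_one' x := by
    obtain ⟨x, rfl⟩ := Submodule.mkQ_surjective _ x
    rw [qmul_mk, mul_one]
  leibniz i x y hx := by
    have h : ∀ x y, qd G (qmul G x y) = qmul G (qd G x) y + qmul G (qP G x) (qd G y) := by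
      intro x y
      obtain ⟨x, rfl⟩ := Submodule.mkQ_surjective _ x
      obtain ⟨y, rfl⟩ := Submodule.mkQ_surjective _ y
      rw [qmul_mk, qd_mk, qd_mk, qd_mk, qP_mk, qmul_mk, qmul_mk, tder_mul', map_add, TM_P]
    rw [h, hx.2, map_smul, LinearMap.smul_apply]

/-- The section out of the quotient. -/
def qs : QA G →ₗ[ℚ] T G.toSV := (KK G).liftQ (st G.toSL).ofConv (fun _ h => KK_st h)

theorem qs_mk (u : T G.toSV) : qs G (qm G u) = (st G.toSL).ofConv u := rfl

theorem qs_d (x : QA G) : qs G (qd G x) = dT G.toSV G.d (qs G x) := by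
  obtain ⟨x, rfl⟩ := Submodule.mkQ_surjective _ x
  rw [qd_mk, qs_mk, qs_mk, (DC_st G.toDSL).2]

end UQ

namespace UQ
variable {V : SV}

section scal
variable (X : DGVect)

/-- The operator acting by `c n` in degree `n`. -/
def scal (c : ℤ → ℚ) : X.carrier →ₗ[ℚ] X.carrier :=
  (DirectSum.toModule ℚ ℤ X.carrier fun n => (c n) • (X.grading n).subtype).comp
    (DirectSum.decomposeLinearEquiv X.grading).toLinearMap

variable {X}

theorem scal_mem (c : ℤ → ℚ) {n : ℤ} {x : X.carrier} (hx : x ∈ X.grading n) :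
    scal X c x = c n • x := by
  lift x to X.grading n using hx
  simp only [scal, LinearMap.comp_apply, LinearEquiv.coe_coe, DirectSum.decomposeLinearEquiv_apply,
    DirectSum.decompose_coe]
  erw [DirectSum.toModule_lof]
  rfl

theorem hind {C : X.carrier → Prop} (h : ∀ n, ∀ x ∈ X.grading n, C x)
    (ha : ∀ x y, C x → C y → C (x + y)) (x : X.carrier) : C x :=
  DirectSum.Decomposition.inductionOn X.grading (h 0 0 (Submodule.zero_mem _))
    (fun m => h _ _ m.2) (fun x y => ha x y) x

theorem scal_eig {n : ℤ} {x : X.carrier} (hx : scal X (fun n => (2 : ℚ) ^ n) x = (2 : ℚ) ^ n • x) :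
    x ∈ X.grading n := by
  have key : ∀ m, ∀ x : X.carrier, ((DirectSum.decompose X.grading (scal X (fun n => (2 : ℚ) ^ n) x) m
      : X.grading m) : X.carrier) = (2 : ℚ) ^ m • (DirectSum.decompose X.grading x m : X.carrier) := by
    intro m
    refine hind ?_ ?_
    · intro k x hk
      rw [scal_mem _ hk, DirectSum.decompose_smul]
      by_cases h : k = m
      · subst h; rfl
      · rw [DirectSum.smul_apply, Submodule.coe_smul,
          DirectSum.decompose_of_mem_ne X.grading hk h, smul_zero, smul_zero]
    · intro x y h1 h2
      rw [map_add, DirectSum.decompose_add, DirectSum.add_apply, Submodule.coe_add, h1, h2,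
        DirectSum.decompose_add, DirectSum.add_apply, Submodule.coe_add, smul_add]
  have h0 : ∀ m, m ≠ n → (DirectSum.decompose X.grading x m : X.carrier) = 0 := by
    intro m hm
    have := key m x
    rw [hx, DirectSum.decompose_smul, DirectSum.smul_apply, Submodule.coe_smul] at this
    by_contra hne
    have := smul_left_injective ℚ hne this
    exact hm ((zpow_right_injective₀ (by norm_num : (0:ℚ) < 2) (by norm_num)) this).symm
  classical
  rw [← DirectSum.sum_support_decompose X.grading x]
  refine Submodule.sum_mem _ fun m hm => ?_
  by_cases h : m = n
  · subst h; exact SetLike.coe_mem _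
  · rw [h0 m h]; exact Submodule.zero_mem _

theorem ksign (i j : ℤ) : (-1 : ℚ) ^ (i * j) =
    (1/2) * (1 + (-1) ^ i + (-1) ^ j - (-1) ^ i * (-1) ^ j) := by
  rcases Int.even_or_odd i with hi | hi <;> rcases Int.even_or_odd j with hj | hj
  · rw [hi.neg_one_zpow, hj.neg_one_zpow, (hi.mul_right j).neg_one_zpow]; norm_num
  · rw [hi.neg_one_zpow, hj.neg_one_zpow, (hi.mul_right j).neg_one_zpow]; norm_num
  · rw [hi.neg_one_zpow, hj.neg_one_zpow, (hj.mul_left i).neg_one_zpow]; norm_num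
  · rw [hi.neg_one_zpow, hj.neg_one_zpow, (hi.mul hj).neg_one_zpow]; norm_num

/-- parity -/
abbrev pari (X : DGVect) := scal X (fun n => (-1 : ℚ) ^ n)
/-- scaling -/
abbrev scl (X : DGVect) := scal X (fun n => (2 : ℚ) ^ n)

end scal

/-- A dg Lie algebra in the operator form. -/
@[reducible] def toGSL (g : DGLie) : GSL where
  carrier := g.carrier
  P := pari g.toDGVect
  PP := by
    refine hind (X := g.toDGVect) ?_ ?_
    · intro n x hx
      rw [scal_mem _ hx, map_smul, scal_mem _ hx, smul_smul]
      rcases Int.even_or_odd n with h | h <;> rw [h.neg_one_zpow] <;> norm_num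
    · intro x y hx hy; rw [map_add, map_add, hx, hy]
  br := g.bracket
  P_br x y := by
    refine hind (X := g.toDGVect) (C := fun x => pari g.toDGVect (g.bracket x y) =
      g.bracket (pari g.toDGVect x) (pari g.toDGVect y)) ?_ ?_ x
    · intro i x hx
      refine hind (X := g.toDGVect) (C := fun y => pari g.toDGVect (g.bracket x y) =
        g.bracket (pari g.toDGVect x) (pari g.toDGVect y)) ?_ ?_ y
      · intro j y hy
        rw [scal_mem _ hx, scal_mem _ hy, scal_mem _ (g.bracket_mem i j x y hx hy), map_smul, map_smul,
          LinearMap.smul_apply, smul_smul, zpow_add₀ (by norm_num), mul_comm]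
      · intro y z h1 h2; simp only [map_add, h1, h2]
    · intro y z h1 h2; simp only [map_add, LinearMap.add_apply, h1, h2]
  anti x y := by
    refine hind (X := g.toDGVect) (C := fun x => g.bracket x y = -((1/2 : ℚ) • (g.bracket y x + g.bracket (pari g.toDGVect y) x + g.bracket y (pari g.toDGVect x) - g.bracket (pari g.toDGVect y) (pari g.toDGVect x)))) ?_ ?_ x
    · intro i x hx
      refine hind (X := g.toDGVect) (C := fun y => g.bracket x y = -((1/2 : ℚ) • (g.bracket y x + g.bracket (pari g.toDGVect y) x + g.bracket y (pari g.toDGVect x) - g.bracket (pari g.toDGVect y) (pari g.toDGVect x)))) ?_ ?_ y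
      · intro j y hy
        rw [scal_mem _ hx, scal_mem _ hy, g.antisymm i j x y hx hy, ksign]
        simp only [map_smul, LinearMap.smul_apply]
        module
      · intro y z h1 h2; simp only [map_add, LinearMap.add_apply]; rw [h1, h2]; module
    · intro y z h1 h2; simp only [map_add, LinearMap.add_apply]; rw [h1, h2]; module
  jac x y z := by
    refine hind (X := g.toDGVect) (C := fun x => g.bracket x (g.bracket y z) = g.bracket (g.bracket x y) z + (1/2 : ℚ) • (g.bracket y (g.bracket x z) + g.bracket (pari g.toDGVect y) (g.bracket x z) + g.bracket y (g.bracket (pari g.toDGVect x) z) - g.bracket (pari g.toDGVect y) (g.bracket (pari g.toDGVect x) z))) ?_ ?_ x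
    · intro i x hx
      refine hind (X := g.toDGVect) (C := fun y => g.bracket x (g.bracket y z) = g.bracket (g.bracket x y) z + (1/2 : ℚ) • (g.bracket y (g.bracket x z) + g.bracket (pari g.toDGVect y) (g.bracket x z) + g.bracket y (g.bracket (pari g.toDGVect x) z) - g.bracket (pari g.toDGVect y) (g.bracket (pari g.toDGVect x) z))) ?_ ?_ y
      · intro j y hy
        rw [scal_mem _ hx, scal_mem _ hy, g.jacobi i j x y z hx hy, ksign]
        simp only [map_smul, LinearMap.smul_apply]
        module
      · intro y z h1 h2; simp only [map_add, LinearMap.add_apply]; rw [h1, h2]; module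
    · intro y z h1 h2; simp only [map_add, LinearMap.add_apply]; rw [h1, h2]; module
  d := g.d
  dd x := LinearMap.congr_fun g.d_sq x
  dP := by
    refine hind (X := g.toDGVect) ?_ ?_
    · intro n x hx
      rw [scal_mem _ hx, map_smul, scal_mem _ (g.d_mem n x hx), zpow_sub_one₀ (by norm_num)]
      module
    · intro x y hx hy; simp only [map_add, hx, hy]; abel
  d_br x y := by
    refine hind (X := g.toDGVect) (C := fun x => g.d (g.bracket x y) = g.bracket (g.d x) y + g.bracket (pari g.toDGVect x) (g.d y)) ?_ ?_ x
    · intro i x hx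
      rw [scal_mem _ hx, g.leibniz i x y hx, map_smul, LinearMap.smul_apply]
    · intro x z h1 h2; simp only [map_add, LinearMap.add_apply, h1, h2]; abel
  tau := scl g.toDGVect
  tau' := scal g.toDGVect (fun n => ((2 : ℚ) ^ n)⁻¹)
  tau_tau' := by
    refine hind (X := g.toDGVect) ?_ ?_
    · intro n x hx
      rw [scal_mem _ hx, map_smul, scal_mem _ hx, smul_smul, inv_mul_cancel₀ (by positivity), one_smul]
    · intro x y hx hy; rw [map_add, map_add, hx, hy]
  tau_P := by
    refine hind (X := g.toDGVect) ?_ ?_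
    · intro n x hx
      rw [scal_mem _ hx, scal_mem _ hx, map_smul, map_smul, scal_mem _ hx, scal_mem _ hx, smul_comm]
    · intro x y hx hy; simp only [map_add, hx, hy]
  tau_br x y := by
    refine hind (X := g.toDGVect) (C := fun x => scl g.toDGVect (g.bracket x y) =
      g.bracket (scl g.toDGVect x) (scl g.toDGVect y)) ?_ ?_ x
    · intro i x hx
      refine hind (X := g.toDGVect) (C := fun y => scl g.toDGVect (g.bracket x y) =
        g.bracket (scl g.toDGVect x) (scl g.toDGVect y)) ?_ ?_ y
      · intro j y hy
        rw [scal_mem _ hx, scal_mem _ hy, scal_mem _ (g.bracket_mem i j x y hx hy), map_smul, map_smul,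
          LinearMap.smul_apply, smul_smul, zpow_add₀ (by norm_num), mul_comm]
      · intro y z h1 h2; simp only [map_add, h1, h2]
    · intro y z h1 h2; simp only [map_add, LinearMap.add_apply, h1, h2]
  tau_d := by
    refine hind (X := g.toDGVect) ?_ ?_
    · intro n x hx
      rw [scal_mem _ hx, map_smul, scal_mem _ (g.d_mem n x hx), zpow_sub_one₀ (by norm_num)]
      module
    · intro x y hx hy; simp only [map_add, hx, hy, smul_add]
  hsp := by
    rw [eq_top_iff]
    rintro x -
    refine hind (X := g.toDGVect) (C := fun x => x ∈ ⨆ n, EN (scl g.toDGVect) (pari g.toDGVect) n) ?_ ?_ x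
    · intro n x hx
      exact Submodule.mem_iSup_of_mem n ⟨scal_mem _ hx, scal_mem _ hx⟩
    · intro x y hx hy; exact Submodule.add_mem _ hx hy

end UQ

namespace UQ
variable {V : SV}

/-- The underlying ring of a dg algebra. -/
abbrev UA (A : DGAlgebra) : Type := A.carrier

instance (A : DGAlgebra) : Ring (UA A) :=
  { A.isAddCommGroup with
    mul := fun x y => A.mul x y
    one := A.one
    mul_assoc := A.mul_assoc'
    one_mul := A.one_mul'
    mul_one := A.mul_one'
    left_distrib := fun x y z => map_add (A.mul x) y z
    right_distrib := fun x y z => by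
      show A.mul (x + y) z = A.mul x z + A.mul y z
      rw [map_add, LinearMap.add_apply]
    zero_mul := fun x => by
      show A.mul 0 x = 0
      rw [map_zero, LinearMap.zero_apply]
    mul_zero := fun x => map_zero (A.mul x) }

instance (A : DGAlgebra) : Algebra ℚ (UA A) := Algebra.ofModule
  (fun r x y => by
    show A.mul (r • x) y = r • A.mul x y
    rw [map_smul, LinearMap.smul_apply])
  (fun r x y => map_smul (A.mul x) r y)

section
variable {g : DGLie} (U : UEnvData g)

/-- The sv of g -/
abbrev gV (g : DGLie) : SV := (toGSL g).toSV

/-- The projection from the tensor algebra, as an algebra map. -/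
def piA : T (gV g) →ₐ[ℚ] UA U.alg :=
  TensorAlgebra.lift ℚ (show (gV g).carrier →ₗ[ℚ] UA U.alg from U.ι)

/-- The projection from the tensor algebra. -/
def piL : T (gV g) →ₗ[ℚ] U.alg.carrier := (piA U).toLinearMap

theorem piL_one : piL U 1 = U.alg.one := map_one (piA U)
theorem piL_mul (u w) : piL U (u * w) = U.alg.mul (piL U u) (piL U w) := map_mul (piA U) u w
theorem piL_io (x : g.carrier) : piL U (io (V := gV g) x) = U.ι x := by
  show piA U (TensorAlgebra.ι ℚ x) = _
  rw [piA, TensorAlgebra.lift_ι_apply]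

theorem sgn_rel {A : DGAlgebra} (φ : g.carrier →ₗ[ℚ] A.carrier) (hφ : IsLieToAlgHom g A φ)
    (x y : g.carrier) : φ (g.bracket x y) = A.mul (φ x) (φ y) - (1/2 : ℚ) •
      (A.mul (φ y) (φ x) + A.mul (φ (pari g.toDGVect y)) (φ x) + A.mul (φ y) (φ (pari g.toDGVect x))
        - A.mul (φ (pari g.toDGVect y)) (φ (pari g.toDGVect x))) := by
  refine hind (X := g.toDGVect) (C := fun x => φ (g.bracket x y) = A.mul (φ x) (φ y) - (1/2 : ℚ) •
      (A.mul (φ y) (φ x) + A.mul (φ (pari g.toDGVect y)) (φ x) + A.mul (φ y) (φ (pari g.toDGVect x))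
        - A.mul (φ (pari g.toDGVect y)) (φ (pari g.toDGVect x)))) ?_ ?_ x
  · intro i x hx
    refine hind (X := g.toDGVect) (C := fun y => φ (g.bracket x y) = A.mul (φ x) (φ y) - (1/2 : ℚ) •
      (A.mul (φ y) (φ x) + A.mul (φ (pari g.toDGVect y)) (φ x) + A.mul (φ y) (φ (pari g.toDGVect x))
        - A.mul (φ (pari g.toDGVect y)) (φ (pari g.toDGVect x)))) ?_ ?_ y
    · intro j y hy
      rw [scal_mem _ hx, scal_mem _ hy, hφ.2.2 i j x y hx hy, ksign]
      simp only [map_smul, LinearMap.smul_apply]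
      module
    · intro y z h1 h2; simp only [map_add, LinearMap.add_apply]; rw [h1, h2]; module
  · intro y z h1 h2; simp only [map_add, LinearMap.add_apply]; rw [h1, h2]; module

theorem piL_sbr (x y : g.carrier) :
    piL U (sbr (V := gV g) (io (V := gV g) x) (io (V := gV g) y)) =
      piL U (io (V := gV g) (g.bracket x y)) := by
  rw [piL_io, sgn_rel U.ι U.ι_lie, sbr_apply, PT_io, PT_io]
  simp only [map_sub, map_smul, map_add, piL_mul]
  rw [piL_io U x, piL_io U y, piL_io U ((gV g).P x), piL_io U ((gV g).P y)]

theorem piL_st (u : T (gV g)) : piL U ((st (toGSL g).toSL).ofConv u) = piL U u :=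
  st_mod (toGSL g).toSL (piA U) (piL_sbr U) u

theorem piL_d (u : T (gV g)) : piL U (dT (gV g) g.d u) = U.alg.d (piL U u) := by
  have : piL U ∘ₗ dT (gV g) g.d = U.alg.d ∘ₗ piL U := by
    have one0 : U.alg.d U.alg.one = 0 := by
      have := U.alg.leibniz 0 U.alg.one U.alg.one U.alg.one_mem
      rw [U.alg.one_mul', U.alg.mul_one', U.alg.one_mul', zpow_zero, one_smul] at this
      simpa using this
    apply T_ext
    · simp [piL_one, one0]
    · intro x u h
      simp only [LinearMap.comp_apply] at h ⊢
      rw [tder_mul, map_add, piL_mul, piL_mul, piL_mul, h, piL_io, piL_io, piL_io]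
      refine hind (X := g.toDGVect) (C := fun x => U.alg.mul (U.ι (g.d x)) (piL U u) +
        U.alg.mul (U.ι (pari g.toDGVect x)) (U.alg.d (piL U u)) =
        U.alg.d (U.alg.mul (U.ι x) (piL U u))) ?_ ?_ x
      · intro n x hx
        rw [U.alg.leibniz n _ _ (U.ι_lie.1 n x hx), scal_mem _ hx, map_smul, map_smul,
          LinearMap.smul_apply]
        congr 3
        exact LinearMap.congr_fun U.ι_lie.2.1 x
      · intro x y h1 h2
        simp only [map_add, LinearMap.add_apply]; rw [← h1, ← h2]; abel
  exact LinearMap.congr_fun this u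

theorem scl_mul (A : DGAlgebra) (x y : A.carrier) : scl A.toDGVect (A.mul x y) =
    A.mul (scl A.toDGVect x) (scl A.toDGVect y) := by
  refine hind (X := A.toDGVect) (C := fun x => scl A.toDGVect (A.mul x y) =
      A.mul (scl A.toDGVect x) (scl A.toDGVect y)) ?_ ?_ x
  · intro i x hx
    refine hind (X := A.toDGVect) (C := fun y => scl A.toDGVect (A.mul x y) =
        A.mul (scl A.toDGVect x) (scl A.toDGVect y)) ?_ ?_ y
    · intro j y hy
      rw [scal_mem _ hx, scal_mem _ hy, scal_mem _ (A.mul_mem i j x y hx hy), map_smul, map_smul,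
        LinearMap.smul_apply, smul_smul, zpow_add₀ (by norm_num), mul_comm]
    · intro y z h1 h2; simp only [map_add, h1, h2]
  · intro y z h1 h2; simp only [map_add, LinearMap.add_apply, h1, h2]

theorem scal_hom {X Y : DGVect} (c : ℤ → ℚ) (φ : X.carrier →ₗ[ℚ] Y.carrier)
    (h : ∀ n, ∀ x ∈ X.grading n, φ x ∈ Y.grading n) (x : X.carrier) :
    φ (scal X c x) = scal Y c (φ x) := by
  refine hind (X := X) (C := fun x => φ (scal X c x) = scal Y c (φ x)) ?_ ?_ x
  · intro n x hx
    rw [scal_mem _ hx, scal_mem _ (h n x hx), map_smul]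
  · intro x y h1 h2; simp only [map_add, h1, h2]

theorem piL_tau (u : T (gV g)) : piL U (TM (V := gV g) (W := gV g) (toGSL g).tau u) =
    scl U.alg.toDGVect (piL U u) := by
  have : piL U ∘ₗ (TM (V := gV g) (W := gV g) (toGSL g).tau).toLinearMap =
      scl U.alg.toDGVect ∘ₗ piL U := by
    apply T_ext
    · simp only [LinearMap.comp_apply, AlgHom.toLinearMap_apply, map_one, piL_one]
      rw [scal_mem _ U.alg.one_mem]; simp
    · intro x u h
      simp only [LinearMap.comp_apply, AlgHom.toLinearMap_apply] at h ⊢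
      rw [map_mul, piL_mul, h, piL_mul, scl_mul, TM_io, piL_io, piL_io]
      congr 2
      exact scal_hom (X := g.toDGVect) (Y := U.alg.toDGVect) _ U.ι U.ι_lie.1 x
  exact LinearMap.congr_fun this u

theorem KK_piL {u : T (gV g)} (hu : u ∈ KK (toGSL g)) : piL U u = 0 := by
  rw [← piL_st, KK_st hu, map_zero]

/-- The comparison map from the model. -/
def HL : QA (toGSL g) →ₗ[ℚ] U.alg.carrier := (KK (toGSL g)).liftQ (piL U) (fun _ h => KK_piL U h)

theorem HL_mk (u : T (gV g)) : HL U (qm (toGSL g) u) = piL U u := rfl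

/-- The comparison map from the model. -/
def HH' : DGAlgebraHom (AA (toGSL g)) U.alg where
  toLinearMap := HL U
  mem n x hx := by
    apply scal_eig
    have h1 : ∀ x : QA (toGSL g), HL U (qtau _ x) = scl U.alg.toDGVect (HL U x) := by
      intro x
      obtain ⟨x, rfl⟩ := Submodule.mkQ_surjective _ x
      rw [qtau_mk, HL_mk, HL_mk, piL_tau]
    refine (h1 x).symm.trans ?_
    exact (congrArg (HL U) hx.1).trans (map_smul (HL U) _ _)
  chain := by
    apply LinearMap.ext; intro x
    obtain ⟨x, rfl⟩ := Submodule.mkQ_surjective _ x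
    exact piL_d U x
  map_one := piL_one U
  map_mul x y := by
    obtain ⟨x, rfl⟩ := Submodule.mkQ_surjective _ x
    obtain ⟨y, rfl⟩ := Submodule.mkQ_surjective _ y
    exact piL_mul U x y

variable (g) in
/-- The inclusion into the model. -/
def jL : g.carrier →ₗ[ℚ] QA (toGSL g) := qm (toGSL g) ∘ₗ io (V := gV g)

theorem jL_lie : IsLieToAlgHom g (AA (toGSL g)) (jL g) := by
  refine ⟨?_, ?_, ?_⟩
  · intro n x hx
    exact qio_mem (G := toGSL g) ⟨scal_mem _ hx, scal_mem _ hx⟩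
  · apply LinearMap.ext; intro x
    show qm (toGSL g) (io (V := gV g) (g.d x)) = qm (toGSL g) (dT (gV g) g.d (io (V := gV g) x))
    rw [tder_io]
  · intro i j x y hx hy
    have h := KK_rel (G := toGSL g) x y
    rw [← Submodule.Quotient.mk_eq_zero, Submodule.Quotient.mk_sub, sub_eq_zero] at h
    show qm (toGSL g) (io (V := gV g) (g.bracket x y)) =
      qm (toGSL g) (io (V := gV g) x * io (V := gV g) y) - (-1 : ℚ) ^ (i * j) •
      qm (toGSL g) (io (V := gV g) y * io (V := gV g) x)
    refine h.symm.trans ?_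
    show qm (toGSL g) (sbr (V := gV g) (io (V := gV g) x) (io (V := gV g) y)) = _
    have hx' : (gV g).P x = (-1 : ℚ) ^ i • x := scal_mem _ hx
    have hy' : (gV g).P y = (-1 : ℚ) ^ j • y := scal_mem _ hy
    rw [sbr_apply, PT_io, PT_io, hx', hy', ksign]
    simp only [map_sub, map_smul, map_add, smul_mul_assoc, mul_smul_comm]
    module

theorem exG : ∃ K : DGAlgebraHom U.alg (AA (toGSL g)), K.toLinearMap.comp U.ι = jL g :=
  (U.univ _ _ jL_lie).exists

/-- The comparison map into the model. -/
def KU : DGAlgebraHom U.alg (AA (toGSL g)) := (exG U).choose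

theorem KU_ι (x : g.carrier) : (KU U).toLinearMap (U.ι x) = qm (toGSL g) (io (V := gV g) x) :=
  LinearMap.congr_fun (exG U).choose_spec x

/-- composition. -/
def hcomp {A B C : DGAlgebra} (F : DGAlgebraHom B C) (E : DGAlgebraHom A B) : DGAlgebraHom A C where
  toLinearMap := F.toLinearMap ∘ₗ E.toLinearMap
  mem n x hx := F.mem n _ (E.mem n x hx)
  chain := by rw [LinearMap.comp_assoc, E.chain, ← LinearMap.comp_assoc, F.chain, LinearMap.comp_assoc]
  map_one := by rw [LinearMap.comp_apply, E.map_one, F.map_one]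
  map_mul x y := by simp only [LinearMap.comp_apply, E.map_mul, F.map_mul]

/-- identity. -/
def hid (A : DGAlgebra) : DGAlgebraHom A A where
  toLinearMap := LinearMap.id
  mem n x hx := hx
  chain := rfl
  map_one := rfl
  map_mul x y := rfl

theorem HK (x : U.alg.carrier) : HL U ((KU U).toLinearMap x) = x := by
  have h := (U.univ U.alg U.ι U.ι_lie).unique (y₁ := hcomp (HH' U) (KU U)) (y₂ := hid U.alg)
    (by
      apply LinearMap.ext; intro x
      show HL U ((KU U).toLinearMap (U.ι x)) = _
      rw [KU_ι, HL_mk, piL_io]) rfl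
  exact LinearMap.congr_fun (congrArg DGAlgebraHom.toLinearMap h) x

theorem KU_pi (u : T (gV g)) : (KU U).toLinearMap (piL U u) = qm (toGSL g) u := by
  have : (KU U).toLinearMap ∘ₗ piL U = qm (toGSL g) := by
    apply T_ext
    · show (KU U).toLinearMap (piL U 1) = _
      rw [piL_one, (KU U).map_one]; rfl
    · intro x u h
      have h : (KU U).toLinearMap (piL U u) = qm (toGSL g) u := h
      show (KU U).toLinearMap (piL U (io (V := gV g) x * u)) = _
      rw [piL_mul, (KU U).map_mul, h, piL_io, KU_ι]; rfl
  exact LinearMap.congr_fun this u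

theorem piL_surj (x : U.alg.carrier) : ∃ u, piL U u = x := by
  obtain ⟨u, hu⟩ := Submodule.mkQ_surjective _ ((KU U).toLinearMap x)
  exact ⟨u, by rw [← HL_mk]; erw [hu]; exact HK U x⟩

/-- The section. -/
def sU : U.alg.carrier →ₗ[ℚ] T (gV g) := qs (toGSL g) ∘ₗ (KU U).toLinearMap

theorem sU_pi (u : T (gV g)) : sU U (piL U u) = (st (toGSL g).toSL).ofConv u := by
  show qs (toGSL g) ((KU U).toLinearMap (piL U u)) = _
  rw [KU_pi]; rfl

theorem pi_sU (x : U.alg.carrier) : piL U (sU U x) = x := by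
  obtain ⟨u, rfl⟩ := piL_surj U x
  rw [sU_pi, piL_st]

theorem sU_d (x : U.alg.carrier) : sU U (U.alg.d x) = dT (gV g) g.d (sU U x) := by
  obtain ⟨u, rfl⟩ := piL_surj U x
  rw [← piL_d, sU_pi, sU_pi]
  exact (DC_st (toGSL g).toDSL).2 u
end

theorem retract (g h : DGLie)
    (f : g.carrier →ₗ[ℚ] h.carrier) (hLie : IsDGLieHom g h f)
    (Ug : UEnvData g) (Uh : UEnvData h)
    (F : DGAlgebraHom Ug.alg Uh.alg)
    (hF : F.toLinearMap.comp Ug.ι = Uh.ι.comp f)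
    (hq : IsQuasiIso (dT (gV g) g.d) (dT (gV h) h.d) (TM (V := gV g) (W := gV h) f).toLinearMap) :
    IsQuasiIso Ug.alg.d Uh.alg.d F.toLinearMap := by
  have n1 : ∀ u, F.toLinearMap (piL Ug u) = piL Uh (TM (V := gV g) (W := gV h) f u) := by
    have : F.toLinearMap ∘ₗ piL Ug = piL Uh ∘ₗ (TM (V := gV g) (W := gV h) f).toLinearMap := by
      apply T_ext
      · simp only [LinearMap.comp_apply, AlgHom.toLinearMap_apply, map_one, piL_one, F.map_one]
      · intro x u e
        simp only [LinearMap.comp_apply, AlgHom.toLinearMap_apply] at e ⊢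
        rw [piL_mul, F.map_mul, map_mul, piL_mul, e, TM_io, piL_io, piL_io]
        congr 2
        exact LinearMap.congr_fun hF x
    exact fun u => LinearMap.congr_fun this u
  have n2 : ∀ x, TM (V := gV g) (W := gV h) f (sU Ug x) = sU Uh (F.toLinearMap x) := by
    intro x
    obtain ⟨u, rfl⟩ := piL_surj Ug x
    rw [n1, sU_pi, sU_pi]
    exact (st_TM (g := (toGSL g).toSL) (h := (toGSL h).toSL) f
      (fun x => scal_hom (X := g.toDGVect) (Y := h.toDGVect) _ f hLie.1 x) hLie.2.2 u).symm
  constructor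
  · rintro x hx ⟨y, hy⟩
    obtain ⟨z, hz⟩ := hq.1 (sU Ug x) (by rw [← sU_d, hx, map_zero]) ⟨sU Uh y, by
      rw [← sU_d, ← hy, ← n2]; rfl⟩
    exact ⟨piL Ug z, by rw [← piL_d, ← hz, pi_sU]⟩
  · intro w hw
    obtain ⟨x, hx, y, hy⟩ := hq.2 (sU Uh w) (by rw [← sU_d, hw, map_zero])
    refine ⟨piL Ug x, by rw [← piL_d, hx, map_zero], piL Uh y, ?_⟩
    rw [← piL_d, ← hy, map_sub, pi_sU, n1]; rfl

end UQ

namespace UQ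
variable {V : SV}

section alg
variable {X : Type} [AddCommGroup X] [Module ℚ X]

theorem exists_contr (D : X →ₗ[ℚ] X) (hD : ∀ x, D (D x) = 0) (hac : ∀ x, D x = 0 → ∃ y, x = D y) :
    ∃ K : X →ₗ[ℚ] X, ∀ x, D (K x) + K (D x) = x := by
  obtain ⟨s, hs⟩ := LinearMap.exists_rightInverse_of_surjective D.rangeRestrict
    (LinearMap.range_rangeRestrict D)
  obtain ⟨S, hS⟩ := LinearMap.exists_extend s
  have key : ∀ x, D (S (D x)) = D x := by
    intro x
    have h1 : S (D x) = s (D.rangeRestrict x) := LinearMap.congr_fun hS (D.rangeRestrict x)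
    rw [h1]
    exact congrArg Subtype.val (LinearMap.congr_fun hs (D.rangeRestrict x))
  refine ⟨S ∘ₗ (LinearMap.id - S ∘ₗ D), fun x => ?_⟩
  simp only [LinearMap.comp_apply, LinearMap.sub_apply, LinearMap.id_apply, hD, map_zero, sub_zero]
  obtain ⟨y, hy⟩ := hac (x - S (D x)) (by rw [map_sub, key, sub_self])
  rw [hy, key, ← hy]; abel

variable {Y : Type} [AddCommGroup Y] [Module ℚ Y]

theorem exists_hinv (dX : X →ₗ[ℚ] X) (dY : Y →ₗ[ℚ] Y) (hX : ∀ x, dX (dX x) = 0)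
    (hY : ∀ x, dY (dY x) = 0) (f : X →ₗ[ℚ] Y) (hf : ∀ x, f (dX x) = dY (f x))
    (hq : IsQuasiIso dX dY f) :
    ∃ (c : Y →ₗ[ℚ] X) (k : X →ₗ[ℚ] X) (l : Y →ₗ[ℚ] Y), (∀ y, c (dY y) = dX (c y)) ∧
      (∀ x, dX (k x) + k (dX x) = x - c (f x)) ∧ (∀ y, dY (l y) + l (dY y) = y - f (c y)) := by
  let D : (Y × X) →ₗ[ℚ] (Y × X) := LinearMap.prod (LinearMap.coprod dY f)
    (-(dX ∘ₗ LinearMap.snd ℚ Y X))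
  have hDa : ∀ y x, D (y, x) = (dY y + f x, - dX x) := fun y x => rfl
  obtain ⟨K, hK⟩ := exists_contr D (by
    rintro ⟨y, x⟩
    rw [hDa, hDa]
    simp [hX, hY, hf]) (by
    rintro ⟨w, v⟩ h
    rw [hDa, Prod.mk_eq_zero, neg_eq_zero] at h
    obtain ⟨z, hz⟩ := hq.1 v h.2 ⟨-w, by rw [map_neg]; exact (neg_eq_of_add_eq_zero_right h.1).symm⟩
    obtain ⟨x, hx, y, hy⟩ := hq.2 (w + f z) (by rw [map_add, ← hf, ← hz]; exact h.1)
    refine ⟨(y, x - z), ?_⟩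
    rw [hDa, ← hy, map_sub, map_sub, hx, ← hz]
    ext
    · simp
    · simp)
  have h1 : ∀ y, (dY (K (y, 0)).1 + f (K (y, 0)).2, - dX (K (y, 0)).2) + K (dY y, 0) = (y, 0) := by
    intro y
    have := hK (y, 0)
    rw [hDa y 0, map_zero, map_zero, add_zero, neg_zero] at this
    exact this
  have h2 : ∀ x, (dY (K (0, x)).1 + f (K (0, x)).2, - dX (K (0, x)).2) + K (f x, - dX x) = (0, x) := by
    intro x
    have := hK (0, x)
    rw [hDa 0 x, map_zero, zero_add] at this
    exact this
  refine ⟨LinearMap.snd ℚ Y X ∘ₗ K ∘ₗ LinearMap.inl ℚ Y X,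
    -(LinearMap.snd ℚ Y X ∘ₗ K ∘ₗ LinearMap.inr ℚ Y X),
    LinearMap.fst ℚ Y X ∘ₗ K ∘ₗ LinearMap.inl ℚ Y X, ?_, ?_, ?_⟩
  · intro y
    have := congrArg Prod.snd (h1 y)
    exact (neg_add_eq_zero.mp this).symm
  · intro x
    have := congrArg Prod.snd (h2 x)
    have e : K (f x, - dX x) = K (f x, 0) - K (0, dX x) := by rw [← map_sub]; simp
    rw [e] at this
    have this : - dX (K (0, x)).2 + ((K (f x, 0)).2 - (K (0, dX x)).2) = x := this
    show dX (-(K (0, x)).2) + -(K (0, dX x)).2 = x - (K (f x, 0)).2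
    rw [map_neg]
    nth_rewrite 3 [← this]
    abel
  · intro y
    have := congrArg Prod.fst (h1 y)
    have this : dY (K (y, 0)).1 + f (K (y, 0)).2 + (K (dY y, 0)).1 = y := this
    show dY (K (y, 0)).1 + (K (dY y, 0)).1 = y - f (K (y, 0)).2
    nth_rewrite 3 [← this]
    abel
end alg

theorem TM_d {V W : SV} {dV : V.carrier →ₗ[ℚ] V.carrier} {dW : W.carrier →ₗ[ℚ] W.carrier}
    (f : V.carrier →ₗ[ℚ] W.carrier) (hP : ∀ x, f (V.P x) = W.P (f x))
    (hf : ∀ x, f (dV x) = dW (f x)) (u : T V) : TM f (dT V dV u) = dT W dW (TM f u) := by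
  have : (TM f).toLinearMap ∘ₗ dT V dV = dT W dW ∘ₗ (TM f).toLinearMap := by
    apply T_ext
    · simp
    · intro x u h
      simp only [LinearMap.comp_apply, AlgHom.toLinearMap_apply] at h ⊢
      rw [tder_mul, map_add, map_mul, map_mul, map_mul, h, TM_io, TM_io, TM_io, tder_mul, hP, hf]
  exact LinearMap.congr_fun this u

theorem T_htpy {V : SV} {d : V.carrier →ₗ[ℚ] V.carrier} (hd : ∀ x, d (V.P x) = - V.P (d x))
    (θ k : V.carrier →ₗ[ℚ] V.carrier) (hθ : ∀ x, θ (V.P x) = V.P (θ x))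
    (hθd : ∀ x, θ (d x) = d (θ x)) (hk : ∀ x, k (V.P x) = - V.P (k x))
    (h : ∀ x, d (k x) + k (d x) = x - θ x) (u : T V) :
    dT V d (tder (V.P ∘ₗ θ) k u) + tder (V.P ∘ₗ θ) k (dT V d u) = u - TM θ u := by
  have : dT V d ∘ₗ tder (V.P ∘ₗ θ) k + tder (V.P ∘ₗ θ) k ∘ₗ dT V d =
      LinearMap.id - (TM θ).toLinearMap := by
    apply T_ext
    · simp
    · intro x u e
      simp only [LinearMap.comp_apply, LinearMap.add_apply, LinearMap.sub_apply, LinearMap.id_apply,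
        AlgHom.toLinearMap_apply] at e ⊢
      simp only [tder_mul, map_add, LinearMap.comp_apply, hθ, V.PP, hk, hd, hθd, map_mul, TM_io,
        map_neg, neg_mul]
      have h' : (io (k (d x)) : T V) = io x - io (θ x) - io (d (k x)) := by
        rw [← map_sub, ← map_sub, ← h]; congr 1; abel
      have e' : tder (V.P ∘ₗ θ) k (dT V d u) = u - TM θ u - dT V d (tder (V.P ∘ₗ θ) k u) := by
        rw [← e]; abel
      rw [e', h']
      noncomm_ring
  exact LinearMap.congr_fun this u

theorem T_qi {V W : SV} {dV : V.carrier →ₗ[ℚ] V.carrier} {dW : W.carrier →ₗ[ℚ] W.carrier}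
    (hV : ∀ x, dV (V.P x) = - V.P (dV x)) (hW : ∀ x, dW (W.P x) = - W.P (dW x))
    (hVV : ∀ x, dV (dV x) = 0) (hWW : ∀ x, dW (dW x) = 0)
    (f : V.carrier →ₗ[ℚ] W.carrier) (hP : ∀ x, f (V.P x) = W.P (f x))
    (hf : ∀ x, f (dV x) = dW (f x)) (hq : IsQuasiIso dV dW f) :
    IsQuasiIso (dT V dV) (dT W dW) (TM f).toLinearMap := by
  obtain ⟨c0, k0, l0, hc0, hk0, hl0⟩ := exists_hinv dV dW hVV hWW f hf hq
  obtain ⟨c, hc, hcP, k, hkP, hk, l, hlP, hl⟩ : ∃ c : W.carrier →ₗ[ℚ] V.carrier,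
      (∀ y, c (dW y) = dV (c y)) ∧ (∀ y, c (W.P y) = V.P (c y)) ∧
      ∃ k : V.carrier →ₗ[ℚ] V.carrier, (∀ x, k (V.P x) = - V.P (k x)) ∧
      (∀ x, dV (k x) + k (dV x) = x - c (f x)) ∧
      ∃ l : W.carrier →ₗ[ℚ] W.carrier, (∀ x, l (W.P x) = - W.P (l x)) ∧
      (∀ x, dW (l x) + l (dW x) = x - f (c x)) := by
    refine ⟨(1/2 : ℚ) • (c0 + V.P ∘ₗ c0 ∘ₗ W.P), ?_, ?_,
      (1/2 : ℚ) • (k0 - V.P ∘ₗ k0 ∘ₗ V.P), ?_, ?_, (1/2 : ℚ) • (l0 - W.P ∘ₗ l0 ∘ₗ W.P), ?_, ?_⟩ <;>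
      intro x <;> simp only [LinearMap.smul_apply, LinearMap.add_apply, LinearMap.sub_apply,
        LinearMap.comp_apply, map_smul, map_add, map_sub]
    · have e : W.P (dW x) = - dW (W.P x) := by rw [hW, neg_neg]
      rw [e, map_neg, map_neg, hc0, hc0, hV]
    · rw [W.PP, V.PP, add_comm]
    · rw [V.PP, V.PP]; module
    · have e : V.P (dV x) = - dV (V.P x) := by rw [hV, neg_neg]
      have e2 := congrArg V.P (hk0 (V.P x))
      rw [map_add, map_sub, V.PP] at e2
      have e3 := hk0 x
      rw [hV, e, map_neg, map_neg, ← hP]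
      have : (1/2 : ℚ) • (dV (k0 x) - -V.P (dV (k0 (V.P x)))) +
          (1/2 : ℚ) • (k0 (dV x) - -V.P (k0 (dV (V.P x)))) =
        (1/2 : ℚ) • ((dV (k0 x) + k0 (dV x)) +
          (V.P (dV (k0 (V.P x))) + V.P (k0 (dV (V.P x))))) := by module
      rw [this, e2, e3]; module
    · rw [W.PP, W.PP]; module
    · have e : W.P (dW x) = - dW (W.P x) := by rw [hW, neg_neg]
      have e2 := congrArg W.P (hl0 (W.P x))
      rw [map_add, map_sub, W.PP] at e2
      have e3 := hl0 x
      rw [hW, e, map_neg, map_neg, hP]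
      have : (1/2 : ℚ) • (dW (l0 x) - -W.P (dW (l0 (W.P x)))) +
          (1/2 : ℚ) • (l0 (dW x) - -W.P (l0 (dW (W.P x)))) =
        (1/2 : ℚ) • ((dW (l0 x) + l0 (dW x)) +
          (W.P (dW (l0 (W.P x))) + W.P (l0 (dW (W.P x))))) := by module
      rw [this, e2, e3]; module
  have cf : ∀ u, TM (V := V) (W := V) (c ∘ₗ f) u = TM (V := W) (W := V) c (TM (V := V) (W := W) f u) := by
    have : TM (V := V) (W := V) (c ∘ₗ f) = (TM (V := W) (W := V) c).comp (TM (V := V) (W := W) f) := by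
      apply TensorAlgebra.hom_ext; ext x; simp
    exact fun u => DFunLike.congr_fun this u
  have fc : ∀ u, TM (V := W) (W := W) (f ∘ₗ c) u = TM (V := V) (W := W) f (TM (V := W) (W := V) c u) := by
    have : TM (V := W) (W := W) (f ∘ₗ c) = (TM (V := V) (W := W) f).comp (TM (V := W) (W := V) c) := by
      apply TensorAlgebra.hom_ext; ext x; simp
    exact fun u => DFunLike.congr_fun this u
  have hk' := T_htpy hV (c ∘ₗ f) k (fun x => by simp [hP, hcP]) (fun x => by simp [hf, hc]) hkP hk
  have hl' := T_htpy hW (f ∘ₗ c) l (fun x => by simp [hP, hcP]) (fun x => by simp [hf, hc]) hlP hl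
  constructor
  · rintro x hx ⟨y, hy⟩
    refine ⟨tder (V.P ∘ₗ c ∘ₗ f) k x + TM (V := W) (W := V) c y, ?_⟩
    have := hk' x
    rw [hx, map_zero, add_zero, cf] at this
    rw [map_add, this, ← TM_d c hcP hc, ← hy]; simp
  · intro w hw
    refine ⟨TM (V := W) (W := V) c w, ?_, tder (W.P ∘ₗ f ∘ₗ c) l w, ?_⟩
    · rw [← TM_d c hcP hc, hw, map_zero]
    · have := hl' w
      rw [hw, map_zero, add_zero, fc] at this
      exact this.symm

theorem main (g h : DGLie)
    (f : g.carrier →ₗ[ℚ] h.carrier) (hLie : IsDGLieHom g h f)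
    (hq : IsQuasiIso g.d h.d f)
    (Ug : UEnvData g) (Uh : UEnvData h)
    (F : DGAlgebraHom Ug.alg Uh.alg)
    (hF : F.toLinearMap.comp Ug.ι = Uh.ι.comp f) :
    IsQuasiIso Ug.alg.d Uh.alg.d F.toLinearMap :=
  retract g h f hLie Ug Uh F hF
    (T_qi (V := gV g) (W := gV h) (toGSL g).dP (toGSL h).dP (toGSL g).dd (toGSL h).dd f
      (fun x => scal_hom (X := g.toDGVect) (Y := h.toDGVect) _ f hLie.1 x)
      (fun x => LinearMap.congr_fun hLie.2.1 x) hq)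

end UQ

/-- If `f : 𝔥 → 𝔨` is a quasi-isomorphism of non-negatively graded
dg Lie algebras over `ℚ`, then the induced morphism `𝒰f : 𝒰𝔥 → 𝒰𝔨` of universal
enveloping dg algebras (the unique dg algebra map with `𝒰f ∘ ι_𝔥 = ι_𝔨 ∘ f`) is a
quasi-isomorphism. -/
theorem universal_enveloping_of_quasiIso_is_quasiIso (g h : DGLie)
    (f : g.carrier →ₗ[ℚ] h.carrier) (hLie : IsDGLieHom g h f)
    (hq : IsQuasiIso g.d h.d f)
    (Ug : UEnvData g) (Uh : UEnvData h)
    (F : DGAlgebraHom Ug.alg Uh.alg)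
    (hF : F.toLinearMap.comp Ug.ι = Uh.ι.comp f) :
    IsQuasiIso Ug.alg.d Uh.alg.d F.toLinearMap := by
  exact UQ.main g h f hLie hq Ug Uh F hF

end
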